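/- arXiv:2509.07247 — 2 statements merged into one kernel-verified Lean document; each statement's English description precedes it below -/
import Mathlib

section
/- Let Σ be a flag simplicial complex, and let k ≥ 2 be an integer such that every set of 2k-2 vertices of Σ has a common neighbor (a vertex adjacent in Σ to all of them). Then the geometric realization of Σ is (k-2)-connected. -/
/-- The geometric realization of an abstract simplicial complex `K` on a finite vertex set
`V`, realized inside `V → ℝ` via barycentric coordinates. -/
def realization {V : Type*} [Fintype V] (K : Set (Finset V)) : Set (V → ℝ) :=
  {w | (∀ v, 0 ≤ w v) ∧ (∑ v, w v) = 1 ∧ ∃ σ ∈ K, ∀ v, w v ≠ 0 → v ∈ σ}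

/-- A space is `n`-connected (for `n : ℤ`): nonempty if `n ≥ -1`, path-connected if
`n ≥ 0`, and its homotopy groups `π_j` are trivial for `1 ≤ j ≤ n`. -/
def IsNConnected (n : ℤ) (X : Type*) [TopologicalSpace X] : Prop :=
  ((-1 : ℤ) ≤ n → Nonempty X) ∧ ((0 : ℤ) ≤ n → PathConnectedSpace X) ∧
    ∀ j : ℕ, 1 ≤ j → (j : ℤ) ≤ n → ∀ x : X, Subsingleton (HomotopyGroup (Fin j) X x)

namespace CE

open Set Metric

theorem glue {Y X : Type*} [TopologicalSpace Y] [TopologicalSpace X] {s t : Set Y}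
    (hs : IsClosed s) (ht : IsClosed t) {f g : Y → X} (hf : ContinuousOn f s)
    (hg : ContinuousOn g t) (hfg : ∀ x ∈ s, x ∈ t → f x = g x) :
    ∃ h : Y → X, ContinuousOn h (s ∪ t) ∧ (∀ x ∈ s, h x = f x) ∧ (∀ x ∈ t, h x = g x) := by
  classical
  have h1 : ∀ x ∈ s, s.piecewise f g x = f x := fun x hx => by simp [hx]
  have h2 : ∀ x ∈ t, s.piecewise f g x = g x := fun x hx => by
    by_cases h : x ∈ s
    · simp [h, hfg x h hx]
    · simp [h]
  exact ⟨s.piecewise f g, (hf.congr h1).union_of_isClosed (hg.congr h2) hs ht, h1, h2⟩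

/-- Every map from the boundary of the cube (sup-norm unit sphere) into `Z` extends. -/
def Ext {X : Type*} [TopologicalSpace X] (ι : Type) [Fintype ι] (Z : Set X) : Prop :=
  ∀ f : (ι → ℝ) → X, ContinuousOn f (sphere 0 1) → MapsTo f (sphere 0 1) Z →
    ∃ g : (ι → ℝ) → X, ContinuousOn g (closedBall 0 1) ∧ MapsTo g (closedBall 0 1) Z ∧
      ∀ x ∈ sphere (0 : ι → ℝ) 1, g x = f x

def Cn {X : Type*} [TopologicalSpace X] (m : ℕ) (Z : Set X) : Prop :=
  Z.Nonempty ∧ ∀ i ≤ m, Ext (Fin i) Z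

variable {X : Type*} [TopologicalSpace X]

theorem norm_comp_equiv {ι κ : Type} [Fintype ι] [Fintype κ] (e : ι ≃ κ) (x : κ → ℝ) :
    ‖x ∘ e‖ = ‖x‖ := by
  apply le_antisymm
  · rw [pi_norm_le_iff_of_nonneg (norm_nonneg _)]
    intro i; exact norm_le_pi_norm x (e i)
  · rw [pi_norm_le_iff_of_nonneg (norm_nonneg _)]
    intro i
    have := norm_le_pi_norm (x ∘ e) (e.symm i)
    simpa using this

theorem Ext.congr {ι κ : Type} [Fintype ι] [Fintype κ] (e : ι ≃ κ) {Z : Set X}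
    (h : Ext ι Z) : Ext κ Z := by
  intro f hf hm
  have c1 : Continuous fun x : ι → ℝ => x ∘ e.symm := by fun_prop
  have c2 : Continuous fun x : κ → ℝ => x ∘ e := by fun_prop
  have m1 : MapsTo (fun x : ι → ℝ => x ∘ e.symm) (sphere 0 1) (sphere 0 1) := by
    intro x hx
    simpa [norm_comp_equiv] using hx
  obtain ⟨g, hg, hgm, hgf⟩ := h (fun x => f (x ∘ e.symm)) (hf.comp c1.continuousOn m1)
    (fun x hx => hm (m1 hx))
  have m2 : MapsTo (fun x : κ → ℝ => x ∘ e) (closedBall 0 1) (closedBall 0 1) := by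
    intro x hx
    simpa [norm_comp_equiv] using hx
  refine ⟨fun x => g (x ∘ e), hg.comp c2.continuousOn m2, fun x hx => hgm (m2 hx), ?_⟩
  intro x hx
  change g (x ∘ e) = f x
  rw [hgf]
  · simp [Function.comp_assoc]
  · simpa [norm_comp_equiv] using hx

theorem Cn.ext {m : ℕ} {Z : Set X} (h : Cn m Z) (ι : Type) [Fintype ι]
    (hc : Fintype.card ι ≤ m) : Ext ι Z :=
  (h.2 _ hc).congr (Fintype.equivFin ι).symm

theorem Cn.mono {m n : ℕ} {Z : Set X} (h : Cn m Z) (hn : n ≤ m) : Cn n Z :=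
  ⟨h.1, fun i hi => h.2 i (hi.trans hn)⟩

theorem ext_of_homotopy {ι : Type} [Fintype ι] {Z : Set X} (H : ℝ × (ι → ℝ) → X)
    (hH : ContinuousOn H (Icc 0 1 ×ˢ sphere 0 1)) (hHm : MapsTo H (Icc 0 1 ×ˢ sphere 0 1) Z)
    (g : (ι → ℝ) → X) (hg : ContinuousOn g (closedBall 0 1)) (hgm : MapsTo g (closedBall 0 1) Z)
    (hgH : ∀ x ∈ sphere (0 : ι → ℝ) 1, g x = H (1, x)) :
    ∃ g' : (ι → ℝ) → X, ContinuousOn g' (closedBall 0 1) ∧ MapsTo g' (closedBall 0 1) Z ∧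
      ∀ x ∈ sphere (0 : ι → ℝ) 1, g' x = H (0, x) := by
  have cs : IsClosed {x : ι → ℝ | 1/2 ≤ ‖x‖ ∧ ‖x‖ ≤ 1} :=
    (isClosed_le continuous_const continuous_norm).inter (isClosed_le continuous_norm continuous_const)
  have ct : IsClosed {x : ι → ℝ | ‖x‖ ≤ 1/2} := isClosed_le continuous_norm continuous_const
  have m1 : MapsTo (fun x : ι → ℝ => ((2 - 2 * ‖x‖, ‖x‖⁻¹ • x) : ℝ × (ι → ℝ)))
      {x : ι → ℝ | 1/2 ≤ ‖x‖ ∧ ‖x‖ ≤ 1} (Icc 0 1 ×ˢ sphere 0 1) := by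
    rintro x ⟨h1, h2⟩
    have : ‖x‖ ≠ 0 := by linarith
    refine ⟨⟨by linarith, by linarith⟩, ?_⟩
    simp [norm_smul, this]
  have m2 : MapsTo (fun x : ι → ℝ => (2 : ℝ) • x) {x : ι → ℝ | ‖x‖ ≤ 1/2} (closedBall 0 1) := by
    intro x hx
    have : ‖x‖ ≤ 1/2 := hx
    simp [norm_smul]; linarith
  have c1 : ContinuousOn (fun x : ι → ℝ => ((2 - 2 * ‖x‖, ‖x‖⁻¹ • x) : ℝ × (ι → ℝ)))
      {x : ι → ℝ | 1/2 ≤ ‖x‖ ∧ ‖x‖ ≤ 1} := by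
    have c0 : ContinuousOn (fun x : ι → ℝ => ‖x‖⁻¹) {x : ι → ℝ | 1/2 ≤ ‖x‖ ∧ ‖x‖ ≤ 1} := by
      refine ContinuousOn.inv₀ continuous_norm.continuousOn ?_
      rintro x ⟨h1, h2⟩
      linarith
    exact ContinuousOn.prodMk (by fun_prop) (c0.smul continuousOn_id)
  obtain ⟨h, hc, hs, ht⟩ := glue cs ct (hH.comp c1 m1)
    (hg.comp (by fun_prop : Continuous fun x : ι → ℝ => (2:ℝ) • x).continuousOn m2) (by
      rintro x ⟨h1, h2⟩ h3
      have h3 : ‖x‖ ≤ 1/2 := h3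
      have h4 : ‖x‖ = 1/2 := le_antisymm h3 h1
      simp only [Function.comp]
      rw [hgH]
      · rw [h4]; norm_num
      · simp [norm_smul, h4])
  have hu : closedBall (0 : ι → ℝ) 1 ⊆ {x : ι → ℝ | 1/2 ≤ ‖x‖ ∧ ‖x‖ ≤ 1} ∪ {x : ι → ℝ | ‖x‖ ≤ 1/2} := by
    intro x hx
    have hx : ‖x‖ ≤ 1 := by simpa using hx
    rcases le_total (1/2) ‖x‖ with h | h
    · exact Or.inl ⟨h, hx⟩
    · exact Or.inr h
  refine ⟨h, hc.mono hu, ?_, ?_⟩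
  · intro x hx
    rcases hu hx with h' | h'
    · rw [hs x h']; exact hHm (m1 h')
    · rw [ht x h']; exact hgm (m2 h')
  · intro x hx
    have hx : ‖x‖ = 1 := by simpa using hx
    rw [hs x ⟨by rw [hx]; norm_num, by rw [hx]⟩]
    simp [hx]

theorem Cn.of_deform {m : ℕ} {Y Z : Set X} (hY : Cn m Y) (hYZ : Y ⊆ Z) (H : ℝ × X → X)
    (hH : ContinuousOn H (Icc 0 1 ×ˢ Z)) (hHm : MapsTo H (Icc 0 1 ×ˢ Z) Z)
    (h0 : ∀ z ∈ Z, H (0, z) = z) (h1 : ∀ z ∈ Z, H (1, z) ∈ Y) : Cn m Z := by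
  refine ⟨hY.1.mono hYZ, fun i hi f hf hm => ?_⟩
  have mt : MapsTo (fun q : ℝ × (Fin i → ℝ) => (q.1, f q.2)) (Icc 0 1 ×ˢ sphere 0 1)
      (Icc 0 1 ×ˢ Z) := fun q hq => ⟨hq.1, hm hq.2⟩
  have mt1 : MapsTo (fun q : (Fin i → ℝ) => ((1 : ℝ), f q)) (sphere 0 1)
      (Icc 0 1 ×ˢ Z) := fun q hq => ⟨by simp, hm hq⟩
  obtain ⟨g, hg, hgm, hgf⟩ := hY.2 i hi (fun x => H (1, f x))
    (hH.comp (continuousOn_const.prodMk hf) mt1) (fun x hx => h1 _ (hm hx))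
  obtain ⟨g', a, b, c⟩ := ext_of_homotopy (fun q : ℝ × (Fin i → ℝ) => H (q.1, f q.2))
    (hH.comp (continuousOn_fst.prodMk (hf.comp continuousOn_snd fun q hq => hq.2)) mt)
    (fun q hq => hHm (mt hq)) g hg (fun x hx => hYZ (hgm hx)) hgf
  exact ⟨g', a, b, fun x hx => by rw [c x hx, h0 _ (hm hx)]⟩

theorem Cn.singleton (m : ℕ) (x : X) : Cn m {x} := by
  refine ⟨⟨x, rfl⟩, fun i hi f hf hm => ⟨fun _ => x, continuousOn_const, fun _ _ => rfl, ?_⟩⟩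
  intro y hy
  exact (hm hy).symm

/-! cells -/

noncomputable def rad (a : ℤ) : ℝ := open Classical in if Odd a then 1 else 0

def cell {J : Type} (p : J → ℤ) : Set (J → ℝ) := {x | ∀ i, |x i - p i| ≤ rad (p i)}

noncomputable def dim {J : Type} [Fintype J] (p : J → ℤ) : ℕ :=
  open Classical in (Finset.univ.filter fun i => Odd (p i)).card

theorem cell_closed {J : Type} (p : J → ℤ) : IsClosed (cell p) := by
  have : cell p = ⋂ i, {x : J → ℝ | |x i - p i| ≤ rad (p i)} := by ext; simp [cell]
  rw [this]
  exact isClosed_iInter fun i => isClosed_le (by fun_prop) continuous_const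

def inner {J : Type} (p : J → ℤ) (x : J → ℝ) : Prop :=
  x ∈ cell p ∧ ∀ i, Odd (p i) → |x i - p i| < 1

theorem coord_face {a b : ℤ} {x : ℝ} (h : |x - a| ≤ rad a) (h' : Odd a → |x - a| < 1)
    (hb : |x - b| ≤ rad b) : a = b ∨ (¬ Odd a ∧ Odd b ∧ (a = b - 1 ∨ a = b + 1)) := by
  unfold rad at *
  by_cases ha : Odd a <;> by_cases hb' : Odd b <;> simp [ha, hb'] at h hb h'
  · left
    rw [abs_lt] at h'
    rw [abs_le] at hb
    have h1 : ((a - b : ℤ) : ℝ) < (2 : ℤ) := by push_cast; linarith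
    have h2 : ((b - a : ℤ) : ℝ) < (2 : ℤ) := by push_cast; linarith
    rw [Int.cast_lt] at h1 h2
    obtain ⟨u, rfl⟩ := ha; obtain ⟨v, rfl⟩ := hb'; omega
  · exfalso
    have hx : x = b := by linarith
    subst hx
    rw [abs_lt] at h'
    have h1 : ((a - b : ℤ) : ℝ) < (1 : ℤ) := by push_cast; linarith
    have h2 : ((b - a : ℤ) : ℝ) < (1 : ℤ) := by push_cast; linarith
    rw [Int.cast_lt] at h1 h2
    have : a = b := by omega
    subst this; exact hb' ha
  · right
    refine ⟨ha, hb', ?_⟩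
    have hx : x = a := by linarith
    subst hx
    rw [abs_le] at hb
    have h1 : ((a - b : ℤ) : ℝ) ≤ (1 : ℤ) := by push_cast; linarith
    have h2 : ((b - a : ℤ) : ℝ) ≤ (1 : ℤ) := by push_cast; linarith
    rw [Int.cast_le] at h1 h2
    have : a ≠ b := by rintro rfl; exact ha hb'
    omega
  · left
    have hx : x = a := by linarith
    have hx' : x = b := by linarith
    subst hx; exact_mod_cast hx'

theorem inner_face {J : Type} {p q : J → ℤ} {x : J → ℝ} (h : inner p x) (hq : x ∈ cell q) :
    ∀ i, p i = q i ∨ (¬ Odd (p i) ∧ Odd (q i) ∧ (p i = q i - 1 ∨ p i = q i + 1)) :=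
  fun i => coord_face (h.1 i) (h.2 i) (hq i)

theorem inner_sub {J : Type} {p q : J → ℤ} {x : J → ℝ} (h : inner p x) (hq : x ∈ cell q) :
    cell p ⊆ cell q := by
  intro y hy i
  have := hy i
  rcases inner_face h hq i with h1 | ⟨h1, h2, h3⟩
  · rw [← h1]; exact hy i
  · simp [rad, h1] at this
    have hx : y i = p i := by linarith
    rw [hx]
    simp only [rad, h2, if_true]
    rcases h3 with h3 | h3 <;> simp [h3]

theorem inner_dim {J : Type} [Fintype J] {p q : J → ℤ} {x : J → ℝ} (h : inner p x) (hq : x ∈ cell q)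
    (hd : dim q ≤ dim p) : p = q := by
  classical
  have hsub : (Finset.univ.filter fun i => Odd (p i)) ⊆ (Finset.univ.filter fun i => Odd (q i)) := by
    intro i
    simp only [Finset.mem_filter, Finset.mem_univ, true_and]
    intro hi
    rcases inner_face h hq i with h1 | ⟨h1, h2, h3⟩
    · rwa [← h1]
    · exact absurd hi h1
  have heq := Finset.eq_of_subset_of_card_le hsub (by unfold dim at hd; convert hd)
  funext i
  rcases inner_face h hq i with h1 | ⟨h1, h2, h3⟩
  · exact h1
  · have : i ∈ (Finset.univ.filter fun i => Odd (q i)) := by simp [h2]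
    rw [← heq] at this
    simp at this
    exact absurd (by simpa using this) h1


theorem exists_inner {J : Type} (x : J → ℝ) : ∃ q : J → ℤ, inner q x := by
  have key : ∀ y : ℝ, ∃ a : ℤ, |y - a| ≤ rad a ∧ (Odd a → |y - a| < 1) := by
    intro y
    by_cases h : y = 2 * ⌊y / 2⌋
    · refine ⟨2 * ⌊y / 2⌋, ?_, ?_⟩
      · push_cast; rw [← h]; simp [rad]; split_ifs <;> norm_num
      · intro h'; exact absurd h' (by simp)
    · have h1 := Int.floor_le (y / 2)
      have h2 := Int.lt_floor_add_one (y / 2)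
      have h3 : |y - ((2 * ⌊y / 2⌋ + 1 : ℤ) : ℝ)| < 1 := by
        push_cast
        have : 2 * (⌊y / 2⌋ : ℝ) < y := lt_of_le_of_ne (by linarith) (Ne.symm h)
        rw [abs_lt]; constructor <;> linarith
      refine ⟨2 * ⌊y / 2⌋ + 1, ?_, fun _ => h3⟩
      simp only [rad, odd_two_mul_add_one, if_true]
      exact h3.le
  choose q hq using fun i => key (x i)
  exact ⟨q, fun i => (hq i).1, fun i => (hq i).2⟩

theorem inner_center {J : Type} (p : J → ℤ) : inner p (fun i => (p i : ℝ)) := by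
  refine ⟨fun i => ?_, fun i _ => by simp⟩
  simp only [sub_self, abs_zero, rad]; split_ifs <;> norm_num

theorem cell_step {J : Type} [Fintype J] (p : J → ℤ) (Z : Set X) (hE : Ext (Fin (dim p)) Z)
    (F : (J → ℝ) → X) (hF : ContinuousOn F {x | x ∈ cell p ∧ ¬ inner p x})
    (hm : MapsTo F {x | x ∈ cell p ∧ ¬ inner p x} Z) :
    ∃ G : (J → ℝ) → X, ContinuousOn G (cell p) ∧ MapsTo G (cell p) Z ∧
      ∀ x, x ∈ cell p → ¬ inner p x → G x = F x := by
  classical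
  have hE' : Ext {i // Odd (p i)} Z := by
    refine hE.congr (Fintype.equivOfCardEq ?_)
    rw [Fintype.card_fin, Fintype.card_subtype]
    unfold dim
    congr
  set u : ({i // Odd (p i)} → ℝ) → (J → ℝ) :=
    fun y i => if h : Odd (p i) then p i + y ⟨i, h⟩ else p i with hu
  set v : (J → ℝ) → ({i // Odd (p i)} → ℝ) := fun x i => x i - p i with hv
  have cu : Continuous u := by
    refine continuous_pi fun i => ?_
    by_cases h : Odd (p i)
    · simp only [hu, h, dif_pos]; fun_prop
    · simp only [hu, h]; exact continuous_const
  have cv : Continuous v := by fun_prop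
  have mu : MapsTo u (sphere 0 1) {x | x ∈ cell p ∧ ¬ inner p x} := by
    intro y hy
    have hy : ‖y‖ = 1 := by simpa using hy
    refine ⟨fun i => ?_, fun hi => ?_⟩
    · by_cases h : Odd (p i)
      · simp only [hu, h, dif_pos, rad, if_true]
        have := norm_le_pi_norm y ⟨i, h⟩
        rw [hy] at this
        simpa using this
      · simp [hu, h, rad]
    · have : ‖y‖ < 1 := by
        rw [pi_norm_lt_iff one_pos]
        rintro ⟨i, h⟩
        have := hi.2 i h
        simpa [hu, h] using this
      linarith
  have mv : MapsTo v (cell p) (closedBall 0 1) := by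
    intro x hx
    rw [mem_closedBall_zero_iff, pi_norm_le_iff_of_nonneg zero_le_one]
    rintro ⟨i, h⟩
    have := hx i
    simpa [rad, h] using this
  have huv : ∀ x ∈ cell p, u (v x) = x := by
    intro x hx
    funext i
    by_cases h : Odd (p i)
    · simp [hu, hv, h]
    · have := hx i
      simp only [rad, h, if_false, abs_nonpos_iff] at this
      simp only [hu, h, dif_neg, not_false_eq_true]
      linarith
  obtain ⟨g, hg, hgm, hgf⟩ := hE' (fun y => F (u y)) (hF.comp cu.continuousOn mu)
    (fun y hy => hm (mu hy))
  refine ⟨fun x => g (v x), hg.comp cv.continuousOn mv, fun x hx => hgm (mv hx), ?_⟩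
  intro x hx hn
  change g (v x) = F x
  rw [hgf, huv x hx]
  rw [mem_sphere_zero_iff_norm]
  refine le_antisymm (by simpa using mv hx) ?_
  by_contra hlt
  push Not at hlt
  apply hn
  refine ⟨hx, fun i hi => ?_⟩
  have := (norm_le_pi_norm (v x) ⟨i, hi⟩).trans_lt hlt
  simpa [hv] using this

theorem cell_extend {J : Type} [Fintype J] (D : Set (J → ℝ)) (hD : IsClosed D)
    (F : (J → ℝ) → X) (hF : ContinuousOn F D) (Φ : (J → ℤ) → Set X) (P : Finset (J → ℤ)) :
    (∀ p ∈ P, Ext (Fin (dim p)) (Φ p)) →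
    (∀ p ∈ P, ∀ x, inner p x → x ∉ D) →
    (∀ p ∈ P, ∀ q, cell q ⊆ cell p → (q ∈ P ∧ Φ q ⊆ Φ p) ∨ cell q ⊆ D) →
    (∀ p ∈ P, ∀ x ∈ D, x ∈ cell p → F x ∈ Φ p) →
    ∃ F' : (J → ℝ) → X, ContinuousOn F' (D ∪ ⋃ p ∈ P, cell p) ∧ (∀ x ∈ D, F' x = F x) ∧
      ∀ p ∈ P, MapsTo F' (cell p) (Φ p) := by
  classical
  refine Finset.induction_on_max_value dim P ?_ ?_
  · intro _ _ _ _; exact ⟨F, by simpa using hF, fun _ _ => rfl, by simp⟩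
  · intro p P hpP hmax ih hE hdis hface hΦ
    have hface' : ∀ p' ∈ P, ∀ q, cell q ⊆ cell p' → (q ∈ P ∧ Φ q ⊆ Φ p') ∨ cell q ⊆ D := by
      intro p' hp' q hq
      rcases hface p' (Finset.mem_insert_of_mem hp') q hq with ⟨h1, h2⟩ | h
      · rcases Finset.mem_insert.1 h1 with rfl | h1
        · exfalso
          have := inner_dim (inner_center q) (hq (inner_center q).1) (hmax p' hp')
          exact hpP (this ▸ hp')
        · exact Or.inl ⟨h1, h2⟩
      · exact Or.inr h
    obtain ⟨F1, hc, h1, h2⟩ := ih (fun q hq => hE q (Finset.mem_insert_of_mem hq))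
      (fun q hq => hdis q (Finset.mem_insert_of_mem hq)) hface'
      (fun q hq => hΦ q (Finset.mem_insert_of_mem hq))
    have hp : p ∈ insert p P := Finset.mem_insert_self _ _
    have hbd : ∀ x ∈ cell p, ¬ inner p x → x ∈ (D ∪ ⋃ p ∈ P, cell p) ∧ F1 x ∈ Φ p := by
      intro x hx hn
      obtain ⟨q, hq⟩ := exists_inner x
      have hqp := inner_sub hq hx
      have hD' : x ∈ D → x ∈ (D ∪ ⋃ p ∈ P, cell p) ∧ F1 x ∈ Φ p := fun h =>
        ⟨Or.inl h, by rw [h1 x h]; exact hΦ p hp x h hx⟩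
      rcases hface p hp q hqp with ⟨h3, h4⟩ | h
      · rcases Finset.mem_insert.1 h3 with rfl | h3
        · exact absurd hq hn
        · exact ⟨Or.inr (mem_biUnion h3 hq.1), h4 (h2 q h3 hq.1)⟩
      · exact hD' (h hq.1)
    obtain ⟨G, hG, hGm, hGF⟩ := cell_step p (Φ p) (hE p hp) F1
      (hc.mono fun x hx => (hbd x hx.1 hx.2).1) (fun x hx => (hbd x hx.1 hx.2).2)
    have hcl : IsClosed (D ∪ ⋃ p ∈ P, cell p) :=
      hD.union (P.finite_toSet.isClosed_biUnion fun q _ => cell_closed q)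
    have hin : ∀ x ∈ (D ∪ ⋃ p ∈ P, cell p), ¬ inner p x := by
      rintro x (hx | hx) hi
      · exact hdis p hp x hi hx
      · obtain ⟨q, hq, hx⟩ := mem_iUnion₂.1 hx
        have := inner_dim hi hx (hmax q hq)
        exact hpP (this ▸ hq)
    obtain ⟨F2, hF2, h3, h4⟩ := glue hcl (cell_closed p) hc hG
      (fun x hx hxp => (hGF x hxp (hin x hx)).symm)
    refine ⟨F2, ?_, ?_, ?_⟩
    · refine hF2.mono ?_
      rw [Finset.set_biUnion_insert]
      intro x hx
      simp only [mem_union] at hx ⊢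
      tauto
    · intro x hx; rw [h3 x (Or.inl hx), h1 x hx]
    · intro q hq x hx
      rcases Finset.mem_insert.1 hq with rfl | hq
      · rw [h4 x hx]; exact hGm hx
      · rw [h3 x (Or.inr (mem_biUnion hq hx))]; exact h2 q hq hx

theorem sphere_cell {d N : ℕ} {x : Fin d → ℝ} (hN : 0 < N) (hx : ‖x‖ = 2 * N) {q : Fin d → ℤ}
    (hq : inner q x) : cell q ⊆ sphere 0 (2 * N : ℝ) := by
  have hN' : (0 : ℝ) < 2 * N := by positivity
  have hle : ∀ i, |x i| ≤ 2 * N := fun i => by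
    have := norm_le_pi_norm x i
    rw [hx] at this; simpa using this
  obtain ⟨i, hi⟩ : ∃ i, |x i| = 2 * N := by
    by_contra hcon
    push Not at hcon
    have : ‖x‖ < 2 * N := by
      rw [pi_norm_lt_iff hN']
      intro i
      exact lt_of_le_of_ne (hle i) (hcon i)
    linarith
  have hqi : (q i : ℝ) = x i := by
    by_cases ho : Odd (q i)
    · exfalso
      have h1 := hq.2 i ho
      obtain ⟨c, hc⟩ : ∃ c : ℤ, x i = ((2 * c : ℤ) : ℝ) := by
        rcases abs_eq hN'.le |>.1 hi with h | h
        · exact ⟨N, by rw [h]; push_cast; ring⟩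
        · exact ⟨-N, by rw [h]; push_cast; ring⟩
      rw [hc, ← Int.cast_sub, ← Int.cast_abs] at h1
      have h2 : |2 * c - q i| < 1 := by exact_mod_cast h1
      rw [Int.abs_lt_one_iff] at h2
      obtain ⟨e, he⟩ := ho
      omega
    · have := hq.1 i
      simp only [rad, ho, if_false, abs_nonpos_iff] at this
      linarith
  intro y hy
  have hyle : ∀ j, |y j| ≤ 2 * N := by
    intro j
    have hyj := hy j
    by_cases ho : Odd (q j)
    · simp only [rad, ho, if_true] at hyj
      have h1 := abs_lt.1 (hq.2 j ho)
      have h2 := abs_le.1 (hle j)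
      have h3 : ((q j : ℤ) : ℝ) < ((2 * N + 1 : ℤ) : ℝ) := by push_cast; linarith
      have h4 : ((-(2 * N + 1) : ℤ) : ℝ) < ((q j : ℤ) : ℝ) := by push_cast; linarith
      rw [Int.cast_lt] at h3 h4
      obtain ⟨e, he⟩ := ho
      have h5 : q j ≤ 2 * N - 1 := by omega
      have h6 : -(2 * N - 1) ≤ q j := by omega
      have h5' : (q j : ℝ) ≤ 2 * N - 1 := by exact_mod_cast h5
      have h6' : -(2 * N - 1 : ℝ) ≤ q j := by exact_mod_cast h6
      have := abs_le.1 hyj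
      rw [abs_le]; constructor <;> linarith
    · have := hq.1 j
      simp only [rad, ho, if_false, abs_nonpos_iff] at this hyj
      have : y j = x j := by linarith
      rw [this]; exact hle j
  have hyi : |y i| = 2 * N := by
    have hyj := hy i
    by_cases ho : Odd (q i)
    · exfalso
      have h1 : |x i| = ((|q i| : ℤ) : ℝ) := by rw [← hqi, Int.cast_abs]
      rw [hi] at h1
      have h2 : (2 * N : ℤ) = |q i| := by exact_mod_cast h1
      have h3 : Odd |q i| := by rwa [odd_abs]
      rw [← h2] at h3
      obtain ⟨e, he⟩ := h3
      omega
    · simp only [rad, ho, if_false, abs_nonpos_iff] at hyj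
      have : y i = x i := by linarith
      rw [this, hi]
  rw [mem_sphere_zero_iff_norm]
  apply le_antisymm
  · rw [pi_norm_le_iff_of_nonneg hN'.le]; exact hyle
  · rw [← hyi]; exact norm_le_pi_norm y i

theorem sphere_even {d N : ℕ} (hN : 0 < N) {q : Fin d → ℤ}
    (hq : cell q ⊆ sphere 0 (2 * N : ℝ)) : ∃ i, ¬ Odd (q i) := by
  by_contra hcon
  push Not at hcon
  have h0 := hq (inner_center q).1
  rw [mem_sphere_zero_iff_norm] at h0
  have hN' : (0 : ℝ) < 2 * N := by positivity
  have : ‖fun i => (q i : ℝ)‖ < 2 * N := by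
    rw [pi_norm_lt_iff hN']
    intro i
    have h1 := norm_le_pi_norm (fun i => (q i : ℝ)) i
    refine lt_of_le_of_ne (h1.trans h0.le) ?_
    intro h2
    rw [Real.norm_eq_abs, ← Int.cast_abs] at h2
    have h2 : |q i| = 2 * N := by exact_mod_cast h2
    have h3 : Odd |q i| := by rw [odd_abs]; exact hcon i
    rw [h2] at h3
    obtain ⟨e, he⟩ := h3
    omega
  linarith

theorem sphere_fin (d N : ℕ) :
    {q : Fin d → ℤ | cell q ⊆ sphere 0 (2 * N : ℝ)}.Finite := by
  refine (Fintype.piFinset fun _ : Fin d => Finset.Icc (-(2 * N : ℤ)) (2 * N)).finite_toSet.subset ?_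
  intro q hq
  have h0 := hq (inner_center q).1
  rw [mem_sphere_zero_iff_norm] at h0
  simp only [Finset.mem_coe, Fintype.mem_piFinset, Finset.mem_Icc]
  intro i
  have h1 := norm_le_pi_norm (fun i => (q i : ℝ)) i
  rw [h0, Real.norm_eq_abs, ← Int.cast_abs] at h1
  have h1 : |q i| ≤ 2 * N := by exact_mod_cast h1
  exact abs_le.1 h1

def cone {α : Type} {d : ℕ} (t : α) (x : Fin d → α) : Option (Fin d) → α := fun o => o.elim t x

theorem cone_cell {d : ℕ} {p : Option (Fin d) → ℤ} {z : Option (Fin d) → ℝ} :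
    z ∈ cell p ↔ |z none - p none| ≤ rad (p none) ∧ z ∘ some ∈ cell (p ∘ some) := by
  simp [cell, Option.forall]

theorem push {d N : ℕ} (hN : 0 < N) (hd : 0 < d) (g : (Fin d → ℝ) → X)
    (hg : ContinuousOn g (sphere 0 (2 * N : ℝ))) (T A B : Set X)
    (hgT : MapsTo g (sphere 0 (2 * N : ℝ)) (T ∩ (A ∪ B)))
    (hK : ∀ q : Fin d → ℤ, cell q ⊆ sphere 0 (2 * N : ℝ) → MapsTo g (cell q) A ∨ MapsTo g (cell q) B)
    (hB : Cn d (T ∩ B)) (hAB : Cn (d - 1) (T ∩ A ∩ B)) :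
    ∃ F : (Option (Fin d) → ℝ) → X,
      ContinuousOn F {z | z ∘ some ∈ sphere (0 : Fin d → ℝ) (2 * N : ℝ) ∧ z none ∈ Icc (0 : ℝ) 2} ∧
      (∀ z : Option (Fin d) → ℝ, z ∘ some ∈ sphere (0 : Fin d → ℝ) (2 * N : ℝ) →
        z none ∈ Icc (0 : ℝ) 2 → F z ∈ T ∩ (A ∪ B)) ∧
      (∀ z : Option (Fin d) → ℝ, z ∘ some ∈ sphere (0 : Fin d → ℝ) (2 * N : ℝ) →
        z none = 0 → F z = g (z ∘ some)) ∧
      (∀ z : Option (Fin d) → ℝ, z ∘ some ∈ sphere (0 : Fin d → ℝ) (2 * N : ℝ) →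
        z none = 2 → F z ∈ T ∩ A) := by
  classical
  have hfin := sphere_fin d N
  set S : Set (Fin d → ℝ) := sphere 0 (2 * N : ℝ) with hS
  set D2 : Set (Fin d → ℝ) := ⋃ q ∈ {q : Fin d → ℤ | cell q ⊆ S ∧ MapsTo g (cell q) A}, cell q with hD2
  have hD2c : IsClosed D2 :=
    (hfin.subset fun q hq => hq.1).isClosed_biUnion fun q _ => cell_closed q
  have hD2S : D2 ⊆ S := iUnion₂_subset fun q hq => hq.1
  have hD2A : MapsTo g D2 A := by
    intro x hx
    obtain ⟨q, hq, hx⟩ := mem_iUnion₂.1 hx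
    exact hq.2 hx
  have csome : Continuous fun z : Option (Fin d) → ℝ => z ∘ some := by fun_prop
  have cnone : Continuous fun z : Option (Fin d) → ℝ => z none := by fun_prop
  set D : Set (Option (Fin d) → ℝ) :=
    {z | z ∘ some ∈ S ∧ z none = 0} ∪ {z | z ∘ some ∈ D2 ∧ z none ∈ Icc (0 : ℝ) 2} with hD
  have hDc : IsClosed D := by
    refine IsClosed.union ?_ ?_
    · exact (isClosed_sphere.preimage csome).inter (isClosed_singleton.preimage cnone)
    · exact (hD2c.preimage csome).inter (isClosed_Icc.preimage cnone)
  have hDS : ∀ z ∈ D, z ∘ some ∈ S := by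
    rintro z (hz | hz)
    · exact hz.1
    · exact hD2S hz.1
  have hPfin : {p : Option (Fin d) → ℤ | cell (p ∘ some) ⊆ S ∧ ¬ MapsTo g (cell (p ∘ some)) A ∧
      (p none = 1 ∨ p none = 2)}.Finite := by
    refine Set.Finite.subset (((Set.finite_Icc (1 : ℤ) 2).prod hfin).image
      (fun r : ℤ × (Fin d → ℤ) => (cone r.1 r.2 : Option (Fin d) → ℤ))) ?_
    rintro p ⟨h1, h2, h3⟩
    refine ⟨(p none, p ∘ some), ⟨?_, h1⟩, ?_⟩
    · simp only [mem_Icc]; omega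
    · funext o; cases o <;> rfl
  set P := hPfin.toFinset with hP
  have memP : ∀ p, p ∈ P ↔ cell (p ∘ some) ⊆ S ∧ ¬ MapsTo g (cell (p ∘ some)) A ∧
      (p none = 1 ∨ p none = 2) := fun p => by simp [hP]
  set Φ : (Option (Fin d) → ℤ) → Set X := fun p => if p none = 1 then T ∩ B else T ∩ A ∩ B with hΦ
  have r1 : rad 1 = 1 := by simp [rad]
  have r2 : rad 2 = 0 := by
    have : ¬ Odd (2 : ℤ) := by decide
    simp [rad, this]
  have r0 : rad 0 = 0 := by simp [rad]
  have hΦB : ∀ p, Φ p ⊆ T ∩ B := by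
    intro p
    simp only [hΦ]
    split_ifs
    · exact subset_rfl
    · intro x hx; exact ⟨hx.1.1, hx.2⟩
  obtain ⟨F, hFc, hFD, hFP⟩ := cell_extend D hDc (fun z => g (z ∘ some))
    (hg.comp csome.continuousOn hDS) Φ P
    (by
      intro p hp
      obtain ⟨h1, h2, h3⟩ := (memP p).1 hp
      obtain ⟨i, hi⟩ := sphere_even hN h1
      simp only [hΦ]
      split_ifs with h
      · refine hB.2 _ ?_
        have : (Finset.univ.filter fun i => Odd (p i)) ⊆ Finset.univ.erase (some i) := by
          intro j hj
          simp only [Finset.mem_filter, Finset.mem_univ, true_and] at hj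
          simp only [Finset.mem_erase, Finset.mem_univ, and_true]
          rintro rfl
          exact hi hj
        have := Finset.card_le_card this
        rw [Finset.card_erase_of_mem (Finset.mem_univ _)] at this
        simp at this
        unfold dim
        convert this
      · have h3 : p none = 2 := by tauto
        refine hAB.2 _ ?_
        have : (Finset.univ.filter fun i => Odd (p i)) ⊆ (Finset.univ.erase (some i)).erase none := by
          intro j hj
          simp only [Finset.mem_filter, Finset.mem_univ, true_and] at hj
          simp only [Finset.mem_erase, Finset.mem_univ, and_true]
          constructor
          · rintro rfl
            rw [h3] at hj
            exact absurd hj (by decide)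
          · rintro rfl
            exact hi hj
        have := Finset.card_le_card this
        rw [Finset.card_erase_of_mem (by simp), Finset.card_erase_of_mem (Finset.mem_univ _)] at this
        simp at this
        unfold dim
        convert this)
    (by
      intro p hp z hz hzD
      obtain ⟨h1, h2, h3⟩ := (memP p).1 hp
      rcases hzD with hzD | hzD
      · have hz0 : z none = 0 := hzD.2
        rcases h3 with h3 | h3
        · have := hz.2 none (by rw [h3]; decide)
          rw [h3, hz0] at this
          norm_num at this
        · have := hz.1 none
          rw [h3, hz0, r2] at this
          norm_num at this
      · obtain ⟨q, hq, hx⟩ := mem_iUnion₂.1 hzD.1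
        apply h2
        have : inner (p ∘ some) (z ∘ some) := ⟨(cone_cell.1 hz.1).2, fun i hi => hz.2 (some i) hi⟩
        exact hq.2.mono_left (inner_sub this hx))
    (by
      intro p hp q hqp
      obtain ⟨h1, h2, h3⟩ := (memP p).1 hp
      have hn := inner_face (inner_center q) (hqp (inner_center q).1) none
      have hsub : cell (q ∘ some) ⊆ cell (p ∘ some) := by
        intro x hx
        have : (cone (q none : ℝ) x : Option (Fin d) → ℝ) ∈ cell q := by
          rw [cone_cell]
          refine ⟨?_, hx⟩
          simp only [cone, Option.elim, sub_self, abs_zero, rad]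
          split_ifs <;> norm_num
        exact (cone_cell.1 (hqp this)).2
      have hz02 : ∀ z ∈ cell q, z none ∈ Icc (0 : ℝ) 2 := by
        intro z hz
        have := (cone_cell.1 (hqp hz)).1
        rcases h3 with h3 | h3
        · rw [h3, r1, abs_le] at this
          norm_num at this
          constructor <;> linarith
        · rw [h3, r2, abs_nonpos_iff] at this
          norm_num at this
          constructor <;> linarith
      by_cases hA : MapsTo g (cell (q ∘ some)) A
      · right
        intro z hz
        right
        exact ⟨mem_biUnion (show (q ∘ some) ∈ {q : Fin d → ℤ | cell q ⊆ S ∧ MapsTo g (cell q) A} from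
          ⟨hsub.trans h1, hA⟩) (cone_cell.1 hz).2, hz02 z hz⟩
      · have hq3 : q none = 0 ∨ (q none = 1 ∧ p none = 1) ∨ (q none = 2) := by
          rcases hn with hn | ⟨_, hn2, hn⟩
          · omega
          · rcases h3 with h3 | h3
            · omega
            · rw [h3] at hn2; exact absurd hn2 (by decide)
        rcases hq3 with hq3 | hq3
        · right
          intro z hz
          left
          refine ⟨h1 (hsub (cone_cell.1 hz).2), ?_⟩
          have := (cone_cell.1 hz).1
          rw [hq3, r0] at this
          simpa using this
        · left
          refine ⟨(memP q).2 ⟨hsub.trans h1, hA, by tauto⟩, ?_⟩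
          by_cases hp1 : p none = 1
          · have : Φ p = T ∩ B := by simp [hΦ, hp1]
            rw [this]; exact hΦB q
          · have hp2 : p none = 2 := by tauto
            have hq2 : q none = 2 := by tauto
            simp [hΦ, hp2, hq2])
    (by
      intro p hp z hzD hz
      obtain ⟨h1, h2, h3⟩ := (memP p).1 hp
      have hzp := (cone_cell.1 hz).2
      have gB : g (z ∘ some) ∈ B := ((hK _ h1).resolve_left h2) hzp
      have gT : g (z ∘ some) ∈ T := (hgT (h1 hzp)).1
      change g (z ∘ some) ∈ Φ p
      rcases h3 with h3 | h3
      · simp only [hΦ, h3, if_true]; exact ⟨gT, gB⟩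
      · have : Φ p = T ∩ A ∩ B := by simp [hΦ, h3]
        rw [this]
        refine ⟨⟨gT, ?_⟩, gB⟩
        rcases hzD with hzD | hzD
        · have hz0 : z none = 0 := hzD.2
          have := (cone_cell.1 hz).1
          rw [h3, hz0, r2] at this
          norm_num at this
        · exact hD2A hzD.1)
  have hcov : ∀ z : Option (Fin d) → ℝ, z ∘ some ∈ S → z none ∈ Icc (0 : ℝ) 2 →
      z ∈ D ∨ ∃ p ∈ P, z ∈ cell p := by
    intro z hz hz2
    obtain ⟨q, hq⟩ := exists_inner (z ∘ some)
    have hqS := sphere_cell hN (by simpa [hS] using hz) hq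
    by_cases hA : MapsTo g (cell q) A
    · left; right
      exact ⟨mem_biUnion (show q ∈ {q : Fin d → ℤ | cell q ⊆ S ∧ MapsTo g (cell q) A} from
          ⟨hqS, hA⟩) hq.1, hz2⟩
    · right
      refine ⟨cone 1 q, (memP _).2 ⟨hqS, hA, Or.inl rfl⟩, ?_⟩
      rw [cone_cell]
      refine ⟨?_, hq.1⟩
      simp only [cone, Option.elim, r1]
      rw [abs_le]
      push_cast
      constructor <;> linarith [hz2.1, hz2.2]
  refine ⟨F, hFc.mono ?_, ?_, ?_, ?_⟩
  · rintro z ⟨hz, hz2⟩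
    rcases hcov z hz hz2 with h | ⟨p, hp, h⟩
    · exact Or.inl h
    · exact Or.inr (mem_biUnion hp h)
  · intro z hz hz2
    rcases hcov z hz hz2 with h | ⟨p, hp, h⟩
    · rw [hFD z h]; exact hgT hz
    · have := hΦB p (hFP p hp h)
      exact ⟨this.1, Or.inr this.2⟩
  · intro z hz hz0
    exact hFD z (Or.inl ⟨hz, hz0⟩)
  · intro z hz hz2
    obtain ⟨q, hq⟩ := exists_inner (z ∘ some)
    have hqS := sphere_cell hN (by simpa [hS] using hz) hq
    by_cases hA : MapsTo g (cell q) A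
    · have : z ∈ D := by
        right
        refine ⟨mem_biUnion (show q ∈ {q : Fin d → ℤ | cell q ⊆ S ∧ MapsTo g (cell q) A} from
          ⟨hqS, hA⟩) hq.1, ?_⟩
        rw [hz2]; norm_num
      rw [hFD z this]
      exact ⟨(hgT hz).1, hA hq.1⟩
    · have h := hFP (cone 2 q) ((memP _).2 ⟨hqS, hA, Or.inr rfl⟩) (x := z) (by
        rw [cone_cell]
        refine ⟨?_, hq.1⟩
        simp [cone, r2, hz2])
      have h2 : Φ (cone 2 q) = T ∩ A ∩ B := by simp [hΦ, cone]
      rw [h2] at h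
      exact h.1

theorem ext_zero {Z : Set X} (hZ : Z.Nonempty) : Ext (Fin 0) Z := by
  intro f hf hm
  obtain ⟨z, hz⟩ := hZ
  refine ⟨fun _ => z, continuousOn_const, fun _ _ => hz, ?_⟩
  intro x hx
  exfalso
  have h0 : x = 0 := Subsingleton.elim _ _
  rw [mem_sphere_zero_iff_norm, h0, norm_zero] at hx
  exact zero_ne_one hx

theorem two_glue (m : ℕ) (T A B : Set X) (hAo : IsOpen A) (hBo : IsOpen B)
    (hA : Cn (m + 1) (T ∩ A)) (hB : Cn (m + 1) (T ∩ B)) (hAB : Cn m (T ∩ A ∩ B)) :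
    Cn (m + 1) (T ∩ (A ∪ B)) := by
  refine ⟨hA.1.mono (by gcongr; exact subset_union_left), fun d hd f hf hm => ?_⟩
  rcases Nat.eq_zero_or_pos d with rfl | hd0
  · exact ext_zero (hA.1.mono (by gcongr; exact subset_union_left)) f hf hm
  obtain ⟨UA, hUA, hUA'⟩ := continuousOn_iff'.1 hf A hAo
  obtain ⟨UB, hUB, hUB'⟩ := continuousOn_iff'.1 hf B hBo
  have hcov : sphere (0 : Fin d → ℝ) 1 ⊆ ⋃ b : Bool, (if b then UA else UB) := by
    intro x hx
    rw [mem_iUnion]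
    rcases (hm hx).2 with h | h
    · have h' : x ∈ f ⁻¹' A ∩ sphere 0 1 := ⟨h, hx⟩
      rw [hUA'] at h'
      exact ⟨true, by simpa using h'.1⟩
    · have h' : x ∈ f ⁻¹' B ∩ sphere 0 1 := ⟨h, hx⟩
      rw [hUB'] at h'
      exact ⟨false, by simpa using h'.1⟩
  obtain ⟨δ, hδ, hleb⟩ := lebesgue_number_lemma_of_metric (isCompact_sphere (0 : Fin d → ℝ) 1)
    (by intro b; cases b <;> simpa) hcov
  obtain ⟨n, hn⟩ := exists_nat_one_div_lt hδ
  set N := n + 1 with hNdef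
  have hN : 0 < N := Nat.succ_pos n
  have hN' : (0 : ℝ) < 2 * N := by positivity
  have msc : MapsTo (fun x : Fin d → ℝ => (2 * N : ℝ)⁻¹ • x) (sphere 0 (2 * N : ℝ)) (sphere 0 1) := by
    intro x hx
    rw [mem_sphere_zero_iff_norm] at hx ⊢
    rw [norm_smul, hx, norm_inv, Real.norm_of_nonneg hN'.le, inv_mul_cancel₀ hN'.ne']
  have hgT : MapsTo (fun x : Fin d → ℝ => f ((2 * N : ℝ)⁻¹ • x)) (sphere 0 (2 * N : ℝ))
    (T ∩ (A ∪ B)) := fun x hx => hm (msc hx)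
  have hK : ∀ q : Fin d → ℤ, cell q ⊆ sphere 0 (2 * N : ℝ) →
      MapsTo (fun x : Fin d → ℝ => f ((2 * N : ℝ)⁻¹ • x)) (cell q) A ∨
      MapsTo (fun x : Fin d → ℝ => f ((2 * N : ℝ)⁻¹ • x)) (cell q) B := by
    intro q hq
    obtain ⟨b, hb⟩ := hleb _ (msc (hq (inner_center q).1))
    have hball : ∀ x ∈ cell q, (2 * N : ℝ)⁻¹ • x ∈ ball ((2 * N : ℝ)⁻¹ • fun i => (q i : ℝ)) δ := by
      intro x hx
      rw [mem_ball, dist_eq_norm, ← smul_sub, norm_smul, norm_inv, Real.norm_of_nonneg hN'.le]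
      have h1 : ‖x - fun i => (q i : ℝ)‖ ≤ 1 := by
        rw [pi_norm_le_iff_of_nonneg zero_le_one]
        intro i
        refine (hx i).trans ?_
        unfold rad; split_ifs <;> norm_num
      have h2 : (2 * N : ℝ)⁻¹ ≤ 1 / ((n : ℝ) + 1) := by
        rw [inv_eq_one_div]
        apply one_div_le_one_div_of_le (by positivity)
        rw [hNdef]; push_cast; linarith [(Nat.cast_nonneg n : (0:ℝ) ≤ n)]
      calc (2 * N : ℝ)⁻¹ * ‖x - fun i => (q i : ℝ)‖ ≤ (2 * N : ℝ)⁻¹ * 1 := by gcongr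
        _ < δ := by linarith
    cases b
    · right
      intro x hx
      have : (2 * N : ℝ)⁻¹ • x ∈ UB ∩ sphere 0 1 := ⟨by simpa using hb (hball x hx), msc (hq hx)⟩
      rw [← hUB'] at this
      exact this.1
    · left
      intro x hx
      have : (2 * N : ℝ)⁻¹ • x ∈ UA ∩ sphere 0 1 := ⟨by simpa using hb (hball x hx), msc (hq hx)⟩
      rw [← hUA'] at this
      exact this.1
  obtain ⟨F, hFc, hFm, hF0, hF2⟩ := push hN hd0 (fun x : Fin d → ℝ => f ((2 * N : ℝ)⁻¹ • x))
    (hf.comp (by fun_prop : Continuous fun x : Fin d → ℝ => (2 * N : ℝ)⁻¹ • x).continuousOn msc)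
    T A B hgT hK (hB.mono hd) (hAB.mono (by omega))
  have cL : Continuous fun r : ℝ × (Fin d → ℝ) =>
      (cone (2 * r.1) ((2 * N : ℝ) • r.2) : Option (Fin d) → ℝ) := by
    refine continuous_pi fun o => ?_
    cases o with
    | none => simp only [cone, Option.elim]; fun_prop
    | some i => simp only [cone, Option.elim]; fun_prop
  have msc' : ∀ x ∈ sphere (0 : Fin d → ℝ) 1, (2 * N : ℝ) • x ∈ sphere (0 : Fin d → ℝ) (2 * N : ℝ) := by
    intro x hx
    rw [mem_sphere_zero_iff_norm] at hx ⊢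
    rw [norm_smul, hx, Real.norm_of_nonneg hN'.le, mul_one]
  have mL : MapsTo (fun r : ℝ × (Fin d → ℝ) =>
      (cone (2 * r.1) ((2 * N : ℝ) • r.2) : Option (Fin d) → ℝ)) (Icc 0 1 ×ˢ sphere 0 1)
      {z | z ∘ some ∈ sphere (0 : Fin d → ℝ) (2 * N : ℝ) ∧ z none ∈ Icc (0 : ℝ) 2} := by
    rintro ⟨t, x⟩ ⟨ht, hx⟩
    refine ⟨msc' x hx, ?_⟩
    simp only [cone, Option.elim, mem_Icc] at ht ⊢
    constructor <;> linarith [ht.1, ht.2]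
  have hHc := hFc.comp cL.continuousOn mL
  have hH1 : ContinuousOn (fun x : Fin d → ℝ => F (cone (2 * 1) ((2 * N : ℝ) • x))) (sphere 0 1) :=
    hHc.comp (f := fun x : Fin d → ℝ => ((1 : ℝ), x)) (by fun_prop)
      (fun x hx => ⟨by simp, hx⟩)
  obtain ⟨g, hg, hgm, hgf⟩ := hA.2 d hd (fun x => F (cone (2 * 1) ((2 * N : ℝ) • x))) hH1
    (fun x hx => hF2 _ (msc' x hx) (by simp [cone]))
  obtain ⟨g', a, b, c⟩ := ext_of_homotopy (Z := T ∩ (A ∪ B)) _ hHc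
    (fun r hr => hFm _ (mL hr).1 (mL hr).2) g hg (fun x hx => ⟨(hgm hx).1, Or.inl (hgm hx).2⟩) hgf
  refine ⟨g', a, b, fun x hx => ?_⟩
  rw [c x hx]
  simp only [Function.comp]
  rw [hF0 (cone (2 * 0) ((2 * N : ℝ) • x)) (msc' x hx) (by simp [cone])]
  congr 1
  funext i
  have : (N : ℝ) ≠ 0 := by positivity
  simp [cone]
  field_simp

theorem nerve {ι : Type} (O : ι → Set X) (hO : ∀ i, IsOpen (O i)) (s : Finset ι)
    (hs : s.Nonempty) : ∀ (m : ℕ) (T : Set X),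
    (∀ A ⊆ s, A.Nonempty → A.card ≤ m + 1 → Cn (m + 1 - A.card) (T ∩ ⋂ i ∈ A, O i)) →
    Cn m (T ∩ ⋃ i ∈ s, O i) := by
  classical
  induction hs using Finset.Nonempty.cons_induction with
  | singleton a =>
    intro m T h
    have := h {a} subset_rfl (by simp) (by simp)
    simpa using this
  | cons a s ha hs ih =>
    intro m T h
    rw [Finset.cons_eq_insert] at h ⊢
    rw [Finset.set_biUnion_insert]
    have h1 : Cn m (T ∩ ⋃ i ∈ s, O i) :=
      ih m T fun A hA => h A (hA.trans (Finset.subset_insert _ _))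
    have h2 : Cn m (T ∩ O a) := by
      have := h {a} (by simp) (by simp) (by simp)
      simpa using this
    cases m with
    | zero =>
      have hne : (T ∩ (O a ∪ ⋃ i ∈ s, O i)).Nonempty :=
        h2.1.mono (by gcongr; exact subset_union_left)
      refine ⟨hne, fun d hd => ?_⟩
      obtain rfl : d = 0 := by omega
      exact ext_zero hne
    | succ m =>
      refine two_glue m T _ _ (hO a) (isOpen_biUnion fun i _ => hO i) h2 h1 ?_
      refine ih m _ fun A hA hAn hAc => ?_
      have haA : a ∉ A := fun h => ha (hA h)
      have := h (insert a A) (Finset.insert_subset_insert _ hA) (by simp)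
        (by rw [Finset.card_insert_of_notMem haA]; omega)
      rw [Finset.card_insert_of_notMem haA, Finset.set_biInter_insert, ← inter_assoc] at this
      convert this using 1
      omega

/-! the complex -/

theorem exists_abs_one {n : ℕ} {y : Fin n → ℝ} (hy : ‖y‖ = 1) : ∃ i, |y i| = 1 := by
  by_contra hcon
  push Not at hcon
  have : ‖y‖ < 1 := by
    rw [pi_norm_lt_iff one_pos]
    intro i
    exact lt_of_le_of_ne ((norm_le_pi_norm y i).trans hy.le) (hcon i)
  linarith

section cplx

variable {V : Type} [Fintype V]

def R (K : Set (Finset V)) (S : Finset V) : Set (V → ℝ) :=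
  {w | w ∈ realization K ∧ ∀ v, v ∉ S → w v = 0}

open Classical in
noncomputable def nb (K : Set (Finset V)) (v : V) : Finset V :=
  Finset.univ.filter fun u => ({v, u} : Finset V) ∈ K

noncomputable def eps (V : Type) [Fintype V] : ℝ := 1 / ((Fintype.card V : ℝ) + 1)

theorem eps_pos : 0 < eps V := by unfold eps; positivity

def O (K : Set (Finset V)) (v : V) : Set (V → ℝ) := {w | 1 - eps V < ∑ u ∈ nb K v, w u}

theorem O_open (K : Set (Finset V)) (v : V) : IsOpen (O K v) :=
  isOpen_lt continuous_const (by fun_prop)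

theorem sum_of_support {w : V → ℝ} {s : Finset V} (h : ∀ v, v ∉ s → w v = 0) :
    ∑ u ∈ s, w u = ∑ u, w u :=
  Finset.sum_subset (Finset.subset_univ _) fun v _ hv => h v hv

variable [DecidableEq V]

theorem deform (K : Set (Finset V)) (S A : Finset V) (m : ℕ)
    (h : Cn m (R K (S.filter fun u => ∀ v ∈ A, u ∈ nb K v))) :
    Cn m (R K S ∩ ⋂ v ∈ A, O K v) := by
  set L := S.filter fun u => ∀ v ∈ A, u ∈ nb K v with hL
  have hpos : ∀ w ∈ R K S ∩ ⋂ v ∈ A, O K v, 0 < ∑ u ∈ L, w u := by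
    rintro w ⟨⟨⟨h0, h1, -⟩, hS⟩, hA⟩
    have e1 : ∑ u, w u = ∑ u ∈ L, w u + ∑ u ∈ Lᶜ, w u := (Finset.sum_add_sum_compl L w).symm
    have e2 : ∑ u ∈ Lᶜ, w u ≤ ∑ u ∈ A.biUnion fun v => (nb K v)ᶜ, w u := by
      rw [← Finset.sum_filter_of_ne (p := fun u => u ∈ S)]
      · refine Finset.sum_le_sum_of_subset_of_nonneg ?_ fun u _ _ => h0 u
        intro u hu
        simp only [hL, Finset.mem_filter, Finset.mem_compl, not_and, not_forall] at hu
        obtain ⟨v, hv, hvu⟩ := hu.1 hu.2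
        simp only [Finset.mem_biUnion, Finset.mem_compl]
        exact ⟨v, hv, hvu⟩
      · intro u _ hu
        by_contra hn
        exact hu (hS u hn)
    have e3 : ∑ u ∈ A.biUnion fun v => (nb K v)ᶜ, w u ≤ ∑ v ∈ A, ∑ u ∈ (nb K v)ᶜ, w u := by
      have key : ∀ B : Finset V, ∑ u ∈ B.biUnion fun v => (nb K v)ᶜ, w u ≤
          ∑ v ∈ B, ∑ u ∈ (nb K v)ᶜ, w u := by
        intro B
        induction B using Finset.induction_on with
        | empty => simp
        | insert a B ha ih =>
          rw [Finset.biUnion_insert, Finset.sum_insert ha]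
          have := Finset.sum_union_inter (s₁ := (nb K a)ᶜ) (s₂ := B.biUnion fun v => (nb K v)ᶜ) (f := w)
          have h2 : 0 ≤ ∑ u ∈ (nb K a)ᶜ ∩ B.biUnion fun v => (nb K v)ᶜ, w u :=
            Finset.sum_nonneg fun u _ => h0 u
          linarith
      exact key A
    have e4 : ∑ v ∈ A, ∑ u ∈ (nb K v)ᶜ, w u ≤ ∑ v ∈ A, eps V := by
      refine Finset.sum_le_sum fun v hv => ?_
      have h3 : w ∈ O K v := mem_iInter₂.1 hA v hv
      have h3 : 1 - eps V < ∑ u ∈ nb K v, w u := h3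
      have h4 := Finset.sum_add_sum_compl (nb K v) w
      linarith
    have e5 : ∑ v ∈ A, eps V < 1 := by
      rw [Finset.sum_const, nsmul_eq_mul]
      have : (A.card : ℝ) ≤ Fintype.card V := by exact_mod_cast Finset.card_le_univ A
      unfold eps
      rw [mul_one_div, div_lt_one (by positivity)]
      linarith
    linarith
  set r : (V → ℝ) → (V → ℝ) := fun w u => if u ∈ L then (∑ u ∈ L, w u)⁻¹ * w u else 0 with hr
  have rsum : ∀ w ∈ R K S ∩ ⋂ v ∈ A, O K v, ∀ B : Finset V, L ⊆ B → ∑ u ∈ B, r w u = 1 := by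
    intro w hw B hB
    rw [← Finset.sum_subset hB (f := r w) (fun u _ hu => by simp [hr, hu])]
    have : ∀ u ∈ L, r w u = (∑ u ∈ L, w u)⁻¹ * w u := fun u hu => by simp [hr, hu]
    rw [Finset.sum_congr rfl this, ← Finset.mul_sum, inv_mul_cancel₀ (hpos w hw).ne']
  have rnn : ∀ w ∈ R K S ∩ ⋂ v ∈ A, O K v, ∀ u, 0 ≤ r w u := by
    intro w hw u
    simp only [hr]
    split_ifs
    · exact mul_nonneg (inv_nonneg.2 (hpos w hw).le) (hw.1.1.1 u)
    · exact le_rfl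
  have rz : ∀ w : V → ℝ, ∀ u, w u = 0 → r w u = 0 := by
    intro w u hu; simp [hr, hu]
  have rz' : ∀ w : V → ℝ, ∀ u, u ∉ L → r w u = 0 := by
    intro w u hu; simp [hr, hu]
  have LN : ∀ v ∈ A, L ⊆ nb K v := by
    intro v hv u hu
    exact (Finset.mem_filter.1 hu).2 v hv
  refine h.of_deform (Z := R K S ∩ ⋂ v ∈ A, O K v) ?_
    (fun q : ℝ × (V → ℝ) => fun u => (1 - q.1) * q.2 u + q.1 * r q.2 u) ?_ ?_ ?_ ?_
  · rintro w ⟨hw, hwL⟩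
    refine ⟨⟨hw, fun v hv => hwL v fun h' => hv (Finset.mem_filter.1 h').1⟩, ?_⟩
    rw [mem_iInter₂]
    intro v hv
    change 1 - eps V < ∑ u ∈ nb K v, w u
    rw [sum_of_support fun u hu => hwL u fun h' => hu (LN v hv h'), hw.2.1]
    linarith [eps_pos (V := V)]
  · refine continuousOn_pi.2 fun u => ?_
    have c1 : ContinuousOn (fun q : ℝ × (V → ℝ) => r q.2 u) (Icc 0 1 ×ˢ (R K S ∩ ⋂ v ∈ A, O K v)) := by
      by_cases hu : u ∈ L
      · simp only [hr, hu, if_true]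
        refine ContinuousOn.mul (ContinuousOn.inv₀ (by fun_prop) ?_) (by fun_prop)
        intro q hq
        exact (hpos q.2 hq.2).ne'
      · simp only [hr, hu, if_false]; exact continuousOn_const
    exact ContinuousOn.add (by fun_prop) (continuousOn_fst.mul c1)
  · rintro ⟨t, w⟩ ⟨⟨ht0, ht1⟩, hw⟩
    simp only at ht0 ht1
    have hw' := hw
    obtain ⟨⟨⟨h0, h1, σ, hσ, hσw⟩, hS⟩, hA⟩ := hw
    refine ⟨⟨⟨fun u => ?_, ?_, σ, hσ, fun u hu => ?_⟩, fun u hu => ?_⟩, ?_⟩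
    · have := rnn w hw' u
      have := h0 u
      have : 0 ≤ 1 - t := by linarith
      positivity
    · rw [Finset.sum_add_distrib, ← Finset.mul_sum, ← Finset.mul_sum, h1,
        rsum w hw' _ (Finset.subset_univ _)]
      ring
    · apply hσw
      intro hz
      apply hu
      have hz2 : w u = 0 := hz
      simp [hz2, rz w u hz2]
    · have : w u = 0 := hS u hu
      simp [this, rz w u this]
    · rw [mem_iInter₂]
      intro v hv
      have h3 : 1 - eps V < ∑ u ∈ nb K v, w u := mem_iInter₂.1 hA v hv
      change 1 - eps V < ∑ u ∈ nb K v, ((1 - t) * w u + t * r w u)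
      rw [Finset.sum_add_distrib, ← Finset.mul_sum, ← Finset.mul_sum, rsum w hw' _ (LN v hv)]
      have he := eps_pos (V := V)
      rcases ht0.eq_or_lt with rfl | ht0
      · linarith
      · nlinarith [mul_pos ht0 he, mul_nonneg (sub_nonneg.2 ht1) (sub_pos.2 h3).le]
  · intro w _; funext u; simp
  · intro w hw
    obtain ⟨⟨⟨h0, h1, σ, hσ, hσw⟩, hS⟩, hA⟩ := id hw
    have e : (fun u => (1 - (1 : ℝ)) * w u + 1 * r w u) = r w := by funext u; ring
    change (fun u => (1 - (1 : ℝ)) * w u + 1 * r w u) ∈ _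
    rw [e]
    refine ⟨⟨rnn w hw, rsum w hw _ (Finset.subset_univ _), σ, hσ, fun u hu => hσw u fun hz => hu (rz w u hz)⟩, rz' w⟩


theorem mem_nb (K : Set (Finset V)) (u v : V) : u ∈ nb K v ↔ ({v, u} : Finset V) ∈ K := by
  unfold nb
  simp only [Finset.mem_filter, Finset.mem_univ, true_and]
  constructor <;> intro h <;> convert h

theorem pair_mem {K : Set (Finset V)} (hdown : ∀ σ ∈ K, ∀ τ ⊆ σ, τ ∈ K) {σ : Finset V} (hσ : σ ∈ K)
    {a b : V} (ha : a ∈ σ) (hb : b ∈ σ) : ({a, b} : Finset V) ∈ K := by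
  refine hdown σ hσ _ ?_
  intro x hx
  rcases Finset.mem_insert.1 hx with rfl | hx
  · exact ha
  · rw [Finset.mem_singleton.1 hx]; exact hb

theorem star_cn (K : Set (Finset V)) (hdown : ∀ σ ∈ K, ∀ τ ⊆ σ, τ ∈ K)
    (hflag : ∀ σ : Finset V, (∀ v ∈ σ, ∀ w ∈ σ, ({v, w} : Finset V) ∈ K) → σ ∈ K)
    (hvert : ∀ v, ({v, v} : Finset V) ∈ K) (L : Finset V) (v : V) (hv : v ∈ L)
    (hL : ∀ u ∈ L, ({v, u} : Finset V) ∈ K) (m : ℕ) : Cn m (R K L) := by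
  have hsv : (Pi.single v 1 : V → ℝ) ∈ R K L := by
    refine ⟨⟨fun u => ?_, by simp, {v}, by simpa using hvert v, ?_⟩, ?_⟩
    · by_cases h : u = v
      · subst h; simp
      · simp [h]
    · intro u hu
      by_contra hn
      simp at hn
      simp [hn] at hu
    · intro u hu
      have : u ≠ v := by rintro rfl; exact hu hv
      simp [this]
  refine (Cn.singleton m (Pi.single v 1 : V → ℝ)).of_deform (by simpa using hsv)
    (fun q : ℝ × (V → ℝ) => fun u => (1 - q.1) * q.2 u + q.1 * (Pi.single v 1 : V → ℝ) u)
    (by fun_prop) ?_ ?_ ?_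
  · rintro ⟨t, w⟩ ⟨⟨ht0, ht1⟩, ⟨h0, h1, σ, hσ, hσw⟩, hwL⟩
    simp only at ht0 ht1
    refine ⟨⟨fun u => ?_, ?_, insert v (σ ∩ L), ?_, ?_⟩, ?_⟩
    · have := hsv.1.1 u
      have := h0 u
      have : 0 ≤ 1 - t := by linarith
      positivity
    · rw [Finset.sum_add_distrib, ← Finset.mul_sum, ← Finset.mul_sum, h1, hsv.1.2.1]
      ring
    · apply hflag
      intro a ha b hb
      rcases Finset.mem_insert.1 ha with rfl | ha2 <;> rcases Finset.mem_insert.1 hb with rfl | hb2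
      · exact hvert _
      · exact hL b (Finset.mem_inter.1 hb2).2
      · rw [Finset.pair_comm]; exact hL a (Finset.mem_inter.1 ha2).2
      · exact pair_mem hdown hσ (Finset.mem_inter.1 ha2).1 (Finset.mem_inter.1 hb2).1
    · intro u hu
      by_contra hn
      rw [Finset.mem_insert, not_or] at hn
      apply hu
      have hwu : w u = 0 := by
        by_contra hw0
        apply hn.2
        rw [Finset.mem_inter]
        refine ⟨hσw u hw0, ?_⟩
        by_contra hL'
        exact hw0 (hwL u hL')
      simp [hwu, hn.1]
    · intro u hu
      have : w u = 0 := hwL u hu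
      have h2 := hsv.2 u hu
      simp only [this, h2]; ring
  · intro w _; funext u; simp
  · intro w _
    rw [mem_singleton_iff]
    funext u; simp

theorem main (K : Set (Finset V)) (hdown : ∀ σ ∈ K, ∀ τ ⊆ σ, τ ∈ K)
    (hflag : ∀ σ : Finset V, (∀ v ∈ σ, ∀ w ∈ σ, ({v, w} : Finset V) ∈ K) → σ ∈ K)
    (hvert : ∀ v, ({v, v} : Finset V) ∈ K) (m : ℕ) : ∀ S : Finset V,
    (∀ W ⊆ S, W.card ≤ 2 * m → ∃ v ∈ S, ∀ w ∈ W, ({v, w} : Finset V) ∈ K) → Cn m (R K S) := by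
  induction m using Nat.strong_induction_on with
  | _ m ih =>
    intro S hS
    obtain ⟨v0, hv0, -⟩ := hS ∅ (by simp) (by simp)
    have hcov : R K S ∩ ⋃ v ∈ S, O K v = R K S := by
      rw [inter_eq_left]
      rintro w ⟨⟨h0, h1, σ, hσ, hσw⟩, hwS⟩
      obtain ⟨v, hv⟩ : ∃ v, w v ≠ 0 := by
        by_contra hcon
        push Not at hcon
        simp [hcon] at h1
      have hvS : v ∈ S := by
        by_contra hn
        exact hv (hwS v hn)
      refine mem_biUnion hvS ?_
      change 1 - eps V < ∑ u ∈ nb K v, w u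
      rw [sum_of_support, h1]
      · linarith [eps_pos (V := V)]
      · intro u hu
        by_contra hn
        exact hu ((mem_nb K u v).2 (pair_mem hdown hσ (hσw v hv) (hσw u hn)))
    rw [← hcov]
    refine nerve (O K) (O_open K) S ⟨v0, hv0⟩ m (R K S) ?_
    intro A hA hAn hAc
    apply deform
    rcases Nat.lt_or_ge 1 A.card with h2 | h1
    · refine ih _ (by omega) _ ?_
      intro W hW hWc
      obtain ⟨u, hu, huW⟩ := hS (W ∪ A) (Finset.union_subset
        (hW.trans (Finset.filter_subset _ _)) hA)
        ((Finset.card_union_le _ _).trans (by omega))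
      refine ⟨u, ?_, fun w hw => huW w (Finset.mem_union_left _ hw)⟩
      rw [Finset.mem_filter]
      refine ⟨hu, fun v hv => ?_⟩
      rw [mem_nb, Finset.pair_comm]
      exact huW v (Finset.mem_union_right _ hv)
    · have h1 : A.card = 1 := le_antisymm h1 hAn.card_pos
      obtain ⟨v, rfl⟩ := Finset.card_eq_one.1 h1
      refine star_cn K hdown hflag hvert _ v ?_ ?_ _
      · rw [Finset.mem_filter]
        refine ⟨hA (by simp), ?_⟩
        intro x hx
        rw [Finset.mem_singleton.1 hx, mem_nb]
        exact hvert v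
      · intro u hu
        rw [← mem_nb]
        exact (Finset.mem_filter.1 hu).2 v (by simp)

end cplx

theorem Cn.path {T : Set X} (h : Cn 1 T) : PathConnectedSpace T := by
  rw [← isPathConnected_iff_pathConnectedSpace, isPathConnected_iff]
  refine ⟨h.1, fun a ha b hb => ?_⟩
  have cs : IsClosed {y : Fin 1 → ℝ | y 0 ≤ -1} := isClosed_le (by fun_prop) continuous_const
  have ct : IsClosed {y : Fin 1 → ℝ | 1 ≤ y 0} := isClosed_le continuous_const (by fun_prop)
  obtain ⟨f, hf, h1, h2⟩ := glue cs ct (f := fun _ => a) (g := fun _ => b) continuousOn_const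
    continuousOn_const (by
      intro x h1 h2
      simp only [mem_setOf_eq] at h1 h2
      linarith)
  have hsub : sphere (0 : Fin 1 → ℝ) 1 ⊆ {y : Fin 1 → ℝ | y 0 ≤ -1} ∪ {y : Fin 1 → ℝ | 1 ≤ y 0} := by
    intro y hy
    obtain ⟨i, hi⟩ := exists_abs_one (by simpa using hy)
    obtain rfl : i = 0 := Subsingleton.elim _ _
    rcases eq_or_eq_neg_of_abs_eq hi with h | h
    · right; exact h.ge
    · left; exact h.le
  obtain ⟨g, hg, hgm, hgf⟩ := h.2 1 le_rfl f (hf.mono hsub) (by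
    intro y hy
    rcases hsub hy with h | h
    · rw [h1 y h]; exact ha
    · rw [h2 y h]; exact hb)
  have mt : MapsTo (fun t : ℝ => fun _ : Fin 1 => 2 * t - 1) (Icc 0 1) (closedBall 0 1) := by
    intro t ht
    rw [mem_closedBall_zero_iff, pi_norm_le_iff_of_nonneg zero_le_one]
    intro _
    rw [Real.norm_eq_abs, abs_le]
    constructor <;> linarith [ht.1, ht.2]
  refine JoinedIn.ofLine (f := fun t : ℝ => g (fun _ => 2 * t - 1))
    (hg.comp (by fun_prop) mt) ?_ ?_ ?_
  · rw [hgf, h1]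
    · simp
    · simp [pi_norm_const]
  · rw [hgf, h2]
    · norm_num
    · norm_num [pi_norm_const]
  · rintro _ ⟨t, ht, rfl⟩
    exact hgm (mt ht)

theorem Cn.pi {T : Set X} (j : ℕ) (h : Cn (j + 1) T) (x : T) :
    Subsingleton (HomotopyGroup (Fin j) T x) := by
  suffices hs : ∀ p : GenLoop (Fin j) T x, GenLoop.Homotopic p GenLoop.const by
    refine ⟨fun a b => ?_⟩
    induction a using Quotient.inductionOn with
    | _ a =>
    induction b using Quotient.inductionOn with
    | _ b => exact Quotient.sound ((hs a).trans (hs b).symm)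
  intro p
  have cs : IsClosed {y : Fin (j + 1) → ℝ | y 0 ≤ -1} := isClosed_le (by fun_prop) continuous_const
  have ct : IsClosed ({y : Fin (j + 1) → ℝ | 1 ≤ y 0} ∪ ⋃ i : Fin j, {y | 1 ≤ |y i.succ|}) :=
    (isClosed_le continuous_const (by fun_prop)).union
      (isClosed_iUnion_of_finite fun i => isClosed_le continuous_const (by fun_prop))
  set c : ℝ → unitInterval := fun s => projIcc 0 1 zero_le_one ((s + 1) / 2) with hc
  have cc : Continuous c := continuous_projIcc.comp (by fun_prop)
  obtain ⟨f, hf, h1, h2⟩ := glue cs ct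
    (f := fun y : Fin (j + 1) → ℝ => (p (fun i => c (y i.succ)) : X)) (g := fun _ => (x : X))
    (by
      refine Continuous.continuousOn ?_
      exact continuous_subtype_val.comp (p.1.continuous.comp
        (continuous_pi fun i => cc.comp (continuous_apply _))))
    continuousOn_const (by
      intro y hy hy'
      simp only [mem_setOf_eq] at hy
      rcases hy' with hy' | hy'
      · simp only [mem_setOf_eq] at hy'; linarith
      · obtain ⟨i, hi⟩ := mem_iUnion.1 hy'
        have hi : 1 ≤ |y i.succ| := hi
        rw [GenLoop.boundary p]
        refine ⟨i, ?_⟩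
        rcases le_abs.1 hi with hi | hi
        · right
          exact projIcc_of_right_le _ (by linarith)
        · left
          exact projIcc_of_le_left _ (by linarith))
  have hsub : sphere (0 : Fin (j + 1) → ℝ) 1 ⊆ {y : Fin (j + 1) → ℝ | y 0 ≤ -1} ∪
      ({y : Fin (j + 1) → ℝ | 1 ≤ y 0} ∪ ⋃ i : Fin j, {y | 1 ≤ |y i.succ|}) := by
    intro y hy
    obtain ⟨i, hi⟩ := exists_abs_one (by simpa using hy)
    induction i using Fin.cases with
    | zero =>
      rcases eq_or_eq_neg_of_abs_eq hi with h | h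
      · right; left; exact h.ge
      · left; exact h.le
    | succ i => right; right; exact mem_iUnion.2 ⟨i, hi.ge⟩
  obtain ⟨g, hg, hgm, hgf⟩ := h.2 _ le_rfl f (hf.mono hsub) (by
    intro y hy
    rcases hsub hy with h | h
    · rw [h1 y h]; exact Subtype.property _
    · rw [h2 y h]; exact x.2)
  set e : unitInterval × (Fin j → unitInterval) → (Fin (j + 1) → ℝ) := fun q =>
    Fin.cons (2 * (q.1 : ℝ) - 1) (fun i => 2 * (q.2 i : ℝ) - 1) with he
  have ce : Continuous e := by
    refine continuous_pi fun i => ?_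
    induction i using Fin.cases with
    | zero => simp only [he, Fin.cons_zero]; fun_prop
    | succ i => simp only [he, Fin.cons_succ]; fun_prop
  have hle : ∀ s : unitInterval, |2 * (s : ℝ) - 1| ≤ 1 := by
    intro s
    rw [abs_le]; constructor <;> linarith [s.2.1, s.2.2]
  have me : ∀ q, e q ∈ closedBall (0 : Fin (j + 1) → ℝ) 1 := by
    intro q
    rw [mem_closedBall_zero_iff, pi_norm_le_iff_of_nonneg zero_le_one]
    intro i
    induction i using Fin.cases with
    | zero => exact hle _
    | succ i => exact hle _
  have msph : ∀ q i, |e q i| = 1 → e q ∈ sphere (0 : Fin (j + 1) → ℝ) 1 := by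
    intro q i hi
    rw [mem_sphere_zero_iff_norm]
    refine le_antisymm (by simpa using me q) ?_
    rw [← hi]
    exact norm_le_pi_norm (e q) i
  have hbd : ∀ t : unitInterval, ∀ y ∈ Cube.boundary (Fin j), g (e (t, y)) = x := by
    rintro t y ⟨i, hi⟩
    have : |e (t, y) i.succ| = 1 := by
      simp only [he, Fin.cons_succ]
      rcases hi with hi | hi <;> norm_num [hi]
    rw [hgf _ (msph _ i.succ this), h2]
    right
    exact mem_iUnion.2 ⟨i, this.ge⟩
  refine ⟨⟨⟨⟨fun q => ⟨g (e q), hgm (me q)⟩, ?_⟩, ?_, ?_⟩, ?_⟩⟩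
  · exact Continuous.subtype_mk (hg.comp_continuous ce me) _
  · intro y
    apply Subtype.ext
    change g (e (0, y)) = (p y : X)
    have h0 : e (0, y) 0 = -1 := by simp [he]
    rw [hgf _ (msph _ 0 (by rw [h0]; norm_num)), h1 _ h0.le]
    congr 2
    funext i
    simp only [he, Fin.cons_succ, hc]
    have : (2 * (y i : ℝ) - 1 + 1) / 2 = y i := by ring
    rw [this, projIcc_val]
  · intro y
    apply Subtype.ext
    change g (e (1, y)) = (x : X)
    have h0 : e (1, y) 0 = 1 := by simp [he]; norm_num
    rw [hgf _ (msph _ 0 (by rw [h0]; norm_num)), h2]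
    left
    exact h0.ge
  · intro t y hy
    apply Subtype.ext
    change g (e (t, y)) = (p y : X)
    rw [hbd t y hy, GenLoop.boundary p y hy]

end CE

/-- If `Σ` is a flag simplicial complex (every clique of the 1-skeleton is a face) in which
every set of at most `2k-2` vertices has a common neighbor, then `|Σ|` is
`(k-2)`-connected. -/
theorem stmt18 {V : Type} [Fintype V] [DecidableEq V] (k : ℕ) (hk : 2 ≤ k)
    (K : Set (Finset V)) (hdown : ∀ σ ∈ K, ∀ τ ⊆ σ, τ ∈ K)
    (hflag : ∀ σ : Finset V, (∀ v ∈ σ, ∀ w ∈ σ, ({v, w} : Finset V) ∈ K) → σ ∈ K)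
    (hnbr : ∀ W : Finset V, W.card ≤ 2 * k - 2 →
      ∃ v, ∀ w ∈ W, ({v, w} : Finset V) ∈ K) :
    IsNConnected ((k : ℤ) - 2) ↥(realization K) := by
  classical
  have hvert : ∀ v, ({v, v} : Finset V) ∈ K := by
    intro v
    obtain ⟨u, hu⟩ := hnbr {v} (by simp; omega)
    exact CE.pair_mem hdown (hu v (by simp)) (by simp) (by simp)
  have hC : CE.Cn (k - 1) (realization K) := by
    have h := CE.main K hdown hflag hvert (k - 1) Finset.univ (by
      intro W _ hW
      obtain ⟨v, hv⟩ := hnbr W (by omega)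
      exact ⟨v, Finset.mem_univ _, hv⟩)
    have e : CE.R K Finset.univ = realization K := by
      ext w; simp [CE.R]
    rwa [e] at h
  refine ⟨fun _ => hC.1.to_subtype, fun _ => (hC.mono (by omega)).path, ?_⟩
  intro j hj hjk x
  exact CE.Cn.pi j (hC.mono (by omega)) x
end

section
/- Let f : V → ℝ^d be an odd labeling of the vertex set V of an antipodally symmetric triangulation Σ of S^d (f(-v) = -f(v)), and assume f is generic, meaning that for every face τ of Σ of dimension at most d-1, 0 ∉ conv{f(v) : v ∈ τ}. Then the number of facets σ of Σ with 0 ∈ conv{f(v) : v ∈ σ} equals 2k for some odd integer k. -/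
/-! ### Part 1: lists of labels, alternating lists -/

/-- Mod 2 coboundary of a function on lists (sum over deletions of one entry). -/
def dl {X : Type} : List X → (List X → ZMod 2) → ZMod 2
  | [], _ => 0
  | a :: l, α => α l + dl l (fun t => α (a :: t))

lemma z2_self (a : ZMod 2) : a + a = 0 := CharTwo.add_self_eq_zero a

lemma dl_congr {X : Type} (l : List X) : ∀ (α β : List X → ZMod 2),
    (∀ t, t.Sublist l → α t = β t) → dl l α = dl l β := by
  induction l with
  | nil => intro α β _; rfl
  | cons a l ih =>
    intro α β h
    simp only [dl]
    rw [h l (List.sublist_cons_self a l)]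
    rw [ih _ _ (fun t ht => h (a :: t) (ht.cons_cons a))]

lemma dl_zero {X : Type} (l : List X) : dl l (fun _ => 0) = 0 := by
  induction l with
  | nil => rfl
  | cons a l ih => simp [dl, ih]

lemma dl_map {X Y : Type} (g : X → Y) (l : List X) : ∀ (α : List Y → ZMod 2),
    dl (l.map g) α = dl l (fun t => α (t.map g)) := by
  induction l with
  | nil => intro α; rfl
  | cons a l ih => intro α; simp [dl, ih]

lemma dl_perm {X : Type} {l l' : List X} (h : l.Perm l') : ∀ (α : List X → ZMod 2),
    (∀ s t : List X, s.Perm t → α s = α t) → dl l α = dl l' α := by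
  induction h with
  | nil => intro α _; rfl
  | cons a h ih =>
    intro α hα
    simp only [dl]
    rw [hα _ _ h, ih _ (fun s t hst => hα _ _ (hst.cons a))]
  | swap a b l =>
    intro α hα
    simp only [dl]
    have : (fun t => α (b :: a :: t)) = (fun t => α (a :: b :: t)) := by
      funext t; exact hα _ _ (List.Perm.swap a b t)
    rw [this]; ring
  | trans _ _ ih1 ih2 => intro α hα; rw [ih1 α hα, ih2 α hα]

/-- A list of labels with strictly increasing absolute values `a / 2` and alternating
signs `a % 2`. -/
def altS : Bool → List ℕ → Prop
  | _, [] => True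
  | b, a :: l => (decide (a % 2 = 1) = b) ∧ (∀ x ∈ l, a / 2 < x / 2) ∧ altS (!b) l

open Classical in
/-- Indicator of an alternating list. -/
noncomputable def P0 (b : Bool) (l : List ℕ) : ZMod 2 := if altS b l then 1 else 0

open Classical in
/-- Indicator of a list which is alternating up to reordering. -/
noncomputable def PA (b : Bool) (l : List ℕ) : ZMod 2 :=
  if ∃ l', l'.Perm l ∧ altS b l' then 1 else 0

lemma altS_sorted (l : List ℕ) : ∀ b, altS b l → l.Pairwise (· ≤ ·) := by
  induction l with
  | nil => intro b _; exact List.Pairwise.nil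
  | cons a l ih =>
    intro b h
    refine List.Pairwise.cons (fun x hx => ?_) (ih _ h.2.2)
    have := h.2.1 x hx
    omega

lemma PA_perm (b : Bool) (s t : List ℕ) (h : s.Perm t) : PA b s = PA b t := by
  unfold PA
  congr 1
  apply propext
  constructor
  · rintro ⟨l', h1, h2⟩; exact ⟨l', h1.trans h, h2⟩
  · rintro ⟨l', h1, h2⟩; exact ⟨l', h1.trans h.symm, h2⟩

lemma PA_sorted (b : Bool) (l : List ℕ) (h : l.Pairwise (· ≤ ·)) : PA b l = P0 b l := by
  unfold PA P0
  congr 1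
  apply propext
  constructor
  · rintro ⟨l', h1, h2⟩
    have := List.Perm.eq_of_pairwise (fun a b _ _ h1 h2 => le_antisymm h1 h2)
      (altS_sorted l' b h2) h h1
    rwa [← this]
  · intro h; exact ⟨l, List.Perm.refl _, h⟩

/-- No two labels are complementary. -/
def NC (l : List ℕ) : Prop := ∀ a ∈ l, ∀ b ∈ l, a / 2 = b / 2 → a = b

lemma P0_cons (b : Bool) (a : ℕ) (l : List ℕ) (h : ∀ x ∈ l, a / 2 < x / 2) :
    P0 b (a :: l) = if decide (a % 2 = 1) = b then P0 (!b) l else 0 := by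
  unfold P0
  by_cases hb : decide (a % 2 = 1) = b
  · rw [if_pos hb]
    congr 1
    apply propext
    exact ⟨fun hh => hh.2.2, fun hh => ⟨hb, h, hh⟩⟩
  · rw [if_neg hb, if_neg]
    exact fun hh => hb hh.1

lemma P0_cons_not (b : Bool) (a : ℕ) (l : List ℕ) (x : ℕ) (hx : x ∈ l) (h : ¬ a / 2 < x / 2) :
    P0 b (a :: l) = 0 := by
  unfold P0
  rw [if_neg]
  exact fun hh => h (hh.2.1 x hx)

lemma P0_dl (l : List ℕ) : ∀ b, l.Pairwise (· ≤ ·) → NC l →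
    dl l (P0 b) = P0 b l + P0 (!b) l := by
  induction l with
  | nil => intro b _ _; simp [dl, P0, altS]; rfl
  | cons a t ih =>
    intro b hs hn
    have hs' := List.pairwise_cons.1 hs
    have hn' : NC t := fun x hx y hy h =>
      hn x (List.mem_cons_of_mem _ hx) y (List.mem_cons_of_mem _ hy) h
    by_cases hlt : ∀ x ∈ t, a / 2 < x / 2
    · simp only [dl]
      rw [P0_cons b a t hlt, P0_cons (!b) a t hlt]
      by_cases hb : decide (a % 2 = 1) = b
      · have h1 : dl t (fun s => P0 b (a :: s)) = dl t (P0 (!b)) := by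
          apply dl_congr
          intro s hs
          rw [P0_cons b a s (fun x hx => hlt x (hs.subset hx)), if_pos hb]
        have hb2 : ¬ decide (a % 2 = 1) = !b := by rw [hb]; cases b <;> simp
        rw [h1, ih (!b) hs'.2 hn', if_pos hb, if_neg hb2, Bool.not_not]
        have := z2_self (P0 b t)
        linear_combination this
      · have h1 : dl t (fun s => P0 b (a :: s)) = 0 := by
          rw [← dl_zero t]
          apply dl_congr
          intro s hs
          rw [P0_cons b a s (fun x hx => hlt x (hs.subset hx)), if_neg hb]
        have hb2 : decide (a % 2 = 1) = !b := by
          revert hb; cases b <;> cases decide (a % 2 = 1) <;> simp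
        rw [h1, if_neg hb, if_pos hb2, Bool.not_not]
        ring
    · push Not at hlt
      obtain ⟨x, hx, hxa⟩ := hlt
      cases t with
      | nil => simp at hx
      | cons c t =>
        have hac : a = c := by
          apply hn a (by simp) c (by simp)
          have h1 := hs'.1 c (by simp)
          have h2 : c ≤ x := by
            rcases List.mem_cons.1 hx with h | h
            · omega
            · exact (List.pairwise_cons.1 hs'.2).1 x h
          omega
        subst hac
        simp only [dl]
        have h1 : dl t (fun s => P0 b (a :: a :: s)) = 0 := by
          rw [← dl_zero t]
          apply dl_congr
          intro s hs
          exact P0_cons_not b a (a :: s) a (by simp) (by simp)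
        rw [h1, P0_cons_not b a (a :: t) a (by simp) (by simp),
          P0_cons_not (!b) a (a :: t) a (by simp) (by simp), add_zero, z2_self, add_zero]

lemma PA_dl (l : List ℕ) (b : Bool) (hn : NC l) :
    dl l (PA b) = PA b l + PA (!b) l := by
  have hp : (l.insertionSort (· ≤ ·)).Perm l := List.perm_insertionSort _ l
  have hs : (l.insertionSort (· ≤ ·)).Pairwise (· ≤ ·) := List.pairwise_insertionSort _ l
  rw [← dl_perm hp _ (PA_perm b), ← PA_perm b _ _ hp, ← PA_perm (!b) _ _ hp,
    PA_sorted _ _ hs, PA_sorted _ _ hs]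
  rw [← P0_dl _ b hs]
  · apply dl_congr
    intro t ht
    exact PA_sorted _ _ (hs.sublist ht)
  · intro x hx y hy h
    exact hn x (hp.subset hx) y (hp.subset hy) h

/-- The complementary label. -/
def anti (a : ℕ) : ℕ := if a % 2 = 0 then a + 1 else a - 1

lemma anti_div (a : ℕ) : anti a / 2 = a / 2 := by unfold anti; split_ifs <;> omega
lemma anti_mod (a : ℕ) : decide (anti a % 2 = 1) = !decide (a % 2 = 1) := by
  unfold anti; split_ifs with h
  · have : (a + 1) % 2 = 1 := by omega
    simp [this, h]
  · have : (a - 1) % 2 = 0 := by omega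
    have h2 : a % 2 = 1 := by omega
    simp [this, h2]
lemma anti_anti (a : ℕ) : anti (anti a) = a := by unfold anti; split_ifs <;> omega

lemma altS_anti (l : List ℕ) : ∀ b, altS b l → altS (!b) (l.map anti) := by
  induction l with
  | nil => intro b _; trivial
  | cons a l ih =>
    intro b h
    refine ⟨?_, ?_, ih _ h.2.2⟩
    · rw [anti_mod, h.1]
    · intro x hx
      obtain ⟨y, hy, rfl⟩ := List.mem_map.1 hx
      rw [anti_div, anti_div]; exact h.2.1 y hy

lemma PA_anti (b : Bool) (l : List ℕ) : PA b (l.map anti) = PA (!b) l := by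
  unfold PA
  congr 1
  apply propext
  constructor
  · rintro ⟨l', h1, h2⟩
    refine ⟨l'.map anti, ?_, altS_anti _ _ h2⟩
    have := h1.map anti
    simpa [List.map_map, Function.comp_def, anti_anti] using this
  · rintro ⟨l', h1, h2⟩
    refine ⟨l'.map anti, h1.map anti, ?_⟩
    simpa using altS_anti _ _ h2

lemma PA_single (b : Bool) (a : ℕ) : PA b [a] + PA (!b) [a] = 1 := by
  rw [PA_sorted _ _ (by simp), PA_sorted _ _ (by simp), P0_cons _ _ _ (by simp),
    P0_cons _ _ _ (by simp)]
  have : ∀ b, P0 b [] = 1 := by intro b; simp [P0, altS]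
  simp only [this]
  cases b <;> cases decide (a % 2 = 1) <;> simp

/-- A list longer than the number of absolute values is not alternating. -/
lemma altS_len (l : List ℕ) : ∀ b d m, altS b l → (∀ x ∈ l, m ≤ x / 2 ∧ x < 2 * d) → m ≤ d →
    l.length + m ≤ d := by
  induction l with
  | nil => intro b d m _ _ h; simpa using h
  | cons a l ih =>
    intro b d m h hx hm
    have h1 := hx a (by simp)
    have := ih (!b) d (a / 2 + 1) h.2.2 (fun x hx' => ⟨h.2.1 x hx', (hx x (by simp [hx'])).2⟩)
      (by omega)
    simp only [List.length_cons]
    omega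

lemma PA_long (b : Bool) (l : List ℕ) (d : ℕ) (hl : d < l.length) (h : ∀ x ∈ l, x < 2 * d) :
    PA b l = 0 := by
  unfold PA
  rw [if_neg]
  rintro ⟨l', h1, h2⟩
  have := altS_len l' b d 0 h2 (fun x hx => ⟨Nat.zero_le _, h x (h1.subset hx)⟩) (Nat.zero_le _)
  rw [h1.length_eq] at this
  omega


/-! ### Part 2: cubical grid, flags of cells -/

/-- Mod 2 cubical boundary, in doubled coordinates (odd coordinate = open interval). -/
noncomputable def bd {d : ℕ} (A : (Fin d → ℤ) → ZMod 2) (z : Fin d → ℤ) : ZMod 2 :=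
  ∑ i, if Odd (z i) then A (Function.update z i (z i + 1)) + A (Function.update z i (z i - 1))
    else 0

lemma bd_add {d : ℕ} (A B : (Fin d → ℤ) → ZMod 2) (z : Fin d → ℤ) :
    bd (fun y => A y + B y) z = bd A z + bd B z := by
  unfold bd
  rw [← Finset.sum_add_distrib]
  apply Finset.sum_congr rfl
  intro i _
  split_ifs <;> ring

lemma bd_const {d : ℕ} (c : ZMod 2) (z : Fin d → ℤ) : bd (fun _ => c) z = 0 := by
  unfold bd
  apply Finset.sum_eq_zero
  intro i _
  rw [z2_self]; simp

lemma sum_sym_zero {ι : Type} [Fintype ι] [DecidableEq ι] (f : ι → ι → ZMod 2)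
    (h : ∀ i j, f i j = f j i) (h0 : ∀ i, f i i = 0) : ∑ i, ∑ j, f i j = 0 := by
  rw [← Fintype.sum_prod_type' f]
  refine Finset.sum_involution (fun x _ => x.swap) ?_ ?_ ?_ ?_
  · rintro ⟨i, j⟩ _; simp only [Prod.swap]; rw [h j i, z2_self]
  · rintro ⟨i, j⟩ _ hne heq
    simp only [Prod.swap, Prod.mk.injEq] at heq
    apply hne
    rw [heq.1]; exact h0 i
  · intro a _; simp
  · intro a _; simp

lemma bd_bd {d : ℕ} (A : (Fin d → ℤ) → ZMod 2) (z : Fin d → ℤ) : bd (bd A) z = 0 := by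
  have key : bd (bd A) z = ∑ i, ∑ j, (if i ≠ j ∧ Odd (z i) ∧ Odd (z j) then
      (A (Function.update (Function.update z i (z i + 1)) j (z j + 1))
        + A (Function.update (Function.update z i (z i + 1)) j (z j - 1)))
      + (A (Function.update (Function.update z i (z i - 1)) j (z j + 1))
        + A (Function.update (Function.update z i (z i - 1)) j (z j - 1))) else 0) := by
    unfold bd
    apply Finset.sum_congr rfl
    intro i _
    by_cases hi : Odd (z i)
    · rw [if_pos hi, ← Finset.sum_add_distrib]
      apply Finset.sum_congr rfl
      intro j _
      by_cases hij : i = j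
      · subst hij
        have h1 : ¬ Odd (z i + 1) := by rw [Int.not_odd_iff_even]; exact hi.add_one
        have h2 : ¬ Odd (z i - 1) := by
          rw [Int.not_odd_iff_even]; exact hi.sub_odd odd_one
        simp [h1, h2]
      · rw [Function.update_of_ne (Ne.symm hij), Function.update_of_ne (Ne.symm hij)]
        by_cases hj : Odd (z j)
        · simp [hj, hi, hij]
        · simp [hj]
    · simp [hi]
  rw [key]
  apply sum_sym_zero
  · intro i j
    by_cases hij : i = j
    · subst hij; rfl
    · have e := fun a b => Function.update_comm (Ne.symm hij) (a : ℤ) (b : ℤ) z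
      rw [e, e, e, e]
      by_cases hi : Odd (z i) <;> by_cases hj : Odd (z j) <;> simp [hi, hj, hij, Ne.symm hij]
      ring
  · intro i; simp

/-- Sum of `α` over the complete flags of length `k + 1` with top cell `z`. -/
noncomputable def Ev {d : ℕ} : ℕ → (List (Fin d → ℤ) → ZMod 2) → (Fin d → ℤ) → ZMod 2
  | 0, α, z => α [z]
  | k + 1, α, z => bd (Ev k (fun l => α (z :: l))) z

lemma Ev_add {d : ℕ} (k : ℕ) : ∀ (α β : List (Fin d → ℤ) → ZMod 2) (z : Fin d → ℤ),
    Ev k (fun l => α l + β l) z = Ev k α z + Ev k β z := by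
  induction k with
  | zero => intro α β z; rfl
  | succ k ih =>
    intro α β z
    simp only [Ev]
    rw [← bd_add]
    congr 1
    funext y
    exact ih _ _ y

lemma bd_Ev {d : ℕ} (k : ℕ) : ∀ (α : List (Fin d → ℤ) → ZMod 2) (z : Fin d → ℤ),
    bd (Ev k α) z = Ev (k + 1) (fun l => dl l α) z := by
  induction k with
  | zero =>
    intro α z
    simp only [Ev, dl, add_zero]
    rw [show (fun z_1 => α [z_1] + α [z]) = (fun y => (fun y => α [y]) y + (fun _ => α [z]) y)
      from rfl, bd_add, bd_const, add_zero]
  | succ k ih =>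
    intro α z
    conv_rhs => rw [Ev]
    simp only [dl]
    have : (Ev (k + 1) fun l => α l + dl l fun t => α (z :: t)) =
        fun y => Ev (k + 1) α y + bd (Ev k (fun t => α (z :: t))) y := by
      funext y
      rw [Ev_add, ih]
    rw [this, bd_add, bd_bd, add_zero]

/-- `y` is an iterated face of `z`. -/
def Fc {d : ℕ} (y z : Fin d → ℤ) : Prop :=
  ∀ i, y i = z i ∨ (Odd (z i) ∧ Even (y i) ∧ |y i - z i| ≤ 1)

lemma Fc.trans {d : ℕ} {x y z : Fin d → ℤ} (h1 : Fc x y) (h2 : Fc y z) : Fc x z := by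
  intro i
  rcases h1 i with a | a
  · rw [a]; exact h2 i
  · rcases h2 i with b | b
    · rw [← b]; exact Or.inr a
    · exact absurd a.1 (by rw [Int.not_odd_iff_even]; exact b.2.1)

lemma Fc.refl {d : ℕ} (z : Fin d → ℤ) : Fc z z := fun _ => Or.inl rfl

lemma Fc_update {d : ℕ} (z : Fin d → ℤ) (i : Fin d) (h : Odd (z i)) :
    Fc (Function.update z i (z i + 1)) z ∧ Fc (Function.update z i (z i - 1)) z := by
  constructor
  all_goals
    intro j
    by_cases hj : j = i
    · subst hj
      right
      refine ⟨h, ?_, ?_⟩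
      · simp only [Function.update_self]
        first | exact h.add_one | exact h.sub_odd odd_one
      · simp
    · left; simp [hj]

lemma bd_congr {d : ℕ} (A B : (Fin d → ℤ) → ZMod 2) (z : Fin d → ℤ)
    (h : ∀ y, Fc y z → A y = B y) : bd A z = bd B z := by
  unfold bd
  apply Finset.sum_congr rfl
  intro i _
  split_ifs with hi
  · rw [h _ (Fc_update z i hi).1, h _ (Fc_update z i hi).2]
  · rfl

lemma Ev_congr {d : ℕ} (k : ℕ) : ∀ (α β : List (Fin d → ℤ) → ZMod 2) (z : Fin d → ℤ),
    (∀ l : List (Fin d → ℤ), l.length = k + 1 → l.Pairwise (fun a b => Fc b a) →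
      (∀ y ∈ l, Fc y z) → α l = β l) → Ev k α z = Ev k β z := by
  induction k with
  | zero =>
    intro α β z h
    exact h [z] rfl (by simp) (by simp [Fc.refl])
  | succ k ih =>
    intro α β z h
    simp only [Ev]
    apply bd_congr
    intro y hy
    apply ih
    intro l hl hp hf
    apply h
    · simp [hl]
    · exact List.Pairwise.cons (fun a ha => (hf a ha).trans hy) hp
    · intro a ha
      rcases List.mem_cons.1 ha with rfl | ha
      · exact Fc.refl _
      · exact (hf a ha).trans hy

lemma Fc.near {d : ℕ} {y z : Fin d → ℤ} (h : Fc y z) (i : Fin d) : |y i - z i| ≤ 1 := by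
  rcases h i with h | h
  · rw [h]; simp
  · exact h.2.2

/-- Number mod 2 of alternating flags with top cell `z`. -/
noncomputable def Av {d : ℕ} (lam : (Fin d → ℤ) → ℕ) (k : ℕ) (b : Bool) (z : Fin d → ℤ) :
    ZMod 2 := Ev k (fun l => PA b (l.map lam)) z

/-- Labels of faces of `z` are not complementary. -/
def NCat {d : ℕ} (lam : (Fin d → ℤ) → ℕ) (z : Fin d → ℤ) : Prop :=
  ∀ x y, Fc x z → Fc y z → (∀ i, |x i - y i| ≤ 1) → lam x / 2 = lam y / 2 → lam x = lam y

lemma Av_bd {d : ℕ} (lam : (Fin d → ℤ) → ℕ) (k : ℕ) (b : Bool) (z : Fin d → ℤ)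
    (h : NCat lam z) : bd (Av lam k b) z = Av lam (k + 1) b z + Av lam (k + 1) (!b) z := by
  unfold Av
  rw [show (fun z => Ev k (fun l => PA b (l.map lam)) z) = Ev k (fun l => PA b (l.map lam)) from rfl,
    bd_Ev, ← Ev_add]
  apply Ev_congr
  intro l _ hp hf
  rw [← dl_map, PA_dl]
  intro a ha b hb hab
  obtain ⟨x, hx, rfl⟩ := List.mem_map.1 ha
  obtain ⟨y, hy, rfl⟩ := List.mem_map.1 hb
  refine h x y (hf x hx) (hf y hy) ?_ hab
  have := List.Pairwise.forall_of_forall_of_flip (R := fun a b : Fin d → ℤ => Fc a b ∨ Fc b a)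
    (fun x _ => Or.inl (Fc.refl x)) (hp.imp (fun h => Or.inr h))
    (hp.imp (fun h => Or.inl h)) hx hy
  intro i
  rcases this with h | h
  · exact h.near i
  · rw [abs_sub_comm]; exact h.near i

lemma Av_zero {d : ℕ} (lam : (Fin d → ℤ) → ℕ) (b : Bool) (z : Fin d → ℤ) :
    Av lam 0 b z + Av lam 0 (!b) z = 1 := PA_single b (lam z)

lemma Av_long {d : ℕ} (lam : (Fin d → ℤ) → ℕ) (k : ℕ) (b : Bool) (z : Fin d → ℤ) (m : ℕ)
    (hm : m ≤ k) (h : ∀ z, lam z < 2 * m) : Av lam k b z = 0 := by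
  have : Ev k (fun _ : List (Fin d → ℤ) => (0 : ZMod 2)) z = 0 := by
    have h1 := Ev_add k (fun _ : List (Fin d → ℤ) => (0 : ZMod 2)) (fun _ => 0) z
    simpa using h1
  unfold Av
  rw [← this]
  apply Ev_congr
  intro l hl _ _
  apply PA_long _ _ m
  · simp; omega
  · intro x hx
    obtain ⟨y, _, rfl⟩ := List.mem_map.1 hx
    exact h y

lemma bd_neg {d : ℕ} (A : (Fin d → ℤ) → ZMod 2) (z : Fin d → ℤ) :
    bd A (-z) = bd (fun y => A (-y)) z := by
  unfold bd
  apply Finset.sum_congr rfl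
  intro i _
  have e : Odd ((-z) i) ↔ Odd (z i) := by simp
  have e1 : ∀ a : ℤ, -Function.update z i a = Function.update (-z) i (-a) := by
    intro a; funext j
    by_cases hj : j = i
    · subst hj; simp
    · simp [hj]
  by_cases h : Odd (z i)
  · rw [if_pos h, if_pos (e.2 h), add_comm]
    simp only [e1, Pi.neg_apply]
    congr 3 <;> ring
  · rw [if_neg h, if_neg (fun h' => h (e.1 h'))]

lemma Ev_neg {d : ℕ} (k : ℕ) : ∀ (α : List (Fin d → ℤ) → ZMod 2) (z : Fin d → ℤ),
    Ev k α (-z) = Ev k (fun l => α (l.map (fun y => -y))) z := by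
  induction k with
  | zero => intro α z; rfl
  | succ k ih =>
    intro α z
    simp only [Ev]
    rw [bd_neg]
    congr 1
    funext y
    rw [ih]
    rfl

lemma Av_neg {d : ℕ} (lam : (Fin d → ℤ) → ℕ) (k : ℕ) (b : Bool) (z : Fin d → ℤ)
    (h : ∀ y, Fc y z → lam (-y) = anti (lam y)) : Av lam k b (-z) = Av lam k (!b) z := by
  unfold Av
  rw [Ev_neg]
  apply Ev_congr
  intro l _ _ hf
  rw [← PA_anti, List.map_map, List.map_map]
  congr 1
  apply List.map_congr_left
  intro y hy
  exact h y (hf y hy)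


/-! ### Part 3: sums over boxes and the parity lemma of Ky Fan -/

/-- Odd integers strictly between `-2m` and `2m`. -/
noncomputable def Od (m : ℕ) : Finset ℤ := (Finset.Ioo (-(2 * m : ℤ)) (2 * m)).filter Odd

lemma mem_Od (m : ℕ) (t : ℤ) : t ∈ Od m ↔ (-(2 * m : ℤ) < t ∧ t < 2 * m) ∧ Odd t := by
  simp [Od]

lemma sum_Od (m : ℕ) (F : ℤ → ZMod 2) :
    ∑ t ∈ Od m, F t = ∑ j ∈ Finset.range m, (F (2 * j + 1) + F (-(2 * j + 1))) := by
  induction m with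
  | zero => simp [Od]
  | succ m ih =>
    have h : Od (m + 1) = insert (2 * m + 1 : ℤ) (insert (-(2 * m + 1 : ℤ)) (Od m)) := by
      ext t
      simp only [mem_Od, Finset.mem_insert]
      push_cast
      constructor
      · rintro ⟨⟨h1, h2⟩, k, rfl⟩
        by_cases h3 : k = m
        · left; omega
        by_cases h4 : k = - m - 1
        · right; left; omega
        right; right
        exact ⟨by omega, k, rfl⟩
      · rintro (rfl | rfl | ⟨h, h'⟩)
        · exact ⟨by omega, m, rfl⟩
        · exact ⟨by omega, -m - 1, by ring⟩
        · exact ⟨by omega, h'⟩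
    rw [h, Finset.sum_insert, Finset.sum_insert, Finset.sum_range_succ, ← ih]
    · ring
    · rw [mem_Od]; omega
    · rw [Finset.mem_insert, mem_Od]; omega

/-- Sum over the top cells of the box `[-2m,2m]^d`. -/
noncomputable def Cs (m : ℕ) {d : ℕ} (A : (Fin d → ℤ) → ZMod 2) : ZMod 2 :=
  ∑ z ∈ Fintype.piFinset (fun _ : Fin d => Od m), A z

/-- Sum over the top cells of the boundary of the box `[-2m,2m]^d`. -/
noncomputable def Ss (m : ℕ) : (d : ℕ) → ((Fin d → ℤ) → ZMod 2) → ZMod 2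
  | 0, _ => 0
  | d + 1, A => Cs m (fun y : Fin d → ℤ => A (Fin.cons (2 * m : ℤ) y))
      + Cs m (fun y : Fin d → ℤ => A (Fin.cons (-(2 * m : ℤ)) y))
      + ∑ t ∈ Od m, Ss m d (fun y => A (Fin.cons t y))

/-- Sum over the cells of the upper half of the boundary. -/
noncomputable def Hs (m : ℕ) (d : ℕ) (A : (Fin (d + 1) → ℤ) → ZMod 2) : ZMod 2 :=
  Cs m (fun y : Fin d → ℤ => A (Fin.cons (2 * m : ℤ) y))
      + ∑ j ∈ Finset.range m, Ss m d (fun y => A (Fin.cons (2 * j + 1 : ℤ) y))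

lemma Cs_succ (m d : ℕ) (A : (Fin (d + 1) → ℤ) → ZMod 2) :
    Cs m A = ∑ t ∈ Od m, Cs m (fun y : Fin d → ℤ => A (Fin.cons t y)) := by
  unfold Cs
  rw [← Finset.sum_product']
  symm
  refine Finset.sum_nbij' (fun p => Fin.cons p.1 p.2) (fun z => (z 0, Fin.tail z)) ?_ ?_ ?_ ?_ ?_
  · rintro ⟨t, y⟩ h
    rw [Finset.mem_product, Fintype.mem_piFinset] at h
    rw [Fintype.mem_piFinset]
    intro i
    refine Fin.cases ?_ (fun j => ?_) i
    · exact h.1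
    · simpa using h.2 j
  · intro z h
    rw [Fintype.mem_piFinset] at h
    rw [Finset.mem_product, Fintype.mem_piFinset]
    exact ⟨h 0, fun j => h j.succ⟩
  · rintro ⟨t, y⟩ _; simp
  · intro z _; simp
  · rintro ⟨t, y⟩ _; rfl

lemma Cs_add (m : ℕ) {d : ℕ} (A B : (Fin d → ℤ) → ZMod 2) :
    Cs m (fun z => A z + B z) = Cs m A + Cs m B := Finset.sum_add_distrib

lemma Ss_add (m d : ℕ) : ∀ (A B : (Fin d → ℤ) → ZMod 2),
    Ss m d (fun z => A z + B z) = Ss m d A + Ss m d B := by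
  induction d with
  | zero => intro A B; simp [Ss]
  | succ d ih =>
    intro A B
    simp only [Ss, Cs_add, ih, Finset.sum_add_distrib]
    ring

lemma Hs_add (m d : ℕ) (A B : (Fin (d + 1) → ℤ) → ZMod 2) :
    Hs m d (fun z => A z + B z) = Hs m d A + Hs m d B := by
  simp only [Hs, Ss_add, Cs_add, Finset.sum_add_distrib]
  ring

lemma bd_cons {d : ℕ} (A : (Fin (d + 1) → ℤ) → ZMod 2) (t : ℤ) (y : Fin d → ℤ) :
    bd A (Fin.cons t y) = (if Odd t then A (Fin.cons (t + 1) y) + A (Fin.cons (t - 1) y) else 0)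
      + bd (fun y => A (Fin.cons t y)) y := by
  unfold bd
  rw [Fin.sum_univ_succ]
  congr 1
  · simp [Fin.update_cons_zero]
  · apply Finset.sum_congr rfl
    intro i _
    simp [Fin.cons_update]

lemma tele_full (m : ℕ) (F : ℤ → ZMod 2) :
    ∑ t ∈ Od m, (F (t + 1) + F (t - 1)) = F (2 * m) + F (-(2 * m)) := by
  rw [sum_Od]
  induction m with
  | zero => simp [z2_self]
  | succ m ih =>
    rw [Finset.sum_range_succ, ih]
    push_cast
    rw [show (2 * (m:ℤ) + 1 + 1) = 2 * (m + 1) by ring, show (2 * (m:ℤ) + 1 - 1) = 2 * m by ring,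
      show (-(2 * (m:ℤ) + 1) + 1) = -(2 * m) by ring,
      show (-(2 * (m:ℤ) + 1) - 1) = -(2 * (m + 1)) by ring]
    linear_combination z2_self (F (2 * m)) + z2_self (F (-(2 * m)))

lemma tele_half (m : ℕ) (F : ℤ → ZMod 2) :
    ∑ j ∈ Finset.range m, (F (2 * j + 1 + 1) + F (2 * j + 1 - 1)) = F (2 * m) + F 0 := by
  induction m with
  | zero => simp [z2_self]
  | succ m ih =>
    rw [Finset.sum_range_succ, ih]
    push_cast
    rw [show (2 * (m:ℤ) + 1 + 1) = 2 * (m + 1) by ring, show (2 * (m:ℤ) + 1 - 1) = 2 * m by ring]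
    linear_combination z2_self (F (2 * m))

lemma not_odd_two (m : ℤ) : ¬ Odd (2 * m) := by rw [Int.not_odd_iff_even]; exact even_two_mul m

lemma Cs_bd (m d : ℕ) : ∀ (A : (Fin d → ℤ) → ZMod 2), Cs m (bd A) = Ss m d A := by
  induction d with
  | zero => intro A; simp [Cs, Ss, bd]
  | succ d ih =>
    intro A
    rw [Cs_succ]
    simp only [Ss, bd_cons]
    rw [← tele_full m (fun t => Cs m (fun y : Fin d → ℤ => A (Fin.cons t y))),
      ← Finset.sum_add_distrib]
    apply Finset.sum_congr rfl
    intro t ht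
    have := ((mem_Od m t).1 ht).2
    simp only [this, if_true, Cs_add, ih]

lemma Ss_bd (m d : ℕ) (A : (Fin d → ℤ) → ZMod 2) : Ss m d (bd A) = 0 := by
  rw [← Cs_bd]
  unfold Cs
  exact Finset.sum_eq_zero (fun z _ => bd_bd A z)

lemma Hs_bd (m d : ℕ) (A : (Fin (d + 1) → ℤ) → ZMod 2) :
    Hs m d (bd A) = Ss m d (fun y => A (Fin.cons 0 y)) := by
  unfold Hs
  simp only [bd_cons, if_neg (not_odd_two _), zero_add]
  have h1 : Cs m (fun y => bd (fun y : Fin d → ℤ => A (Fin.cons (2 * m : ℤ) y)) y)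
      = Ss m d (fun y : Fin d → ℤ => A (Fin.cons (2 * m : ℤ) y)) := Cs_bd _ _ _
  rw [h1]
  have h2 : ∀ j ∈ Finset.range m, Ss m d (fun y => (if Odd (2 * j + 1 : ℤ) then
      A (Fin.cons (2 * j + 1 + 1 : ℤ) y) + A (Fin.cons (2 * j + 1 - 1 : ℤ) y) else 0)
      + bd (fun y => A (Fin.cons (2 * j + 1 : ℤ) y)) y)
      = (fun t : ℤ => Ss m d (fun y => A (Fin.cons t y))) (2 * j + 1 + 1)
        + (fun t : ℤ => Ss m d (fun y => A (Fin.cons t y))) (2 * j + 1 - 1) := by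
    intro j _
    have : Odd (2 * j + 1 : ℤ) := odd_two_mul_add_one _
    simp only [this, if_true, Ss_add]
    have := Ss_bd m d (fun y => A (Fin.cons (2 * j + 1 : ℤ) y))
    rw [this, add_zero]
  rw [Finset.sum_congr rfl h2, tele_half m (fun t : ℤ => Ss m d (fun y => A (Fin.cons t y)))]
  linear_combination z2_self (Ss m d (fun y : Fin d → ℤ => A (Fin.cons (2 * m : ℤ) y)))

/-- The boundary of the box. -/
def Bd (m : ℕ) {d : ℕ} (z : Fin d → ℤ) : Prop :=
  (∀ i, |z i| ≤ 2 * m) ∧ ∃ i, |z i| = 2 * m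

lemma Bd_cons (m : ℕ) {d : ℕ} (t : ℤ) (y : Fin d → ℤ) (ht : |t| ≤ 2 * m) (hy : Bd m y) :
    Bd m (Fin.cons t y : Fin (d + 1) → ℤ) := by
  refine ⟨?_, ?_⟩
  · intro i
    refine Fin.cases ?_ (fun j => ?_) i
    · simpa using ht
    · simpa using hy.1 j
  · obtain ⟨i, hi⟩ := hy.2
    exact ⟨i.succ, by simpa using hi⟩

lemma Od_abs {m : ℕ} {t : ℤ} (h : t ∈ Od m) : |t| ≤ 2 * m := by
  rw [mem_Od] at h
  rw [abs_le]; omega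

lemma Bd_cons_end (m : ℕ) {d : ℕ} (t : ℤ) (y : Fin d → ℤ) (ht : |t| = 2 * m)
    (hy : y ∈ Fintype.piFinset (fun _ : Fin d => Od m)) :
    Bd m (Fin.cons t y : Fin (d + 1) → ℤ) := by
  rw [Fintype.mem_piFinset] at hy
  refine ⟨?_, ?_⟩
  · intro i
    refine Fin.cases ?_ (fun j => ?_) i
    · simpa using ht.le
    · simpa using Od_abs (hy j)
  · exact ⟨0, by simpa using ht⟩

lemma Ss_congr (m d : ℕ) : ∀ (A B : (Fin d → ℤ) → ZMod 2), (∀ z, Bd m z → A z = B z) →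
    Ss m d A = Ss m d B := by
  induction d with
  | zero => intro A B _; rfl
  | succ d ih =>
    intro A B h
    simp only [Ss, Cs]
    congr 1
    · congr 1
      · exact Finset.sum_congr rfl (fun y hy => h _ (Bd_cons_end m _ y (by simp) hy))
      · exact Finset.sum_congr rfl (fun y hy => h _ (Bd_cons_end m _ y (by simp) hy))
    · apply Finset.sum_congr rfl
      intro t ht
      exact ih _ _ (fun y hy => h _ (Bd_cons m t y (Od_abs ht) hy))

lemma Hs_congr (m d : ℕ) (A B : (Fin (d + 1) → ℤ) → ZMod 2) (h : ∀ z, Bd m z → A z = B z) :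
    Hs m d A = Hs m d B := by
  unfold Hs
  congr 1
  · exact Finset.sum_congr rfl (fun y hy => h _ (Bd_cons_end m _ y (by simp) hy))
  · apply Finset.sum_congr rfl
    intro j hj
    refine Ss_congr m d _ _ (fun y hy => h _ (Bd_cons m _ y ?_ hy))
    rw [Finset.mem_range] at hj
    rw [abs_le]; omega

lemma Od_neg {m : ℕ} {t : ℤ} (h : t ∈ Od m) : -t ∈ Od m := by
  rw [mem_Od] at h ⊢
  exact ⟨by omega, h.2.neg⟩

lemma Cs_neg (m : ℕ) {d : ℕ} (A : (Fin d → ℤ) → ZMod 2) : Cs m (fun z => A (-z)) = Cs m A := by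
  unfold Cs
  refine Finset.sum_nbij' (fun z => -z) (fun z => -z) ?_ ?_ ?_ ?_ ?_
  · intro z h
    rw [Fintype.mem_piFinset] at h ⊢
    exact fun i => Od_neg (h i)
  · intro z h
    rw [Fintype.mem_piFinset] at h ⊢
    exact fun i => Od_neg (h i)
  · intro z _; simp
  · intro z _; simp
  · intro z _; rfl

lemma neg_cons' {d : ℕ} (t : ℤ) (y : Fin d → ℤ) :
    -(Fin.cons t y : Fin (d + 1) → ℤ) = Fin.cons (-t) (-y) := by
  funext i
  refine Fin.cases ?_ (fun j => ?_) i <;> simp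

lemma Ss_neg (m d : ℕ) : ∀ (A : (Fin d → ℤ) → ZMod 2), Ss m d (fun z => A (-z)) = Ss m d A := by
  induction d with
  | zero => intro A; rfl
  | succ d ih =>
    intro A
    simp only [Ss, neg_cons']
    rw [Cs_neg m (fun y : Fin d → ℤ => A (Fin.cons (-(2 * m : ℤ)) y)),
      Cs_neg m (fun y : Fin d → ℤ => A (Fin.cons (- -(2 * m : ℤ)) y)), neg_neg]
    have : ∑ t ∈ Od m, Ss m d (fun y => A (Fin.cons (-t) (-y)))
        = ∑ t ∈ Od m, Ss m d (fun y => A (Fin.cons t y)) := by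
      refine Finset.sum_nbij' (fun z => -z) (fun z => -z) (fun _ => Od_neg) (fun _ => Od_neg)
        (by simp) (by simp) ?_
      intro t _
      exact ih (fun y => A (Fin.cons (-t) y))
    rw [this]; ring

lemma Ss_eq_Hs (m d : ℕ) (A : (Fin (d + 1) → ℤ) → ZMod 2) :
    Ss m (d + 1) A = Hs m d (fun z => A z + A (-z)) := by
  rw [Hs_add]
  unfold Hs
  simp only [neg_cons']
  rw [Cs_neg m (fun y : Fin d → ℤ => A (Fin.cons (-(2 * m : ℤ)) y))]
  simp only [fun t : ℤ => Ss_neg m d (fun y => A (Fin.cons (-t) y))]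
  simp only [Ss, sum_Od, Finset.sum_add_distrib]
  ring

/-- Ky Fan's parity lemma, abstract form. -/
lemma fan (m d : ℕ) : ∀ (A : ℕ → Bool → (Fin (d + 1) → ℤ) → ZMod 2) (b : Bool),
    (∀ k b z, Bd m z → bd (A k b) z = A (k + 1) b z + A (k + 1) (!b) z) →
    (∀ b z, A 0 b z + A 0 (!b) z = 1) →
    (∀ k b z, Bd m z → A k b (-z) = A k (!b) z) →
    Ss m (d + 1) (A d b) = 1 := by
  induction d with
  | zero =>
    intro A b _ h0 hn
    rw [Ss_eq_Hs, Hs_congr m 0 _ (fun z => A 0 b z + A 0 (!b) z)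
      (fun z hz => by rw [hn 0 b z hz])]
    simp only [h0]
    simp [Hs, Cs, Ss]
  | succ d ih =>
    intro A b hb h0 hn
    rw [Ss_eq_Hs, Hs_congr m (d + 1) _ (bd (A d b))
      (fun z hz => by rw [hn _ b z hz, hb _ b z hz]), Hs_bd]
    refine ih (fun k b y => A k b (Fin.cons 0 y)) b ?_ ?_ ?_
    · intro k b z hz
      rw [← hb k b _ (Bd_cons m 0 z (by simp) hz), bd_cons]
      simp
    · intro b z; exact h0 b _
    · intro k b z hz
      rw [← hn k b _ (Bd_cons m 0 z (by simp) hz), neg_cons', neg_zero]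

lemma Bd_Fc {m d : ℕ} {y z : Fin d → ℤ} (h : Fc y z) (hz : Bd m z) : Bd m y := by
  constructor
  · intro i
    have h2 := hz.1 i
    rcases h i with h | h
    · rw [h]; exact h2
    · obtain ⟨⟨k, hk⟩, _, h3⟩ := h
      rw [abs_le] at *
      omega
  · obtain ⟨i, hi⟩ := hz.2
    refine ⟨i, ?_⟩
    rcases h i with h | h
    · rw [h]; exact hi
    · obtain ⟨⟨k, hk⟩, _, h3⟩ := h
      rcases abs_eq_abs.1 (hi.trans (by simp : (2 * m : ℤ) = |2 * (m : ℤ)|)) with h | h <;> omega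

/-- Ky Fan's parity lemma for labels on the boundary of a box. -/
lemma fan_label (m d : ℕ) (lam : (Fin (d + 1) → ℤ) → ℕ) (b : Bool)
    (hodd : ∀ z, Bd m z → lam (-z) = anti (lam z))
    (hnc : ∀ x y, Bd m x → Bd m y → (∀ i, |x i - y i| ≤ 1) → lam x / 2 = lam y / 2 →
      lam x = lam y) :
    Cs m (bd (Av lam d b)) = 1 := by
  rw [Cs_bd]
  refine fan m d (Av lam) b ?_ ?_ ?_
  · intro k b z hz
    exact Av_bd lam k b z (fun x y hx hy => hnc x y (Bd_Fc hx hz) (Bd_Fc hy hz))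
  · intro b z; exact Av_zero lam b z
  · intro k b z hz
    exact Av_neg lam k b z (fun y hy => hodd y (Bd_Fc hy hz))


/-! ### Part 4: boxes with holes -/

lemma bd_trans {d : ℕ} (A : (Fin d → ℤ) → ZMod 2) (c z : Fin d → ℤ) (hc : ∀ i, Even (c i)) :
    bd A (c + z) = bd (fun y => A (c + y)) z := by
  unfold bd
  apply Finset.sum_congr rfl
  intro i _
  have e : Odd ((c + z) i) ↔ Odd (z i) := by
    simp only [Pi.add_apply, Int.odd_add]
    constructor
    · intro h; by_contra h2
      rw [Int.not_odd_iff_even] at h2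
      exact (Int.not_odd_iff_even.2 (hc i)) (h.2 h2)
    · intro h
      constructor
      · intro h3; exact absurd h3 (Int.not_odd_iff_even.2 (hc i))
      · intro h3; exact absurd h (Int.not_odd_iff_even.2 h3)
  have e1 : ∀ a : ℤ, c + Function.update z i a = Function.update (c + z) i (c i + a) := by
    intro a; funext j
    by_cases hj : j = i
    · subst hj; simp
    · simp [hj]
  by_cases h : Odd (z i)
  · rw [if_pos h, if_pos (e.2 h)]
    simp only [e1, Pi.add_apply]
    congr 3 <;> ring
  · rw [if_neg h, if_neg (fun h' => h (e.1 h'))]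

lemma Ev_trans {d : ℕ} (c : Fin d → ℤ) (hc : ∀ i, Even (c i)) (k : ℕ) :
    ∀ (α : List (Fin d → ℤ) → ZMod 2) (z : Fin d → ℤ),
    Ev k α (c + z) = Ev k (fun l => α (l.map (fun y => c + y))) z := by
  induction k with
  | zero => intro α z; rfl
  | succ k ih =>
    intro α z
    simp only [Ev]
    rw [bd_trans _ _ _ hc]
    congr 1
    funext y
    rw [ih]
    rfl

lemma bd_Av_trans {d : ℕ} (lam : (Fin d → ℤ) → ℕ) (c : Fin d → ℤ) (hc : ∀ i, Even (c i)) (k : ℕ)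
    (b : Bool) (z : Fin d → ℤ) :
    bd (Av lam k b) (c + z) = bd (Av (fun y => lam (c + y)) k b) z := by
  rw [bd_trans _ _ _ hc]
  congr 1
  funext y
  unfold Av
  rw [Ev_trans c hc]
  congr 1
  funext l
  rw [List.map_map]
  rfl

/-- Vertices of the big box outside the holes. -/
def Gd {ι : Type} {d : ℕ} (Z : Finset ι) (C : ι → Fin d → ℤ) (M k : ℕ) (z : Fin d → ℤ) : Prop :=
  (∀ i, |z i| ≤ 2 * M) ∧ ∀ x ∈ Z, ∃ i, (2 * k : ℤ) ≤ |z i - C x i|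

lemma holes {ι : Type} [DecidableEq ι] {d : ℕ} (Z : Finset ι) (C : ι → Fin (d + 1) → ℤ) (M k : ℕ)
    (lam : (Fin (d + 1) → ℤ) → ℕ) (hC : ∀ x i, Even (C x i))
    (hlam : ∀ z, lam z < 2 * (d + 1))
    (hin : ∀ x ∈ Z, ∀ i, |C x i| + 2 * k ≤ 2 * M)
    (hsep : ∀ x ∈ Z, ∀ y ∈ Z, x ≠ y → ∃ i, (4 * k : ℤ) ≤ |C x i - C y i|)
    (hnc : ∀ x y, Gd Z C M k x → Gd Z C M k y → (∀ i, |x i - y i| ≤ 1) → lam x / 2 = lam y / 2 →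
      lam x = lam y)
    (hodd : ∀ z, Bd M z → lam (-z) = anti (lam z))
    (hodd' : ∀ x ∈ Z, ∀ z, Bd k z → lam (C x + -z) = anti (lam (C x + z))) :
    Odd Z.card := by
  classical
  have hout : Cs M (bd (Av lam d true)) = 1 := by
    have hG : ∀ z, Bd M z → Gd Z C M k z := by
      intro z hz
      refine ⟨hz.1, fun x hx => ?_⟩
      obtain ⟨i, hi⟩ := hz.2
      refine ⟨i, ?_⟩
      have := hin x hx i
      have h2 := abs_sub_abs_le_abs_sub (z i) (C x i)
      omega
    exact fan_label M d lam true hodd (fun x y hx hy => hnc x y (hG x hx) (hG y hy))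
  have hinn : ∀ x ∈ Z, Cs k (fun z => bd (Av lam d true) (C x + z)) = 1 := by
    intro x hx
    have hG : ∀ z, Bd k z → Gd Z C M k (C x + z) := by
      intro z hz
      refine ⟨fun i => ?_, fun y hy => ?_⟩
      · have h1 := hin x hx i
        have h2 := hz.1 i
        have h3 := abs_add_le (C x i) (z i)
        simp only [Pi.add_apply]
        omega
      · by_cases hxy : x = y
        · subst hxy
          obtain ⟨i, hi⟩ := hz.2
          exact ⟨i, by simp [hi]⟩
        · obtain ⟨i, hi⟩ := hsep x hx y hy hxy
          refine ⟨i, ?_⟩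
          have h2 := hz.1 i
          have h3 := abs_add_le (C x i + z i - C y i) (- z i)
          rw [abs_neg] at h3
          rw [show C x i + z i - C y i + - z i = C x i - C y i by ring] at h3
          simp only [Pi.add_apply]
          omega
    have h1 := fan_label k d (fun y => lam (C x + y)) true (hodd' x hx) (by
      intro u v hu hv huv
      exact hnc _ _ (hG u hu) (hG v hv) (by intro i; simpa using huv i))
    rw [← h1]
    congr 1
    funext z
    exact bd_Av_trans lam (C x) (hC x) d true z
  -- the cells in the holes
  let T : ι → Finset (Fin (d + 1) → ℤ) := fun x =>
    (Fintype.piFinset (fun _ : Fin (d + 1) => Od k)).image (fun z => C x + z)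
  have hT : ∀ x z, z ∈ T x ↔ ∀ i, z i - C x i ∈ Od k := by
    intro x z
    simp only [T, Finset.mem_image, Fintype.mem_piFinset]
    constructor
    · rintro ⟨y, hy, rfl⟩ i
      simpa using hy i
    · intro h
      exact ⟨z - C x, h, by simp⟩
  have hTsum : ∀ x ∈ Z, ∑ z ∈ T x, bd (Av lam d true) z = 1 := by
    intro x hx
    rw [← hinn x hx]
    simp only [T, Cs]
    rw [Finset.sum_image]
    intro a _ b _ h
    exact add_left_cancel h
  have hdis : (Z : Set ι).PairwiseDisjoint T := by
    intro x hx y hy hxy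
    rw [Function.onFun, Finset.disjoint_left]
    intro z h1 h2
    rw [hT] at h1 h2
    obtain ⟨i, hi⟩ := hsep x hx y hy hxy
    have a1 := (mem_Od _ _).1 (h1 i)
    have a2 := (mem_Od _ _).1 (h2 i)
    have : |C x i - C y i| < 4 * k := by rw [abs_lt]; omega
    omega
  have hsub : Z.biUnion T ⊆ Fintype.piFinset (fun _ : Fin (d + 1) => Od M) := by
    intro z hz
    obtain ⟨x, hx, hz⟩ := Finset.mem_biUnion.1 hz
    rw [hT] at hz
    rw [Fintype.mem_piFinset]
    intro i
    have a1 := (mem_Od _ _).1 (hz i)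
    have a2 := hin x hx i
    rw [mem_Od]
    refine ⟨?_, ?_⟩
    · have := abs_le.1 (le_refl |C x i|)
      omega
    · have := a1.2.add_even (hC x i)
      simpa using this
  have hrest : ∑ z ∈ Fintype.piFinset (fun _ : Fin (d + 1) => Od M) \ Z.biUnion T,
      bd (Av lam d true) z = 0 := by
    apply Finset.sum_eq_zero
    intro z hz
    rw [Finset.mem_sdiff, Fintype.mem_piFinset] at hz
    have hG : ∀ y, Fc y z → Gd Z C M k y := by
      intro y hy
      refine ⟨fun i => ?_, fun x hx => ?_⟩
      · have h1 := (mem_Od _ _).1 (hz.1 i)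
        have h2 := hy.near i
        rw [abs_le] at *
        omega
      · have : z ∉ T x := fun h => hz.2 (Finset.mem_biUnion.2 ⟨x, hx, h⟩)
        rw [hT] at this
        push Not at this
        obtain ⟨i, hi⟩ := this
        refine ⟨i, ?_⟩
        have h1 := (mem_Od _ _).1 (hz.1 i)
        have h0 : Odd (z i - C x i) := h1.2.sub_even (hC x i)
        have h2 := hy.near i
        rw [mem_Od] at hi
        have h3 : ¬ (-(2 * k : ℤ) < z i - C x i ∧ z i - C x i < 2 * k) := fun h => hi ⟨h, h0⟩
        obtain ⟨q, hq⟩ := h0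
        rw [abs_le] at h2
        rw [le_abs]
        omega
    rw [Av_bd lam d true z (fun x y hx hy => hnc x y (hG x hx) (hG y hy)),
      Av_long lam (d + 1) true z (d + 1) le_rfl hlam,
      Av_long lam (d + 1) _ z (d + 1) le_rfl hlam, add_zero]
  have key := Finset.sum_sdiff hsub (f := bd (Av lam d true))
  rw [hrest, zero_add, Finset.sum_biUnion hdis, Finset.sum_congr rfl hTsum] at key
  unfold Cs at hout
  rw [hout] at key
  simp only [Finset.sum_const, nsmul_eq_mul, mul_one] at key
  rw [← ZMod.natCast_eq_one_iff_odd]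
  exact key

/-! ### labels -/

lemma exists_max_idx {d : ℕ} (u : Fin (d + 1) → ℝ) : ∃ i, ∀ j, u j ≤ u i :=
  Finite.exists_max u

/-- Tucker label of a vector. -/
noncomputable def lab {d : ℕ} (v : Fin (d + 1) → ℝ) : ℕ :=
  2 * ((exists_max_idx (fun i => |v i|)).choose : ℕ) +
    if v (exists_max_idx (fun i => |v i|)).choose < 0 then 1 else 0

lemma lab_spec {d : ℕ} (v : Fin (d + 1) → ℝ) : ∃ i : Fin (d + 1), |v i| = ‖v‖ ∧
    lab v = 2 * (i : ℕ) + (if v i < 0 then 1 else 0) ∧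
    lab (-v) = 2 * (i : ℕ) + (if - v i < 0 then 1 else 0) := by
  have hs := (exists_max_idx (fun i => |v i|)).choose_spec
  refine ⟨(exists_max_idx (fun i => |v i|)).choose, ?_, rfl, ?_⟩
  · apply le_antisymm
    · exact norm_le_pi_norm v _
    · rw [pi_norm_le_iff_of_nonneg (abs_nonneg _)]
      exact hs
  · unfold lab
    simp only [Pi.neg_apply, abs_neg]

lemma lab_lt {d : ℕ} (v : Fin (d + 1) → ℝ) : lab v < 2 * (d + 1) := by
  obtain ⟨i, _, h, _⟩ := lab_spec v
  rw [h]
  have := i.2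
  split_ifs <;> omega

lemma lab_neg {d : ℕ} (v : Fin (d + 1) → ℝ) (hv : v ≠ 0) : lab (-v) = anti (lab v) := by
  obtain ⟨i, h0, h, h'⟩ := lab_spec v
  have hn : 0 < |v i| := by rw [h0]; exact norm_pos_iff.2 hv
  rw [h, h']
  rcases lt_or_gt_of_ne (abs_pos.1 hn) with h1 | h1
  · rw [if_pos h1, if_neg (by linarith)]
    unfold anti; split_ifs <;> omega
  · rw [if_pos (show - v i < 0 by linarith), if_neg (show ¬ v i < 0 by linarith)]
    unfold anti; split_ifs <;> omega

lemma lab_near {d : ℕ} (v w : Fin (d + 1) → ℝ) (h : lab v / 2 = lab w / 2) (h2 : lab v ≠ lab w) :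
    ‖v‖ ≤ ‖v - w‖ := by
  obtain ⟨i, a0, a, _⟩ := lab_spec v
  obtain ⟨j, b0, b, _⟩ := lab_spec w
  have hij : i = j := by
    rw [a, b] at h
    apply Fin.ext
    split_ifs at h <;> omega
  subst hij
  have h3 := norm_le_pi_norm (v - w) i
  rw [← a0]
  refine le_trans ?_ h3
  rw [Real.norm_eq_abs, Pi.sub_apply]
  rw [a, b] at h2
  by_cases hv : v i < 0 <;> by_cases hw : w i < 0
  · simp [hv, hw] at h2
  · rw [abs_of_neg hv, abs_of_neg (by linarith)]; linarith
  · rw [abs_of_nonneg (not_lt.1 hv), abs_of_nonneg (by linarith)]; linarith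
  · simp [hv, hw] at h2

lemma lab_unif {n d : ℕ} (h : (Fin n → ℝ) → (Fin (d + 1) → ℝ)) (hc : Continuous h)
    (E : Set (Fin n → ℝ)) (hE : IsCompact E) (h0 : ∀ x ∈ E, h x ≠ 0) :
    ∃ δ > 0, ∀ x ∈ E, ∀ y ∈ E, ‖x - y‖ < δ → lab (h x) / 2 = lab (h y) / 2 →
      lab (h x) = lab (h y) := by
  rcases E.eq_empty_or_nonempty with rfl | hne
  · exact ⟨1, one_pos, by simp⟩
  obtain ⟨x0, hx0, hmin⟩ := hE.exists_isMinOn hne (hc.norm.continuousOn)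
  have hu := hE.uniformContinuousOn_of_continuous hc.continuousOn
  rw [Metric.uniformContinuousOn_iff] at hu
  obtain ⟨δ, hδ, hu⟩ := hu ‖h x0‖ (norm_pos_iff.2 (h0 x0 hx0))
  refine ⟨δ, hδ, fun x hx y hy hxy hl => ?_⟩
  by_contra hne
  have h1 := lab_near _ _ hl hne
  have h2 := hu x hx y hy (by rwa [dist_eq_norm])
  rw [dist_eq_norm] at h2
  have h3 : ‖h x0‖ ≤ ‖h x‖ := hmin hx
  linarith

/-- The point of a grid vertex. -/
noncomputable def gp {n : ℕ} (M : ℕ) (z : Fin n → ℤ) : Fin n → ℝ := fun i => (z i : ℝ) / (2 * M)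

lemma gp_near {n : ℕ} (M : ℕ) (hM : 0 < M) (x y : Fin n → ℤ) (h : ∀ i, |x i - y i| ≤ 1) :
    ‖gp M x - gp M y‖ ≤ 1 / (2 * M) := by
  have hM' : (0 : ℝ) < 2 * M := by positivity
  rw [pi_norm_le_iff_of_nonneg (by positivity)]
  intro i
  simp only [gp, Pi.sub_apply, Real.norm_eq_abs]
  rw [← sub_div, abs_div, abs_of_pos hM']
  gcongr
  exact_mod_cast h i

lemma gp_neg {n : ℕ} (M : ℕ) (z : Fin n → ℤ) : gp M (-z) = - gp M z := by
  funext i; simp [gp, neg_div]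

lemma gp_le {n : ℕ} (M : ℕ) (hM : 0 < M) (z : Fin n → ℤ) (h : ∀ i, |z i| ≤ 2 * M) :
    ‖gp M z‖ ≤ 1 := by
  have hM' : (0 : ℝ) < 2 * M := by positivity
  rw [pi_norm_le_iff_of_nonneg zero_le_one]
  intro i
  simp only [gp, Real.norm_eq_abs]
  rw [abs_div, abs_of_pos hM', div_le_one hM']
  exact_mod_cast h i

lemma gp_Bd {n : ℕ} (M : ℕ) (hM : 0 < M) (z : Fin n → ℤ) (h : Bd M z) : ‖gp M z‖ = 1 := by
  apply le_antisymm (gp_le M hM z h.1)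
  obtain ⟨i, hi⟩ := h.2
  have hM' : (0 : ℝ) < 2 * M := by positivity
  refine le_trans ?_ (norm_le_pi_norm _ i)
  simp only [gp, Real.norm_eq_abs]
  rw [abs_div, abs_of_pos hM', le_div_iff₀ hM', one_mul]
  exact_mod_cast hi.ge

/-- Borsuk–Ulam. -/
lemma borsuk (d : ℕ) (h : (Fin (d + 2) → ℝ) → (Fin (d + 1) → ℝ)) (hc : Continuous h)
    (hodd : ∀ x, ‖x‖ = 1 → h (-x) = - h x) : ∃ x, ‖x‖ = 1 ∧ h x = 0 := by
  by_contra hcon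
  push Not at hcon
  obtain ⟨δ, hδ, hu⟩ := lab_unif h hc (Metric.sphere 0 1) (isCompact_sphere _ _)
    (fun x hx => hcon x (by simpa using hx))
  obtain ⟨M, hM⟩ := exists_nat_gt (1 / δ)
  have hM0 : 0 < M := by
    have : (0 : ℝ) < M := lt_trans (by positivity) hM
    exact_mod_cast this
  have hM1 : 1 / (2 * (M : ℝ)) < δ := by
    have : (0 : ℝ) < M := by exact_mod_cast hM0
    rw [div_lt_iff₀ (by positivity)]
    rw [div_lt_iff₀ hδ] at hM
    nlinarith
  have hf := fan_label M (d + 1) (fun z => lab (h (gp M z))) true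
    (fun z hz => by
      have := gp_Bd M hM0 z hz
      simp only [gp_neg, hodd _ this]
      exact lab_neg _ (hcon _ this))
    (fun x y hx hy hxy => hu _ (by simpa using gp_Bd M hM0 x hx) _
      (by simpa using gp_Bd M hM0 y hy) (lt_of_le_of_lt (gp_near M hM0 x y hxy) hM1))
  have hz : Av (fun z => lab (h (gp M z))) (d + 1) true = fun _ => 0 := by
    funext z
    exact Av_long _ _ _ _ (d + 1) le_rfl (fun z => lab_lt _)
  rw [hz] at hf
  unfold Cs at hf
  rw [Finset.sum_eq_zero (fun z _ => bd_const 0 z)] at hf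
  exact absurd hf (by decide)


/-! ### Part 5: parity of the number of zeros -/

open Filter Topology in
lemma common_radius {X : Type} (Z : Finset X) (P : X → ℝ → Prop)
    (h : ∀ x ∈ Z, ∃ ε > 0, ∀ r, 0 < r → r ≤ ε → P x r) : ∃ r > 0, ∀ x ∈ Z, P x r := by
  have : ∀ᶠ r in 𝓝[>] (0 : ℝ), ∀ x ∈ Z, P x r := by
    rw [Filter.eventually_all_finset]
    intro x hx
    obtain ⟨ε, hε, h⟩ := h x hx
    filter_upwards [Ioc_mem_nhdsGT hε] with r hr using h r hr.1 hr.2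
  obtain ⟨r, hr, hr0⟩ := (this.and self_mem_nhdsWithin).exists
  exact ⟨r, hr0, hr⟩

/-- cutoff -/
noncomputable def cut (m : ℝ) (s : ℝ) : ℝ := max 0 (min 1 (2 - m * s))

lemma cut_nonneg (m s : ℝ) : 0 ≤ cut m s := le_max_left _ _
lemma cut_le (m s : ℝ) : cut m s ≤ 1 := max_le zero_le_one (min_le_left _ _)
lemma cut_zero (m s : ℝ) (h : 2 ≤ m * s) : cut m s = 0 :=
  max_eq_left (le_trans (min_le_right _ _) (by linarith))
lemma cut_one (m s : ℝ) (h : m * s ≤ 1) : cut m s = 1 := by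
  unfold cut
  rw [min_eq_left (by linarith), max_eq_right zero_le_one]
lemma cut_cont (m : ℝ) : Continuous (cut m) := by unfold cut; fun_prop

lemma deg_odd (d : ℕ) (g : (Fin (d + 1) → ℝ) → (Fin (d + 1) → ℝ)) (hc : Continuous g)
    (Z : Finset (Fin (d + 1) → ℝ)) (hZ : ∀ x, ‖x‖ ≤ 1 → (g x = 0 ↔ x ∈ Z))
    (hZin : ∀ x ∈ Z, ‖x‖ < 1) (hodd : ∀ x, ‖x‖ = 1 → g (-x) = - g x)
    (hinj : ∀ x ∈ Z, ∃ ε > 0, Set.InjOn g (Metric.ball x ε ∩ Metric.closedBall 0 1)) :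
    Odd Z.card := by
  classical
  -- choose a radius
  obtain ⟨r, hr0, hr⟩ := common_radius Z (fun x r => Set.InjOn g (Metric.ball x r) ∧ ‖x‖ + r < 1 ∧
      ∀ y ∈ Z, y ≠ x → 2 * r ≤ ‖x - y‖) (by
    intro x hx
    obtain ⟨ε, hε, h1⟩ := hinj x hx
    obtain ⟨η, hη, h2⟩ := common_radius Z (fun y r => y ≠ x → 2 * r ≤ ‖x - y‖) (by
      intro y hy
      by_cases hyx : y = x
      · exact ⟨1, one_pos, fun r _ _ h => absurd hyx h⟩
      · have : 0 < ‖x - y‖ := norm_pos_iff.2 (sub_ne_zero.2 (Ne.symm hyx))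
        exact ⟨‖x - y‖ / 2, by positivity, fun r _ h _ => by linarith⟩)
    have h3 := hZin x hx
    refine ⟨min (min ε η) ((1 - ‖x‖) / 2), lt_min (lt_min hε hη) (by linarith), ?_⟩
    intro r hr hle
    have a1 : r ≤ ε := hle.trans ((min_le_left _ _).trans (min_le_left _ _))
    have a2 : r ≤ η := hle.trans ((min_le_left _ _).trans (min_le_right _ _))
    have a3 : r ≤ (1 - ‖x‖) / 2 := hle.trans (min_le_right _ _)
    refine ⟨h1.mono ?_, by linarith, fun y hy hyx => by linarith [h2 y hy hyx]⟩
    intro y hy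
    refine ⟨Metric.ball_subset_ball a1 hy, ?_⟩
    rw [Metric.mem_ball, dist_eq_norm] at hy
    rw [mem_closedBall_zero_iff]
    have : ‖y‖ ≤ ‖y - x‖ + ‖x‖ := by simpa using norm_add_le (y - x) x
    linarith)
  obtain ⟨m, hm⟩ := exists_nat_gt (8 / r)
  have hm0 : (0 : ℝ) < m := lt_trans (by positivity) hm
  have hm0' : 0 < m := by exact_mod_cast hm0
  have hmr : 8 < m * r := by rwa [div_lt_iff₀ hr0] at hm
  -- the centers
  let c : (Fin (d + 1) → ℝ) → Fin (d + 1) → ℝ := fun x i => (round (m * x i) : ℝ) / m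
  have hcx : ∀ x, m * ‖x - c x‖ ≤ 1 / 2 := by
    intro x
    have : ‖x - c x‖ ≤ 1 / 2 / m := by
      rw [pi_norm_le_iff_of_nonneg (by positivity)]
      intro i
      have h1 := abs_sub_round (m * x i)
      have h2 : (x - c x) i = (m * x i - round (m * x i)) / m := by
        simp only [c, Pi.sub_apply]; field_simp
      rw [h2, Real.norm_eq_abs, abs_div, abs_of_pos hm0]
      gcongr
    rw [le_div_iff₀ hm0] at this
    linarith
  let Pm : (Fin (d + 1) → ℝ) → (Fin (d + 1) → ℝ) → (Fin (d + 1) → ℝ) := fun x y =>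
    x + cut m ‖y - c x‖ • (c x + (c x - y) - x)
  have hPm0 : ∀ x y, 2 ≤ m * ‖y - c x‖ → Pm x y = x := by
    intro x y h
    simp only [Pm, cut_zero _ _ h, zero_smul, add_zero]
  have hPc : ∀ x, Continuous (Pm x) := by
    intro x
    have := cut_cont m
    simp only [Pm]
    fun_prop
  let G : (Fin (d + 1) → ℝ) → (Fin (d + 1) → ℝ) := fun y => g y - ∑ x ∈ Z, g (Pm x y)
  have hGc : Continuous G := by
    apply hc.sub
    exact continuous_finsetSum _ (fun x _ => hc.comp (hPc x))
  have hgZ : ∀ x ∈ Z, g x = 0 := fun x hx => (hZ x (hZin x hx).le).2 hx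
  -- G away from the holes
  have hG0 : ∀ y, (∀ x ∈ Z, 2 ≤ m * ‖y - c x‖) → G y = g y := by
    intro y hy
    simp only [G]
    rw [Finset.sum_eq_zero, sub_zero]
    intro x hx
    rw [hPm0 x y (hy x hx), hgZ x hx]
  have hsepc : ∀ x ∈ Z, ∀ x' ∈ Z, x' ≠ x → 15 ≤ m * ‖c x - c x'‖ := by
    intro x hx x' hx' hne
    have h1 := (hr x hx).2.2 x' hx' hne
    have h2 := hcx x
    have h3 := hcx x'
    have h4 : ‖x - x'‖ ≤ ‖x - c x‖ + ‖c x - c x'‖ + ‖x' - c x'‖ := by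
      have e : x - x' = (x - c x) + (c x - c x') + (c x' - x') := by abel
      rw [e, norm_sub_rev x' (c x')]
      exact norm_add₃_le
    nlinarith
  have hG1 : ∀ x ∈ Z, ∀ y, m * ‖y - c x‖ ≤ 2 → G y = g y - g (Pm x y) := by
    intro x hx y hy
    simp only [G]
    rw [Finset.sum_eq_single_of_mem x hx]
    intro x' hx' hne
    rw [hPm0 x' y, hgZ x' hx']
    have h1 := hsepc x hx x' hx' hne
    have h4 : ‖c x - c x'‖ ≤ ‖y - c x‖ + ‖y - c x'‖ := by
      have e : c x - c x' = (c x - y) + (y - c x') := by abel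
      rw [e, norm_sub_rev y (c x)]
      exact norm_add_le _ _
    nlinarith
  -- oddness of G at the holes
  have hGodd : ∀ x ∈ Z, ∀ u, m * ‖u‖ = 1 → G (c x + -u) = - G (c x + u) := by
    intro x hx u hu
    rw [hG1 x hx _ (by simp [hu]), hG1 x hx _ (by simp [hu])]
    have e1 : Pm x (c x + u) = c x + -u := by
      simp only [Pm]
      rw [cut_one _ _ (by simp [hu]), one_smul]; abel
    have e2 : Pm x (c x + -u) = c x + u := by
      simp only [Pm]
      rw [cut_one _ _ (by simp [hu]), one_smul]; abel
    rw [e1, e2]; abel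
  have hball : ∀ x ∈ Z, ∀ y, m * ‖y - c x‖ ≤ 2 → ‖y - x‖ < r / 2 := by
    intro x hx y hy
    have h2 := hcx x
    have h4 : ‖y - x‖ ≤ ‖y - c x‖ + ‖x - c x‖ := by
      have e : y - x = (y - c x) + (c x - x) := by abel
      rw [e, norm_sub_rev x (c x)]
      exact norm_add_le _ _
    nlinarith
  have hcxin : ∀ x ∈ Z, m * ‖c x‖ + 4 ≤ m := by
    intro x hx
    have h2 := hcx x
    have h1 := (hr x hx).2.1
    have h4 : ‖c x‖ ≤ ‖x‖ + ‖x - c x‖ := by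
      have e : c x = x + (c x - x) := by abel
      rw [norm_sub_rev x (c x)]
      nth_rewrite 1 [e]
      exact norm_add_le _ _
    nlinarith
  let E : Set (Fin (d + 1) → ℝ) := {y | ‖y‖ ≤ 1 ∧ ∀ x ∈ Z, 1 ≤ m * ‖y - c x‖}
  have hEc : IsCompact E := by
    have h1 : IsClosed {y : Fin (d + 1) → ℝ | ∀ x ∈ Z, 1 ≤ m * ‖y - c x‖} := by
      simp only [Set.ofPred_forall]
      refine isClosed_iInter fun x => isClosed_iInter fun _ => isClosed_le (by fun_prop) (by fun_prop)
    have h2 := (isCompact_closedBall (0 : Fin (d + 1) → ℝ) 1).inter_right h1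
    have hEeq : E = Metric.closedBall 0 1 ∩ {y | ∀ x ∈ Z, 1 ≤ m * ‖y - c x‖} := by
      apply Set.ext
      intro y
      rw [Set.mem_inter_iff, mem_closedBall_zero_iff]
      exact Iff.rfl
    rw [hEeq]
    exact h2
  have hE0 : ∀ y ∈ E, G y ≠ 0 := by
    rintro y ⟨hy1, hy2⟩ h0
    by_cases hfar : ∀ x ∈ Z, 2 ≤ m * ‖y - c x‖
    · rw [hG0 y hfar] at h0
      have h1 := (hZ y hy1).1 h0
      have h2 := hfar y h1
      have h3 := hcx y
      linarith
    · push Not at hfar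
      obtain ⟨x, hx, hlt⟩ := hfar
      rw [hG1 x hx y hlt.le, sub_eq_zero] at h0
      have hyx := hball x hx y hlt.le
      have hyx' := hball x hx (c x + (c x - y)) (by
        have : c x + (c x - y) - c x = -(y - c x) := by abel
        rw [this, norm_neg]; exact hlt.le)
      have ht0 := cut_nonneg m ‖y - c x‖
      have ht1 := cut_le m ‖y - c x‖
      have hP : Pm x y ∈ Metric.ball x r := by
        rw [Metric.mem_ball, dist_eq_norm]
        simp only [Pm, add_sub_cancel_left]
        rw [norm_smul, Real.norm_eq_abs, abs_of_nonneg ht0]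
        nlinarith [norm_nonneg (c x + (c x - y) - x)]
      have heq := (hr x hx).1 (by rw [Metric.mem_ball, dist_eq_norm]; linarith) hP h0
      set t := cut m ‖y - c x‖ with ht
      have heq2 : (1 + t) • (y - c x) = (1 - t) • (x - c x) := by
        have : y = x + t • (c x + (c x - y) - x) := heq
        have h5 : y - c x = (x - c x) + t • (c x + (c x - y) - x) := by
          nth_rewrite 1 [this]; abel
        rw [add_smul, one_smul]
        nth_rewrite 1 [h5]
        module
      have h6 := congrArg norm heq2
      rw [norm_smul, norm_smul, Real.norm_eq_abs, Real.norm_eq_abs, abs_of_nonneg (by linarith),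
        abs_of_nonneg (by linarith)] at h6
      have h7 : ‖y - c x‖ ≤ ‖x - c x‖ := by
        nlinarith [norm_nonneg (y - c x), norm_nonneg (x - c x)]
      have h8 := hcx x
      have h9 := hy2 x hx
      nlinarith
  obtain ⟨δ, hδ, hu⟩ := lab_unif G hGc E hEc hE0
  obtain ⟨k, hk⟩ := exists_nat_gt (1 / δ)
  have hk0 : (0 : ℝ) < k := lt_trans (by positivity) hk
  have hk0' : 0 < k := by exact_mod_cast hk0
  let M := m * k
  have hM0 : 0 < M := Nat.mul_pos hm0' hk0'
  have hM0' : (0 : ℝ) < M := by exact_mod_cast hM0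
  have hMr : (M : ℝ) = m * k := by simp [M]
  have hM1 : 1 / (2 * (M : ℝ)) < δ := by
    rw [div_lt_iff₀ (by positivity), hMr]
    rw [div_lt_iff₀ hδ] at hk
    have : (1 : ℝ) ≤ m := by exact_mod_cast hm0'
    nlinarith
  let C : (Fin (d + 1) → ℝ) → Fin (d + 1) → ℤ := fun x i => 2 * (k * round (m * x i))
  have hgpC : ∀ x, gp M (C x) = c x := by
    intro x; funext i
    simp only [gp, C, c, hMr]
    push_cast
    field_simp
  have hgpadd : ∀ a b : Fin (d + 1) → ℤ, gp M (a + b) = gp M a + gp M b := by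
    intro a b; funext i; simp [gp, add_div]
  have hgpsub : ∀ a b : Fin (d + 1) → ℤ, gp M (a - b) = gp M a - gp M b := by
    intro a b; funext i; simp [gp, sub_div]
  have hgpi : ∀ (a : Fin (d + 1) → ℤ) i, |(gp M a i)| * (2 * M) = |(a i : ℝ)| := by
    intro a i
    simp only [gp]
    rw [abs_div, abs_of_pos (by positivity : (0 : ℝ) < 2 * M)]
    field_simp
  -- a norm lower bound is attained at a coordinate
  have hcoord : ∀ (a : Fin (d + 1) → ℤ) (q : ℤ), (q : ℝ) ≤ ‖gp M a‖ * (2 * M) → ∃ i, q ≤ |a i| := by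
    intro a q hq
    obtain ⟨i, hi, _⟩ := lab_spec (gp M a)
    refine ⟨i, ?_⟩
    rw [← hi, hgpi] at hq
    exact_mod_cast hq
  have hcoord' : ∀ (a : Fin (d + 1) → ℤ) i, (|a i| : ℝ) ≤ ‖gp M a‖ * (2 * M) := by
    intro a i
    rw [← hgpi]
    gcongr
    exact norm_le_pi_norm (gp M a) i
  have hGdE : ∀ z, Gd Z C M k z → gp M z ∈ E := by
    intro z hz
    refine ⟨gp_le M hM0 z hz.1, fun x hx => ?_⟩
    obtain ⟨i, hi⟩ := hz.2 x hx
    have h1 := hcoord' (z - C x) i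
    rw [hgpsub, hgpC] at h1
    have h2 : (2 * k : ℝ) ≤ |((z - C x) i : ℝ)| := by
      rw [Pi.sub_apply]; exact_mod_cast hi
    rw [hMr] at h1
    have h3 := h2.trans h1
    nlinarith
  have hMM : ∀ x : Fin (d + 1) → ℤ, ‖gp M x‖ * (2 * M) = m * ‖gp M x‖ * (2 * k) := by
    intro x; rw [hMr]; ring
  refine holes Z C M k (fun z => lab (G (gp M z))) (fun x i => even_two_mul _)
    (fun z => lab_lt _) ?_ ?_ ?_ ?_ ?_
  · intro x hx i
    have h1 := hcoord' (C x) i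
    have h2 := hcxin x hx
    rw [hMM, hgpC] at h1
    have h3 : (|C x i| : ℝ) + 2 * k ≤ 2 * M := by rw [hMr]; nlinarith
    exact_mod_cast h3
  · intro x hx y hy hxy
    have h1 := hsepc x hx y hy (Ne.symm hxy)
    have := hcoord (C x - C y) (4 * k) (by
      rw [hMM, hgpsub, hgpC, hgpC]; push_cast; nlinarith)
    exact this
  · intro x y hx hy hxy hl
    exact hu _ (hGdE x hx) _ (hGdE y hy) (lt_of_le_of_lt (gp_near M hM0 x y hxy) hM1) hl
  · intro z hz
    have h1 := gp_Bd M hM0 z hz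
    have hfar : ∀ y, ‖y‖ = 1 → ∀ x ∈ Z, 2 ≤ m * ‖y - c x‖ := by
      intro y hy x hx
      have h2 := hcxin x hx
      have h3 := norm_sub_norm_le y (c x)
      rw [hy] at h3
      nlinarith
    have h2 : ‖-gp M z‖ = 1 := by rw [norm_neg, h1]
    simp only [gp_neg]
    rw [hG0 _ (hfar _ h1), hG0 _ (hfar _ h2), hodd _ h1]
    apply lab_neg
    intro h0
    have := hZin _ ((hZ _ h1.le).1 h0)
    linarith
  · intro x hx z hz
    have hn : m * ‖gp M z‖ = 1 := by
      have h1 : ‖gp M z‖ * (2 * M) = 2 * k := by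
        obtain ⟨i, hi, _⟩ := lab_spec (gp M z)
        apply le_antisymm
        · rw [← hi, hgpi]
          exact_mod_cast hz.1 i
        · obtain ⟨j, hj⟩ := hz.2
          refine le_trans (le_of_eq ?_) (hcoord' z j)
          exact_mod_cast hj.symm
      rw [hMM] at h1
      have : (0 : ℝ) < 2 * k := by positivity
      nlinarith
    simp only [hgpadd, hgpC, gp_neg]
    rw [hGodd x hx _ hn]
    apply lab_neg
    apply hE0
    refine ⟨?_, fun x' hx' => ?_⟩
    · have h2 := hcxin x hx
      have h3 := norm_add_le (c x) (gp M z)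
      nlinarith
    · by_cases hxx : x' = x
      · subst hxx; simp [hn]
      · have h2 := hsepc x hx x' hx' hxx
        have h4 : ‖c x - c x'‖ ≤ ‖c x + gp M z - c x'‖ + ‖gp M z‖ := by
          have e : c x - c x' = (c x + gp M z - c x') - gp M z := by abel
          nth_rewrite 1 [e]
          exact norm_sub_le _ _
        nlinarith


/-! ### Part 6: no embeddings in smaller spheres -/

lemma no_embed (d : ℕ) (j : (Fin (d + 1) → ℝ) → (Fin d → ℝ)) (hc : Continuous j) :
    ∃ x y, ‖x‖ ≤ 1 ∧ ‖y‖ ≤ 1 ∧ x ≠ y ∧ j x = j y := by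
  have key : ∃ x : Fin (d + 1) → ℝ, ‖x‖ = 1 ∧ j x - j (-x) = 0 := by
    cases d with
    | zero => exact ⟨fun _ => 1, by simp, Subsingleton.elim _ _⟩
    | succ d =>
      refine borsuk d (fun x => j x - j (-x)) (by fun_prop) ?_
      intro x _
      simp
  obtain ⟨x, hx, h⟩ := key
  refine ⟨x, -x, hx.le, by rw [norm_neg]; exact hx.le, ?_, sub_eq_zero.1 h⟩
  intro he
  rw [self_eq_neg] at he
  simp [he] at hx

lemma no_embed_sphere (d : ℕ) (j : (Fin (d + 1) → ℝ) → EuclideanSpace ℝ (Fin (d + 1)))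
    (hc : Continuous j) (hs : ∀ x, ‖j x‖ = 1) :
    ∃ x y, ‖x‖ ≤ 1 ∧ ‖y‖ ≤ 1 ∧ x ≠ y ∧ j x = j y := by
  have hp : j 0 ≠ 0 := by
    intro h; have := hs 0; simp [h] at this
  obtain ⟨l, hl⟩ : ∃ l, j 0 l ≠ 0 := by
    by_contra! h
    exact hp (by ext i; exact h i)
  have hcl : Continuous fun x => j x l * j 0 l := by fun_prop
  have hpos : 0 < j 0 l * j 0 l := mul_self_pos.2 hl
  have hev := hcl.continuousAt.eventually (lt_mem_nhds hpos)
  obtain ⟨ε, hε, hball⟩ := Metric.eventually_nhds_iff.1 hev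
  set r := min 1 (ε / 2) with hr
  have hr0 : 0 < r := lt_min one_pos (by linarith)
  have hr1 : r ≤ 1 := min_le_left _ _
  have hr2 : r ≤ ε / 2 := min_le_right _ _
  have hb : ∀ x : Fin (d + 1) → ℝ, ‖x‖ ≤ 1 → ‖r • x‖ ≤ r := by
    intro x hx
    rw [norm_smul, Real.norm_eq_abs, abs_of_pos hr0]
    nlinarith
  obtain ⟨x, y, hx, hy, hxy, h⟩ := no_embed d (fun x i => j (r • x) (l.succAbove i)) (by fun_prop)
  refine ⟨r • x, r • y, (hb x hx).trans hr1, (hb y hy).trans hr1, ?_, ?_⟩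
  · intro he
    exact hxy (smul_right_injective _ hr0.ne' he)
  · have h1 : 0 < j (r • x) l * j 0 l := hball (by
      rw [dist_zero_right]; linarith [hb x hx])
    have h2 : 0 < j (r • y) l * j 0 l := hball (by
      rw [dist_zero_right]; linarith [hb y hy])
    have hi : ∀ i, j (r • x) (l.succAbove i) = j (r • y) (l.succAbove i) := fun i => congrFun h i
    have s1 := EuclideanSpace.real_norm_sq_eq (j (r • x))
    have s2 := EuclideanSpace.real_norm_sq_eq (j (r • y))
    rw [hs, Fin.sum_univ_succAbove _ l] at s1
    rw [hs, Fin.sum_univ_succAbove _ l] at s2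
    simp only [hi] at s1
    have hsq : j (r • x) l ^ 2 = j (r • y) l ^ 2 := by linarith
    have hl' : j (r • x) l = j (r • y) l := by
      rcases sq_eq_sq_iff_eq_or_eq_neg.1 hsq with h | h
      · exact h
      · rw [h] at h1; nlinarith
    ext i
    rcases Fin.eq_self_or_eq_succAbove l i with rfl | ⟨i, rfl⟩
    · exact hl'
    · exact hi i

/-! ### Part 7: counting zeros on the sphere -/

/-- unnormalized parametrization of the upper hemisphere -/
noncomputable def Qm (d : ℕ) (x : Fin (d + 1) → ℝ) : EuclideanSpace ℝ (Fin (d + 2)) :=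
  WithLp.toLp 2 (Fin.cons (1 - ‖x‖) x)

lemma Qm_zero (d : ℕ) (x : Fin (d + 1) → ℝ) : Qm d x 0 = 1 - ‖x‖ := rfl
lemma Qm_succ (d : ℕ) (x : Fin (d + 1) → ℝ) (i : Fin (d + 1)) : Qm d x i.succ = x i := rfl

lemma Qm_cont (d : ℕ) : Continuous (Qm d) := by
  unfold Qm
  refine (PiLp.continuous_toLp 2 _).comp (continuous_pi ?_)
  intro i
  refine Fin.cases ?_ (fun i => ?_) i
  · simp only [Fin.cons_zero]; fun_prop
  · simp only [Fin.cons_succ]; fun_prop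

lemma Qm_ne (d : ℕ) (x : Fin (d + 1) → ℝ) : Qm d x ≠ 0 := by
  intro h
  have hx : x = 0 := by
    funext i
    rw [← Qm_succ d x i, h]; rfl
  have := Qm_zero d x
  rw [h, hx] at this
  simp at this

/-- parametrization of the upper hemisphere -/
noncomputable def qm (d : ℕ) (x : Fin (d + 1) → ℝ) : EuclideanSpace ℝ (Fin (d + 2)) :=
  ‖Qm d x‖⁻¹ • Qm d x

lemma qm_cont (d : ℕ) : Continuous (qm d) := by
  unfold qm
  exact ((Qm_cont d).norm.inv₀ (fun x => norm_ne_zero_iff.2 (Qm_ne d x))).smul (Qm_cont d)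

lemma qm_sphere (d : ℕ) (x : Fin (d + 1) → ℝ) : qm d x ∈ Metric.sphere 0 1 := by
  rw [mem_sphere_zero_iff_norm, qm, norm_smul, norm_inv, norm_norm,
    inv_mul_cancel₀ (norm_ne_zero_iff.2 (Qm_ne d x))]

lemma qm_odd (d : ℕ) (x : Fin (d + 1) → ℝ) (hx : ‖x‖ = 1) : qm d (-x) = - qm d x := by
  have : Qm d (-x) = - Qm d x := by
    ext i
    refine Fin.cases ?_ (fun i => ?_) i
    · rw [PiLp.neg_apply, Qm_zero, Qm_zero, norm_neg, hx]; simp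
    · rw [PiLp.neg_apply, Qm_succ, Qm_succ]; rfl
  rw [qm, qm, this, norm_neg, smul_neg]

lemma Qm_smul_inj (d : ℕ) (x y : Fin (d + 1) → ℝ) (t : ℝ) (ht : 0 ≤ t)
    (h : Qm d x = t • Qm d y) : x = y := by
  have hx : x = t • y := by
    funext i
    rw [← Qm_succ d x i, h]; rfl
  have h0 : 1 - ‖x‖ = t * (1 - ‖y‖) := by
    rw [← Qm_zero d x, h]; rfl
  have hn : ‖x‖ = t * ‖y‖ := by
    rw [hx, norm_smul, Real.norm_eq_abs, abs_of_nonneg ht]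
  have : t = 1 := by linarith
  rw [hx, this, one_smul]

lemma qm_inj (d : ℕ) : Function.Injective (qm d) := by
  intro x y h
  have hx := norm_ne_zero_iff.2 (Qm_ne d x)
  refine Qm_smul_inj d x y (‖Qm d x‖ * ‖Qm d y‖⁻¹) (by positivity) ?_
  have h2 : ‖Qm d x‖ • qm d x = ‖Qm d x‖ • qm d y := by rw [h]
  rw [qm, qm, smul_smul, smul_smul, mul_inv_cancel₀ hx, one_smul] at h2
  exact h2

lemma qm_surj (d : ℕ) (p : EuclideanSpace ℝ (Fin (d + 2))) (hp : ‖p‖ = 1) (h0 : 0 < p 0) :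
    ∃ x, ‖x‖ ≤ 1 ∧ qm d x = p := by
  let p' : Fin (d + 1) → ℝ := fun i => p i.succ
  set s := ‖p'‖ + p 0 with hs
  have hs0 : 0 < s := by positivity
  have hnx : ‖s⁻¹ • p'‖ = s⁻¹ * ‖p'‖ := by
    rw [norm_smul, Real.norm_eq_abs, abs_of_pos (by positivity)]
  have hQ : Qm d (s⁻¹ • p') = s⁻¹ • p := by
    ext i
    refine Fin.cases ?_ (fun i => ?_) i
    · rw [PiLp.smul_apply, Qm_zero, hnx, smul_eq_mul]
      field_simp
      rw [hs]; ring
    · rw [PiLp.smul_apply, Qm_succ]; rfl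
  refine ⟨s⁻¹ • p', ?_, ?_⟩
  · rw [hnx, inv_mul_le_iff₀ hs0, hs]; linarith
  · rw [qm, hQ, norm_smul, hp, smul_smul, Real.norm_eq_abs, abs_of_pos (by positivity), mul_one,
      inv_inv, mul_inv_cancel₀ hs0.ne', one_smul]

lemma qm_zero (d : ℕ) (x : Fin (d + 1) → ℝ) : qm d x 0 = ‖Qm d x‖⁻¹ * (1 - ‖x‖) := rfl

open Topology in
lemma sphere_count_aux (d : ℕ) (G : EuclideanSpace ℝ (Fin (d + 2)) → (Fin (d + 1) → ℝ))
    (hG : ContinuousOn G (Metric.sphere 0 1))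
    (hodd : ∀ p ∈ Metric.sphere (0 : EuclideanSpace ℝ (Fin (d + 2))) 1, G (-p) = - G p)
    (hfin : {p | p ∈ Metric.sphere 0 1 ∧ G p = 0}.Finite)
    (hne : ∀ p ∈ Metric.sphere 0 1, G p = 0 → p 0 ≠ 0)
    (hinj : ∀ p ∈ Metric.sphere 0 1, G p = 0 → ∃ U ∈ 𝓝[Metric.sphere 0 1] p, Set.InjOn G U) :
    ∃ k : ℕ, Odd k ∧ {p | p ∈ Metric.sphere 0 1 ∧ G p = 0}.ncard = 2 * k := by
  classical
  set W := {p | p ∈ Metric.sphere 0 1 ∧ G p = 0} with hW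
  have hZf : {x | ‖x‖ ≤ 1 ∧ qm d x ∈ W}.Finite :=
    (hfin.preimage (qm_inj d).injOn).subset (fun x hx => hx.2)
  have hQpos : ∀ x, 0 < ‖Qm d x‖⁻¹ := fun x => inv_pos.2 (norm_pos_iff.2 (Qm_ne d x))
  have hZlt : ∀ x, ‖x‖ ≤ 1 → qm d x ∈ W → ‖x‖ < 1 := by
    intro x hx hw
    refine lt_of_le_of_ne hx (fun h => hne _ hw.1 hw.2 ?_)
    rw [qm_zero, h]; simp
  have hodd1 := deg_odd d (fun x => G (qm d x))
    (hG.comp_continuous (qm_cont d) (qm_sphere d)) hZf.toFinset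
    (by
      intro x hx
      rw [Set.Finite.mem_toFinset]
      exact ⟨fun h => ⟨hx, qm_sphere d x, h⟩, fun h => h.2.2⟩)
    (by
      intro x hx
      rw [Set.Finite.mem_toFinset] at hx
      exact hZlt x hx.1 hx.2)
    (by
      intro x hx
      show G (qm d (-x)) = - G (qm d x)
      rw [qm_odd d x hx, hodd _ (qm_sphere d x)])
    (by
      intro x hx
      rw [Set.Finite.mem_toFinset] at hx
      obtain ⟨U, hU, hi⟩ := hinj _ hx.2.1 hx.2.2
      have ht : Filter.Tendsto (qm d) (𝓝 x) (𝓝[Metric.sphere 0 1] (qm d x)) :=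
        tendsto_nhdsWithin_iff.2 ⟨(qm_cont d).continuousAt, Filter.Eventually.of_forall (qm_sphere d)⟩
      obtain ⟨ε, hε, hb⟩ := Metric.mem_nhds_iff.1 (ht hU)
      refine ⟨ε, hε, ?_⟩
      intro a ha b hb' hab
      exact qm_inj d (hi (hb ha.1) (hb hb'.1) hab))
  refine ⟨hZf.toFinset.card, hodd1, ?_⟩
  have hWp : {p | p ∈ W ∧ 0 < p 0} = qm d '' {x | ‖x‖ ≤ 1 ∧ qm d x ∈ W} := by
    apply Set.ext
    intro p
    constructor
    · rintro ⟨hp, h0⟩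
      obtain ⟨x, hx, rfl⟩ := qm_surj d p (mem_sphere_zero_iff_norm.1 hp.1) h0
      exact ⟨x, ⟨hx, hp⟩, rfl⟩
    · rintro ⟨x, ⟨hx, hp⟩, rfl⟩
      refine ⟨hp, ?_⟩
      rw [qm_zero]
      exact mul_pos (hQpos x) (by linarith [hZlt x hx hp])
  have hWneg : ∀ p ∈ W, -p ∈ W := by
    intro p hp
    refine ⟨by simpa using hp.1, ?_⟩
    rw [hodd p hp.1, hp.2, neg_zero]
  have hWm : {p | p ∈ W ∧ p 0 < 0} = (fun p => -p) '' {p | p ∈ W ∧ 0 < p 0} := by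
    apply Set.ext
    intro p
    constructor
    · rintro ⟨hp, h0⟩
      exact ⟨-p, ⟨hWneg p hp, by rw [PiLp.neg_apply]; linarith⟩, neg_neg p⟩
    · rintro ⟨p, ⟨hp, h0⟩, rfl⟩
      exact ⟨hWneg p hp, by rw [PiLp.neg_apply]; linarith⟩
  have hWu : W = {p | p ∈ W ∧ 0 < p 0} ∪ {p | p ∈ W ∧ p 0 < 0} := by
    apply Set.ext
    intro p
    constructor
    · intro hp
      rcases lt_or_gt_of_ne (hne p hp.1 hp.2) with h | h
      · exact Or.inr ⟨hp, h⟩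
      · exact Or.inl ⟨hp, h⟩
    · rintro (h | h)
      · exact h.1
      · exact h.1
  refine (congrArg Set.ncard hWu).trans ?_
  have hdis : Disjoint {p | p ∈ W ∧ 0 < p 0} {p | p ∈ W ∧ p 0 < 0} := by
    rw [Set.disjoint_left]
    rintro p ⟨_, h1⟩ ⟨_, h2⟩
    linarith
  rw [Set.ncard_union_eq hdis (hfin.subset (fun p hp => hp.1)) (hfin.subset (fun p hp => hp.1)),
    hWm, Set.ncard_image_of_injective _ neg_injective, hWp,
    Set.ncard_image_of_injective _ (qm_inj d), Set.ncard_eq_toFinset_card _ hZf]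
  ring


open Topology in
lemma sphere_count_succ (d : ℕ) (G : EuclideanSpace ℝ (Fin (d + 2)) → (Fin (d + 1) → ℝ))
    (hG : ContinuousOn G (Metric.sphere 0 1))
    (hodd : ∀ p ∈ Metric.sphere (0 : EuclideanSpace ℝ (Fin (d + 2))) 1, G (-p) = - G p)
    (hfin : {p | p ∈ Metric.sphere 0 1 ∧ G p = 0}.Finite)
    (hinj : ∀ p ∈ Metric.sphere 0 1, G p = 0 → ∃ U ∈ 𝓝[Metric.sphere 0 1] p, Set.InjOn G U) :
    ∃ k : ℕ, Odd k ∧ {p | p ∈ Metric.sphere 0 1 ∧ G p = 0}.ncard = 2 * k := by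
  classical
  set W := {p | p ∈ Metric.sphere 0 1 ∧ G p = 0} with hW
  have : Finite W := hfin
  obtain ⟨l, hl⟩ := Module.exists_dual_forall_apply_ne_zero (K := ℝ)
    (fun p : W => (p : EuclideanSpace ℝ (Fin (d + 2)))) (by
      rintro ⟨p, hp, _⟩ h
      have h' : p = 0 := h
      rw [h', mem_sphere_zero_iff_norm] at hp
      simp at hp)
  let u0 := (InnerProductSpace.toDual ℝ (EuclideanSpace ℝ (Fin (d + 2)))).symm l.toContinuousLinearMap
  have hu0 : ∀ p ∈ W, inner ℝ u0 p ≠ 0 := by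
    intro p hp
    have := hl ⟨p, hp⟩
    simpa [u0] using this
  obtain ⟨u, hu1, hu⟩ : ∃ u : EuclideanSpace ℝ (Fin (d + 2)), ‖u‖ = 1 ∧ ∀ p ∈ W, inner ℝ u p ≠ 0 := by
    by_cases h0 : u0 = 0
    · refine ⟨EuclideanSpace.single 0 1, by simp, ?_⟩
      intro p hp
      exact absurd (by rw [h0, inner_zero_left]) (hu0 p hp)
    · have hn := norm_ne_zero_iff.2 h0
      refine ⟨‖u0‖⁻¹ • u0, ?_, ?_⟩
      · rw [norm_smul, norm_inv, norm_norm, inv_mul_cancel₀ hn]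
      · intro p hp
        rw [inner_smul_left]
        exact mul_ne_zero (by simpa using hn) (hu0 p hp)
  let e : EuclideanSpace ℝ (Fin (d + 2)) := EuclideanSpace.single 0 1
  have he : ‖e‖ = ‖u‖ := by rw [hu1]; simp [e]
  let R : EuclideanSpace ℝ (Fin (d + 2)) ≃ₗᵢ[ℝ] EuclideanSpace ℝ (Fin (d + 2)) :=
    Submodule.reflection (Submodule.span ℝ {e - u})ᗮ
  have hR : R e = u := Submodule.reflection_sub he
  have hRs : ∀ p, R p ∈ Metric.sphere (0 : EuclideanSpace ℝ (Fin (d + 2))) 1 ↔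
      p ∈ Metric.sphere 0 1 := by
    intro p
    rw [mem_sphere_zero_iff_norm, mem_sphere_zero_iff_norm, R.norm_map]
  have hpre : {p | p ∈ Metric.sphere 0 1 ∧ G (R p) = 0} = R ⁻¹' W := by
    apply Set.ext
    intro p
    exact and_congr_left' (hRs p).symm
  have hc : {p | p ∈ Metric.sphere 0 1 ∧ G (R p) = 0}.ncard = W.ncard := by
    rw [hpre]
    exact Set.ncard_preimage_of_injective_subset_range R.injective (by simp)
  rw [← hc]
  refine sphere_count_aux d (fun p => G (R p)) ?_ ?_ ?_ ?_ ?_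
  · exact hG.comp R.continuous.continuousOn (fun p hp => (hRs p).2 hp)
  · intro p hp
    show G (R (-p)) = - G (R p)
    rw [map_neg, hodd _ ((hRs p).2 hp)]
  · rw [hpre]
    exact hfin.preimage R.injective.injOn
  · intro p hp h0 h
    apply hu (R p) ⟨(hRs p).2 hp, h0⟩
    rw [← hR, R.inner_map_map]
    simp only [e]
    rw [EuclideanSpace.inner_single_left, h]; simp
  · intro p hp h0
    obtain ⟨U, hU, hi⟩ := hinj (R p) ((hRs p).2 hp) h0
    refine ⟨R ⁻¹' U, ?_, ?_⟩
    · have ht : Filter.Tendsto R (𝓝[Metric.sphere 0 1] p) (𝓝[Metric.sphere 0 1] (R p)) :=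
        R.continuous.continuousWithinAt.tendsto_nhdsWithin (fun p hp => (hRs p).2 hp)
      exact ht hU
    · intro a ha b hb hab
      exact R.injective (hi ha hb hab)

open Topology in
lemma sphere_count (d : ℕ) (G : EuclideanSpace ℝ (Fin (d + 1)) → (Fin d → ℝ))
    (hG : ContinuousOn G (Metric.sphere 0 1))
    (hodd : ∀ p ∈ Metric.sphere (0 : EuclideanSpace ℝ (Fin (d + 1))) 1, G (-p) = - G p)
    (hfin : {p | p ∈ Metric.sphere 0 1 ∧ G p = 0}.Finite)
    (hinj : ∀ p ∈ Metric.sphere 0 1, G p = 0 → ∃ U ∈ 𝓝[Metric.sphere 0 1] p, Set.InjOn G U) :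
    ∃ k : ℕ, Odd k ∧ {p | p ∈ Metric.sphere 0 1 ∧ G p = 0}.ncard = 2 * k := by
  cases d with
  | succ d => exact sphere_count_succ d G hG hodd hfin hinj
  | zero =>
    refine ⟨1, odd_one, ?_⟩
    have : {p | p ∈ Metric.sphere 0 1 ∧ G p = 0} =
        {EuclideanSpace.single 0 1, EuclideanSpace.single 0 (-1)} := by
      apply Set.ext
      intro p
      have h1 : G p = 0 := Subsingleton.elim _ _
      have h2 : ∀ a : ℝ, p = EuclideanSpace.single 0 a ↔ p 0 = a := by
        intro a
        constructor
        · intro h; simp [h]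
        · intro h
          ext i
          have : i = 0 := Fin.fin_one_eq_zero i
          simp [this, h]
      have h3 : ‖p‖ = |p 0| := by
        rw [EuclideanSpace.norm_eq]
        simp [Real.sqrt_sq_eq_abs]
      rw [Set.mem_insert_iff, Set.mem_singleton_iff, h2, h2]
      show p ∈ Metric.sphere 0 1 ∧ G p = 0 ↔ _
      rw [mem_sphere_zero_iff_norm, h3, abs_eq zero_le_one]
      simp [h1]
    rw [this, Set.ncard_pair]
    intro h
    have := congrArg (fun p : EuclideanSpace ℝ (Fin 1) => p 0) h
    simp at this
    norm_num at this


/-! ### Part 8: the simplicial complex -/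

set_option linter.unusedSectionVars false

section complex
variable {V : Type} [Fintype V] [DecidableEq V]

/-- support -/
noncomputable def spt (w : V → ℝ) : Finset V := Finset.univ.filter (fun v => w v ≠ 0)

lemma mem_spt (w : V → ℝ) (v : V) : v ∈ spt w ↔ w v ≠ 0 := by simp [spt]

/-- linear extension of the labeling -/
noncomputable def extF {d : ℕ} (f : V → EuclideanSpace ℝ (Fin d)) :
    (V → ℝ) →ₗ[ℝ] EuclideanSpace ℝ (Fin d) := Fintype.linearCombination ℝ f

lemma extF_apply {d : ℕ} (f : V → EuclideanSpace ℝ (Fin d)) (w : V → ℝ) :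
    extF f w = ∑ v, w v • f v := rfl

/-- closed simplex -/
def smp (σ : Finset V) : Set (V → ℝ) := {w | (∀ v, 0 ≤ w v) ∧ (∑ v, w v) = 1 ∧ ∀ v, w v ≠ 0 → v ∈ σ}

lemma captures_iff {d : ℕ} (f : V → EuclideanSpace ℝ (Fin d)) (σ : Finset V) :
    0 ∈ convexHull ℝ (f '' ↑σ) ↔ ∃ w ∈ smp σ, extF f w = 0 := by
  constructor
  · intro h
    have hsub : convexHull ℝ (f '' ↑σ) ⊆ extF f '' smp σ := by
      apply convexHull_min
      · rintro _ ⟨v, hv, rfl⟩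
        refine ⟨Pi.single v 1, ⟨?_, ?_, ?_⟩, ?_⟩
        · intro u
          by_cases h : u = v
          · subst h; simp
          · simp [h]
        · simp
        · intro u hu
          by_cases h : u = v
          · subst h; exact hv
          · simp [h] at hu
        · simp [extF]
      · apply Convex.linear_image
        rintro a ⟨a1, a2, a3⟩ b ⟨b1, b2, b3⟩ s t hs ht hst
        refine ⟨?_, ?_, ?_⟩
        · intro v
          have := a1 v
          have := b1 v
          simp only [Pi.add_apply, Pi.smul_apply, smul_eq_mul]
          positivity
        · simp only [Pi.add_apply, Pi.smul_apply, smul_eq_mul]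
          rw [Finset.sum_add_distrib, ← Finset.mul_sum, ← Finset.mul_sum, a2, b2]
          linarith
        · intro v hv
          by_contra hn
          have h1 : a v = 0 := by by_contra h; exact hn (a3 v h)
          have h2 : b v = 0 := by by_contra h; exact hn (b3 v h)
          simp [h1, h2] at hv
    exact hsub h
  · rintro ⟨w, ⟨w1, w2, w3⟩, h0⟩
    have hs : ∑ v ∈ σ, w v = 1 := by
      rw [← w2]
      apply Finset.sum_subset (Finset.subset_univ _)
      intro v _ hv
      by_contra h
      exact hv (w3 v h)
    have hs2 : ∑ v ∈ σ, w v • f v = 0 := by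
      rw [← h0, extF_apply]
      apply Finset.sum_subset (Finset.subset_univ _)
      intro v _ hv
      by_contra h
      exact hv (w3 v (fun h' => h (by rw [h', zero_smul])))
    rw [← hs2]
    exact (convex_convexHull ℝ _).sum_mem (fun v _ => w1 v) hs
      (fun v hv => subset_convexHull ℝ _ ⟨v, hv, rfl⟩)

lemma smp_inj {d : ℕ} (f : V → EuclideanSpace ℝ (Fin d)) (σ : Finset V)
    (hpos : ∀ w ∈ smp σ, extF f w = 0 → ∀ v ∈ σ, w v ≠ 0) (w : V → ℝ) (hw : w ∈ smp σ)
    (hw0 : extF f w = 0) : Set.InjOn (extF f) (smp σ) := by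
  rintro a ⟨a1, a2, a3⟩ b ⟨b1, b2, b3⟩ hab
  by_contra hne
  let δ : V → ℝ := a - b
  have hδ : ∀ v, δ v = a v - b v := fun v => rfl
  have hδs : ∑ v, δ v = 0 := by
    simp only [hδ]; rw [Finset.sum_sub_distrib, a2, b2, sub_self]
  have hδσ : ∀ v, δ v ≠ 0 → v ∈ σ := by
    intro v hv
    by_contra hn
    have h1 : a v = 0 := by by_contra h; exact hn (a3 v h)
    have h2 : b v = 0 := by by_contra h; exact hn (b3 v h)
    exact hv (by rw [hδ, h1, h2, sub_self])
  have hδF : extF f δ = 0 := by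
    show extF f (a - b) = 0
    rw [map_sub, hab, sub_self]
  have hex : ∃ v, δ v < 0 := by
    by_contra! h
    have h1 := (Finset.sum_eq_zero_iff_of_nonneg (fun v _ => h v)).1 hδs
    apply hne
    funext v
    have := h1 v (Finset.mem_univ _)
    rw [hδ] at this
    linarith
  obtain ⟨v0, hv0⟩ := hex
  obtain ⟨v, hv, hmin⟩ := Finset.exists_min_image (Finset.univ.filter (fun v => δ v < 0))
    (fun v => w v / (- δ v)) ⟨v0, by simp [hv0]⟩
  have hvn : δ v < 0 := by simpa using hv
  set t := w v / (- δ v) with ht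
  have ht0 : 0 ≤ t := div_nonneg (hw.1 v) (by linarith)
  have hz : w v + t * δ v = 0 := by
    have : δ v ≠ 0 := hvn.ne
    rw [ht]; field_simp; ring
  have hmem : w + t • δ ∈ smp σ := by
    refine ⟨?_, ?_, ?_⟩
    · intro u
      simp only [Pi.add_apply, Pi.smul_apply, smul_eq_mul]
      by_cases hu : δ u < 0
      · have h1 : t ≤ w u / (- δ u) := hmin u (by simp [hu])
        rw [le_div_iff₀ (by linarith)] at h1
        linarith
      · have := hw.1 u
        push Not at hu
        positivity
    · simp only [Pi.add_apply, Pi.smul_apply, smul_eq_mul]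
      rw [Finset.sum_add_distrib, ← Finset.mul_sum, hδs, hw.2.1]; ring
    · intro u hu
      by_contra hn
      have h1 : w u = 0 := by by_contra h; exact hn (hw.2.2 u h)
      have h2 : δ u = 0 := by by_contra h; exact hn (hδσ u h)
      simp [h1, h2] at hu
  refine hpos _ hmem ?_ v (hδσ v hvn.ne) hz
  rw [map_add, map_smul, hw0, hδF, smul_zero, add_zero]

lemma real_compact (K : Set (Finset V)) : IsCompact (realization K) := by
  have h1 : IsClosed (⋃ σ ∈ K, {w : V → ℝ | ∀ v, v ∉ σ → w v = 0}) := by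
    refine Set.Finite.isClosed_biUnion (Set.toFinite K) (fun σ _ => ?_)
    simp only [Set.ofPred_forall]
    exact isClosed_iInter fun v => isClosed_iInter fun _ => isClosed_eq (by fun_prop) (by fun_prop)
  have h2 := (isCompact_stdSimplex ℝ V).inter_right h1
  have : realization K = stdSimplex ℝ V ∩ ⋃ σ ∈ K, {w : V → ℝ | ∀ v, v ∉ σ → w v = 0} := by
    apply Set.ext
    intro w
    rw [Set.mem_inter_iff, Set.mem_iUnion₂]
    constructor
    · rintro ⟨a, b, σ, hσ, c⟩
      exact ⟨⟨a, b⟩, σ, hσ, fun v hv => by by_contra h; exact hv (c v h)⟩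
    · rintro ⟨⟨a, b⟩, σ, hσ, c⟩
      exact ⟨a, b, σ, hσ, fun v hv => by by_contra h; exact hv (c v h)⟩
  rw [this]
  exact h2

lemma dim_bound (d : ℕ) (K : Set (Finset V)) (hdown : ∀ σ ∈ K, ∀ τ ⊆ σ, τ ∈ K)
    (φ : (V → ℝ) → EuclideanSpace ℝ (Fin (d + 1)))
    (hφc : ContinuousOn φ (realization K))
    (hφinj : Set.InjOn φ (realization K))
    (hφsurj : φ '' realization K = Metric.sphere (0 : EuclideanSpace ℝ (Fin (d + 1))) 1)
    (σ : Finset V) (hσ : σ ∈ K) : σ.card ≤ d + 1 := by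
  by_contra! hcard
  obtain ⟨τ, hτσ, hτ⟩ := Finset.exists_subset_card_eq (Nat.succ_le_of_lt hcard)
  have hτK := hdown σ hσ τ hτσ
  let e : Fin (d + 2) → V := fun i => ((Finset.equivFinOfCardEq hτ).symm i : V)
  have heτ : ∀ i, e i ∈ τ := fun i => ((Finset.equivFinOfCardEq hτ).symm i).2
  have heinj : Function.Injective e := fun i j h =>
    (Finset.equivFinOfCardEq hτ).symm.injective (Subtype.ext h)
  let a : (Fin (d + 1) → ℝ) → Fin (d + 1) → ℝ := fun x i =>
    (1 + max (-1) (min 1 (x i))) / (2 * (d + 1))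
  have ha0 : ∀ x i, 0 ≤ a x i := by
    intro x i
    have : -1 ≤ max (-1) (min 1 (x i)) := le_max_left _ _
    exact div_nonneg (by linarith) (by positivity)
  have ha1 : ∀ x i, a x i ≤ 1 / (d + 1) := by
    intro x i
    have : max (-1) (min 1 (x i)) ≤ 1 := max_le (by norm_num) (min_le_left _ _)
    simp only [a]
    rw [div_le_div_iff₀ (by positivity) (by positivity)]
    nlinarith
  have hasum : ∀ x, ∑ i, a x i ≤ 1 := by
    intro x
    calc ∑ i, a x i ≤ ∑ i : Fin (d + 1), (1 / (d + 1) : ℝ) := Finset.sum_le_sum (fun i _ => ha1 x i)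
      _ = 1 := by simp; field_simp
  let b : (Fin (d + 1) → ℝ) → Fin (d + 2) → ℝ := fun x => Fin.cons (1 - ∑ i, a x i) (a x)
  have hb0 : ∀ x i, 0 ≤ b x i := by
    intro x i
    refine Fin.cases ?_ (fun i => ?_) i
    · show 0 ≤ 1 - ∑ i, a x i
      linarith [hasum x]
    · exact ha0 x i
  have hb1 : ∀ x, ∑ i, b x i = 1 := by
    intro x
    rw [Fin.sum_univ_succ]
    show (1 - ∑ i, a x i) + ∑ i, a x i = 1
    ring
  have hac : ∀ i, Continuous fun x => a x i := by
    intro i; simp only [a]; fun_prop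
  have hbc : ∀ i, Continuous fun x => b x i := by
    intro i
    refine Fin.cases ?_ (fun i => ?_) i
    · show Continuous fun x => 1 - ∑ i, a x i
      fun_prop
    · exact hac i
  let w : (Fin (d + 1) → ℝ) → V → ℝ := fun x v => ∑ i, if e i = v then b x i else 0
  have hwe : ∀ x j, w x (e j) = b x j := by
    intro x j
    simp only [w]
    rw [Finset.sum_eq_single j]
    · simp
    · intro i _ hij
      rw [if_neg (fun h => hij (heinj h))]
    · simp
  have hwX : ∀ x, w x ∈ realization K := by
    intro x
    refine ⟨?_, ?_, τ, hτK, ?_⟩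
    · intro v
      refine Finset.sum_nonneg (fun i _ => ?_)
      split_ifs
      · exact hb0 x i
      · exact le_rfl
    · simp only [w]
      rw [Finset.sum_comm]
      simp [hb1]
    · intro v hv
      by_contra hn
      apply hv
      refine Finset.sum_eq_zero (fun i _ => ?_)
      rw [if_neg]
      rintro rfl
      exact hn (heτ i)
  have hwc : Continuous w := by
    refine continuous_pi (fun v => ?_)
    refine continuous_finsetSum _ (fun i _ => ?_)
    split_ifs
    · exact hbc i
    · exact continuous_const
  obtain ⟨x, y, hx, hy, hxy, h⟩ := no_embed_sphere d (fun x => φ (w x))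
    (hφc.comp_continuous hwc hwX) (by
      intro x
      rw [← mem_sphere_zero_iff_norm, ← hφsurj]
      exact ⟨_, hwX x, rfl⟩)
  have hw := hφinj (hwX x) (hwX y) h
  apply hxy
  funext i
  have h1 : a x i = a y i := by
    have := congrFun hw (e i.succ)
    rw [hwe, hwe] at this
    exact this
  have hcl : ∀ z : Fin (d + 1) → ℝ, ‖z‖ ≤ 1 → max (-1) (min 1 (z i)) = z i := by
    intro z hz
    have := abs_le.1 ((norm_le_pi_norm z i).trans hz)
    rw [min_eq_right this.2, max_eq_right this.1]
  simp only [a] at h1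
  rw [hcl x hx, hcl y hy] at h1
  have : (0 : ℝ) < 2 * (d + 1) := by positivity
  rw [div_left_inj' this.ne'] at h1
  linarith

end complex

/-- Generic odd labeling theorem: let `Σ` be an antipodally symmetric triangulation of `S^d`
(encoded by a free simplicial involution `ι` and an equivariant homeomorphism `φ` of the
realization onto the sphere), and let `f : V → ℝ^d` be an odd (`f(ιv) = -f(v)`) generic
labeling (no face of dimension `≤ d-1` captures `0`). Then the number of facets (maximal
faces) capturing `0` is `2k` with `k` odd. -/
theorem stmt19 {V : Type} [Fintype V] [DecidableEq V] (d : ℕ)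
    (K : Set (Finset V)) (hdown : ∀ σ ∈ K, ∀ τ ⊆ σ, τ ∈ K)
    (ι : V → V) (hinv : ∀ v, ι (ι v) = v) (hfree : ∀ v, ι v ≠ v)
    (hsimp : ∀ σ ∈ K, σ.image ι ∈ K)
    (φ : (V → ℝ) → EuclideanSpace ℝ (Fin (d + 1)))
    (hφc : ContinuousOn φ (realization K))
    (hφinj : Set.InjOn φ (realization K))
    (hφsurj : φ '' realization K = Metric.sphere (0 : EuclideanSpace ℝ (Fin (d + 1))) 1)
    (hφequiv : ∀ w ∈ realization K, φ (w ∘ ι) = - φ w)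
    (f : V → EuclideanSpace ℝ (Fin d))
    (hodd : ∀ v, f (ι v) = - f v)
    (hgen : ∀ σ ∈ K, σ.card ≤ d → 0 ∉ convexHull ℝ (f '' ↑σ)) :
    ∃ k : ℕ, Odd k ∧
      {σ : Finset V | σ ∈ K ∧ (∀ τ ∈ K, σ ⊆ τ → σ = τ) ∧
        0 ∈ convexHull ℝ (f '' ↑σ)}.ncard = 2 * k := by
  classical
  have hdim : ∀ σ ∈ K, σ.card ≤ d + 1 := fun σ hσ =>
    dim_bound d K hdown φ hφc hφinj hφsurj σ hσ
  have hsmp : ∀ w, w ∈ realization K → spt w ∈ K ∧ w ∈ smp (spt w) := by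
    rintro w ⟨h1, h2, σ, hσ, h3⟩
    exact ⟨hdown σ hσ _ (fun v hv => h3 v ((mem_spt w v).1 hv)), h1, h2,
      fun v hv => (mem_spt w v).2 hv⟩
  have hsmpX : ∀ σ ∈ K, ∀ w ∈ smp σ, w ∈ realization K ∧ spt w ⊆ σ := by
    rintro σ hσ w ⟨h1, h2, h3⟩
    exact ⟨⟨h1, h2, σ, hσ, h3⟩, fun v hv => h3 v ((mem_spt w v).1 hv)⟩
  have hcard : ∀ w ∈ realization K, extF f w = 0 → (spt w).card = d + 1 := by
    intro w hw h0
    obtain ⟨h1, h2⟩ := hsmp w hw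
    refine le_antisymm (hdim _ h1) ?_
    by_contra hlt
    exact hgen _ h1 (by omega) ((captures_iff f _).2 ⟨w, h2, h0⟩)
  have hinjσ : ∀ w ∈ realization K, extF f w = 0 → Set.InjOn (extF f) (smp (spt w)) := by
    intro w hw h0
    obtain ⟨h1, h2⟩ := hsmp w hw
    refine smp_inj f (spt w) ?_ w h2 h0
    intro w' hw' h0' v hv
    obtain ⟨h3, h4⟩ := hsmpX _ h1 w' hw'
    have h5 : spt w' = spt w :=
      Finset.eq_of_subset_of_card_le h4 (by rw [hcard w hw h0, hcard w' h3 h0'])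
    rw [← h5] at hv
    exact (mem_spt w' v).1 hv
  -- zeros and capturing facets
  set W := {w | w ∈ realization K ∧ extF f w = 0} with hW
  have hbij : Set.BijOn spt W {σ : Finset V | σ ∈ K ∧ (∀ τ ∈ K, σ ⊆ τ → σ = τ) ∧
        0 ∈ convexHull ℝ (f '' ↑σ)} := by
    refine ⟨?_, ?_, ?_⟩
    · rintro w ⟨hw, h0⟩
      obtain ⟨h1, h2⟩ := hsmp w hw
      refine ⟨h1, fun τ hτ hst => ?_, (captures_iff f _).2 ⟨w, h2, h0⟩⟩
      exact Finset.eq_of_subset_of_card_le hst (by rw [hcard w hw h0]; exact hdim τ hτ)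
    · rintro w ⟨hw, h0⟩ w' ⟨hw', h0'⟩ he
      have h2 := (hsmp w' hw').2
      rw [← he] at h2
      exact hinjσ w hw h0 (hsmp w hw).2 h2 (by rw [h0, h0'])
    · rintro σ ⟨hσ, _, hc⟩
      obtain ⟨w, hw, h0⟩ := (captures_iff f _).1 hc
      obtain ⟨h1, h2⟩ := hsmpX σ hσ w hw
      exact ⟨w, ⟨h1, h0⟩, Finset.eq_of_subset_of_card_le h2 (by
        rw [hcard w h1 h0]; exact hdim σ hσ)⟩
  have hWfin : W.Finite := hbij.finite_iff_finite.2 (Set.toFinite _)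
  rw [← hbij.image_eq, hbij.injOn.ncard_image]
  -- the inverse homeomorphism
  let S := Metric.sphere (0 : EuclideanSpace ℝ (Fin (d + 1))) 1
  have hex : ∀ p : EuclideanSpace ℝ (Fin (d + 1)), ∃ w, p ∈ S → w ∈ realization K ∧ φ w = p := by
    intro p
    by_cases hp : p ∈ S
    · have hp' := hp
      simp only [S] at hp'
      rw [← hφsurj] at hp'
      obtain ⟨w, hw, h⟩ := hp'
      exact ⟨w, fun _ => ⟨hw, h⟩⟩
    · exact ⟨0, fun h => absurd h hp⟩
  choose ψ hψ using hex
  have hφS : ∀ w ∈ realization K, φ w ∈ S := by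
    intro w hw
    simp only [S]
    rw [← hφsurj]
    exact ⟨w, hw, rfl⟩
  have hψφ : ∀ w ∈ realization K, ψ (φ w) = w := by
    intro w hw
    obtain ⟨h1, h2⟩ := hψ _ (hφS w hw)
    exact hφinj h1 hw h2
  have hψc : ContinuousOn ψ S := by
    rw [continuousOn_iff_isClosed]
    intro t ht
    refine ⟨φ '' (realization K ∩ t), ?_, ?_⟩
    · exact (((real_compact K).inter_right ht).image_of_continuousOn
        (hφc.mono Set.inter_subset_left)).isClosed
    · apply Set.ext
      intro p
      constructor
      · rintro ⟨h1, h2⟩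
        obtain ⟨h3, h4⟩ := hψ p h2
        exact ⟨⟨ψ p, ⟨h3, h1⟩, h4⟩, h2⟩
      · rintro ⟨⟨w, ⟨h1, h2⟩, rfl⟩, h3⟩
        refine ⟨?_, h3⟩
        show ψ (φ w) ∈ t
        rw [hψφ w h1]; exact h2
  have hneg : ∀ p ∈ S, -p ∈ S := by
    intro p hp
    simp only [S, mem_sphere_zero_iff_norm, norm_neg] at hp ⊢
    exact hp
  have hιX : ∀ w ∈ realization K, w ∘ ι ∈ realization K := by
    rintro w ⟨h1, h2, σ, hσ, h3⟩
    refine ⟨fun v => h1 _, ?_, σ.image ι, hsimp σ hσ, ?_⟩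
    · rw [← h2]
      exact Equiv.sum_comp (Function.Involutive.toPerm ι hinv) w
    · intro v hv
      exact Finset.mem_image.2 ⟨ι v, h3 _ hv, hinv v⟩
  have hFι : ∀ w, extF f (w ∘ ι) = - extF f w := by
    intro w
    rw [extF_apply, extF_apply, ← Finset.sum_neg_distrib,
      ← Equiv.sum_comp (Function.Involutive.toPerm ι hinv)]
    refine Finset.sum_congr rfl (fun v _ => ?_)
    show w (ι (ι v)) • f (ι v) = - (w v • f v)
    rw [hinv, hodd, smul_neg]
  have hψneg : ∀ p ∈ S, ψ (-p) = ψ p ∘ ι := by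
    intro p hp
    obtain ⟨h1, h2⟩ := hψ p hp
    have h3 := hφequiv _ h1
    rw [h2] at h3
    rw [← h3, hψφ _ (hιX _ h1)]
  have hofLp : ∀ q : EuclideanSpace ℝ (Fin d), WithLp.ofLp q = 0 ↔ q = 0 := by
    intro q
    exact WithLp.ofLp_eq_zero 2
  have hFc : Continuous (extF f) := (extF f).continuous_of_finiteDimensional
  let G : EuclideanSpace ℝ (Fin (d + 1)) → (Fin d → ℝ) := fun p => WithLp.ofLp (extF f (ψ p))
  have hG0 : ∀ p, G p = 0 ↔ extF f (ψ p) = 0 := fun p => hofLp _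
  have hbij2 : Set.BijOn ψ {p | p ∈ S ∧ G p = 0} W := by
    refine ⟨?_, ?_, ?_⟩
    · rintro p ⟨hp, h0⟩
      exact ⟨(hψ p hp).1, (hG0 p).1 h0⟩
    · rintro p ⟨hp, _⟩ q ⟨hq, _⟩ h
      rw [← (hψ p hp).2, ← (hψ q hq).2, h]
    · rintro w ⟨hw, h0⟩
      refine ⟨φ w, ⟨hφS w hw, ?_⟩, hψφ w hw⟩
      rw [hG0, hψφ w hw]; exact h0
  rw [← hbij2.image_eq, hbij2.injOn.ncard_image]
  refine sphere_count d G ?_ ?_ ?_ ?_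
  · exact ((PiLp.continuous_ofLp 2 _).comp hFc).comp_continuousOn hψc
  · intro p hp
    simp only [G]
    rw [hψneg p hp, hFι]; rfl
  · exact hbij2.finite_iff_finite.2 hWfin
  · intro p hp h0
    obtain ⟨h1, h2⟩ := hψ p hp
    rw [hG0] at h0
    let U : Set (V → ℝ) := {w | ∀ v ∈ spt (ψ p), 0 < w v}
    have hUo : IsOpen U := by
      have : U = ⋂ v ∈ spt (ψ p), {w : V → ℝ | 0 < w v} := by
        apply Set.ext
        intro w
        rw [Set.mem_iInter₂]
        exact Iff.rfl
      rw [this]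
      exact isOpen_biInter_finset (fun v _ => isOpen_lt (by fun_prop) (by fun_prop))
    have hUp : ψ p ∈ U := fun v hv => lt_of_le_of_ne (h1.1 v) (Ne.symm ((mem_spt _ v).1 hv))
    have hUin : ∀ w ∈ realization K, w ∈ U → w ∈ smp (spt (ψ p)) := by
      intro w hw hwU
      have h5 : spt (ψ p) = spt w := by
        apply Finset.eq_of_subset_of_card_le
        · intro v hv
          exact (mem_spt w v).2 (hwU v hv).ne'
        · rw [hcard _ h1 h0]; exact hdim _ (hsmp w hw).1
      rw [h5]; exact (hsmp w hw).2
    refine ⟨S ∩ ψ ⁻¹' U, ?_, ?_⟩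
    · exact Filter.inter_mem self_mem_nhdsWithin ((hψc p hp) (hUo.mem_nhds hUp))
    · rintro a ⟨ha, ha'⟩ b ⟨hb, hb'⟩ hab
      obtain ⟨a1, a2⟩ := hψ a ha
      obtain ⟨b1, b2⟩ := hψ b hb
      have : ψ a = ψ b := hinjσ _ h1 h0 (hUin _ a1 ha') (hUin _ b1 hb')
        (WithLp.ofLp_injective 2 hab)
      rw [← a2, ← b2, this]
end
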